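/- arXiv:1207.2500 — 2 statements merged into one kernel-verified Lean document; each statement's English description precedes it below -/
import Mathlib

section
/- Let n ≥ 1 and 1 < q ≤ 1 + 2/n. Suppose the coefficients a_{ij} are globally bounded on S (i.e. there is M > 0 with |a_{ij}(t,x)| ≤ M for almost all (t,x) ∈ S and all i,j). If (u,v) is an entire weak solution of the inequality u_t − Lu − |u|^{q−1}u ≥ v_t − Lv − |v|^{q−1}v in S such that u ≥ v everywhere in S, then u = v in S. -/
open MeasureTheory Real

noncomputable section

/-- Euclidean space ℝⁿ. -/
abbrev Xn (n : ℕ) : Type := EuclideanSpace ℝ (Fin n)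

/-- Points of the half-space `S = (0,∞) × ℝⁿ`. -/
abbrev Pt (n : ℕ) : Type := ℝ × Xn n

/-- The half-space `S = (0,∞) × ℝⁿ`. -/
def halfSpace (n : ℕ) : Set (Pt n) := {p | 0 < p.1}

/-- Partial derivative in the time variable. -/
noncomputable def pdT {n : ℕ} (w : Pt n → ℝ) (p : Pt n) : ℝ :=
  fderiv ℝ w p (1, 0)

/-- Partial derivative in the space variable `x_j`. -/
noncomputable def pdX {n : ℕ} (w : Pt n → ℝ) (j : Fin n) (p : Pt n) : ℝ :=
  fderiv ℝ w p (0, EuclideanSpace.single j 1)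

/-- The odd power function `x ↦ |x|^{q-1} x`. -/
noncomputable def oddPow (q x : ℝ) : ℝ := |x| ^ (q - 1) * x

/-- Condition (8): `𝒜(R) ≤ c R^{2-α}` for all `R > 1`, expressed as an a.e. bound
on the majorant `A` over the region `{(t,x) : t > 0, R/2 < |x| < R}`. -/
def Cond8 {n : ℕ} (A : Pt n → ℝ) (α c : ℝ) : Prop :=
  ∀ R : ℝ, 1 < R →
    ∀ᵐ p ∂(volume.restrict
        {p : Pt n | 0 < p.1 ∧ R / 2 < ‖p.2‖ ∧ ‖p.2‖ < R}),
      A p ≤ c * R ^ (2 - α)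

/-- `u` is an entire weak solution of `u_t ≥ Lu + |u|^{q−1}u` in `S`. -/
def WeakSuperSol {n : ℕ} (a : Fin n → Fin n → Pt n → ℝ) (q : ℝ)
    (u : Pt n → ℝ) : Prop :=
  ∀ φ : Pt n → ℝ, ContDiff ℝ (⊤ : ℕ∞) φ → HasCompactSupport φ →
    tsupport φ ⊆ halfSpace n → (∀ p, 0 ≤ φ p) →
    0 ≤ ∫ p in halfSpace n,
        (pdT u p * φ p + ∑ i, ∑ j, a i j p * pdX φ i p * pdX u j p
          - oddPow q (u p) * φ p)

/-- `v` is an entire weak solution of `v_t ≤ Lv + |v|^{q−1}v` in `S`. -/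
def WeakSubSol {n : ℕ} (a : Fin n → Fin n → Pt n → ℝ) (q : ℝ)
    (v : Pt n → ℝ) : Prop :=
  ∀ φ : Pt n → ℝ, ContDiff ℝ (⊤ : ℕ∞) φ → HasCompactSupport φ →
    tsupport φ ⊆ halfSpace n → (∀ p, 0 ≤ φ p) →
    ∫ p in halfSpace n,
        (pdT v p * φ p + ∑ i, ∑ j, a i j p * pdX φ i p * pdX v j p
          - oddPow q (v p) * φ p) ≤ 0

/-- `(u,v)` is an entire weak solution of
`u_t − Lu − |u|^{q−1}u ≥ v_t − Lv − |v|^{q−1}v` in `S`. -/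
def WeakSolPair {n : ℕ} (a : Fin n → Fin n → Pt n → ℝ) (q : ℝ)
    (u v : Pt n → ℝ) : Prop :=
  ∀ φ : Pt n → ℝ, ContDiff ℝ (⊤ : ℕ∞) φ → HasCompactSupport φ →
    tsupport φ ⊆ halfSpace n → (∀ p, 0 ≤ φ p) →
    ∫ p in halfSpace n,
        (pdT u p * φ p + ∑ i, ∑ j, a i j p * pdX φ i p * pdX u j p
          - oddPow q (u p) * φ p) ≥
    ∫ p in halfSpace n,
        (pdT v p * φ p + ∑ i, ∑ j, a i j p * pdX φ i p * pdX v j p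
          - oddPow q (v p) * φ p)

open Filter Topology Set
open scoped Convolution ContDiff Matrix

/-!
Put `w = u - v`. Convexity gives `|u|^{q-1}u - |v|^{q-1}v ≥ c w^q` with `c = 2^{1-q}`, so `w` is a
nonnegative weak solution of `w_t - Lw ≥ c w^q`. Test this inequality with `F(w) ζ^{l+2}`, where `ζ`
is a cutoff equal to `1` on a core `Φ` and `F(s) = 1 + (1 + s/m)^{-ν}`. The negative derivative of
`F` makes `F'(w) ζ^{l+2} a∇w·∇w` absorb the mixed term `F(w) a∇w·∇ζ^{l+2}` through the
Cauchy–Schwarz inequality of the possibly degenerate form `a`; the primitive of `F`, which carries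
the time derivative of `ζ`, and the quadratic remainder both grow like `m (1 + w/m)^{1+ν}` and are
controlled by `m + m^{1-q} w^q` because `1 + ν ≤ q`. If `ζ_t ≥ -δ` and `|∇ζ|² ≲ δ`, this yields
`c ∫ w^q ζ^{l+2} ≤ C δ (m |supp ζ| + m^{1-q} ∫_{S \ Φ} w^q ζ^{l+2})` for every `m > 0`.

For parabolic cutoffs at scale `R` one has `δ ≈ R^{-2}` and `|supp ζ| ≲ R^{n+2}`. With
`m = s R^{-2/(q-1)}` the right-hand side is at most `K (s + s^{1-q} ∫_{S \ Φ} w^q ζ^{l+2})`, and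
`n (q - 1) ≤ 2` is exactly what makes `K` independent of `R`. A large `s` shows that `w^q` is
integrable over `S`; then the integral over `S \ Φ` tends to `0` as `R → ∞`, and letting `s → 0`
gives `∫ w^q = 0`.
-/

section Mollification

theorem exists_contDiffBump_rOut_tendsto_zero {E : Type*} [NormedAddCommGroup E] {δ : ℝ}
    (hδ : 0 < δ) : ∃ b : ℕ → ContDiffBump (0 : E),
      (∀ k, (b k).rOut ≤ δ) ∧ Tendsto (fun k => (b k).rOut) atTop (𝓝 0) := by
  refine ⟨fun k => ⟨δ / (k + 1) / 2, δ / (k + 1), by positivity, half_lt_self (by positivity)⟩,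
    fun k => div_le_self hδ.le (by simp), ?_⟩
  simpa [Function.comp_def] using
    (tendsto_const_div_atTop_nhds_zero_nat δ).comp (tendsto_add_atTop_nat 1)

variable {E : Type*} [NormedAddCommGroup E] [NormedSpace ℝ E] [FiniteDimensional ℝ E]

theorem tendstoUniformly_normed_convolution {F : Type*} [NormedAddCommGroup F] [NormedSpace ℝ F]
    [CompleteSpace F] [MeasurableSpace E] [BorelSpace E] {μ : Measure E} [μ.IsAddHaarMeasure]
    {b : ℕ → ContDiffBump (0 : E)} (hb : Tendsto (fun k => (b k).rOut) atTop (𝓝 0))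
    {f : E → F} (hf : Continuous f) (hfc : HasCompactSupport f) :
    TendstoUniformly
      (fun k => ((b k).normed μ ⋆[ContinuousLinearMap.lsmul ℝ ℝ, μ] f : E → F)) f atTop := by
  rw [Metric.tendstoUniformly_iff]
  intro ε hε
  obtain ⟨δ, hδ, hfδ⟩ :=
    Metric.uniformContinuous_iff.1 (hfc.uniformContinuous_of_continuous hf) (ε / 2) (half_pos hε)
  filter_upwards [hb.eventually (gt_mem_nhds hδ)] with k hk x
  rw [dist_comm]
  refine (ContDiffBump.dist_normed_convolution_le hf.aestronglyMeasurable
    fun y hy => ?_).trans_lt (half_lt_self hε)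
  exact (hfδ ((Metric.mem_ball.1 hy).trans hk)).le

theorem fderiv_convolution_lsmul_right [MeasurableSpace E] [BorelSpace E] {μ : Measure E}
    [μ.IsAddHaarMeasure] {g φ : E → ℝ}
    (hg : LocallyIntegrable g μ) (hφ : ContDiff ℝ 1 φ) (hc : HasCompactSupport φ) :
    fderiv ℝ (g ⋆[ContinuousLinearMap.lsmul ℝ ℝ, μ] φ : E → ℝ) =
      (g ⋆[ContinuousLinearMap.lsmul ℝ ℝ, μ] fderiv ℝ φ : E → E →L[ℝ] ℝ) := by
  have hL : (ContinuousLinearMap.lsmul ℝ ℝ : ℝ →L[ℝ] ℝ →L[ℝ] ℝ).precompR E =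
      (ContinuousLinearMap.lsmul ℝ ℝ : ℝ →L[ℝ] (E →L[ℝ] ℝ) →L[ℝ] (E →L[ℝ] ℝ)) := by
    ext; simp
  funext x
  rw [(hc.hasFDerivAt_convolution_right (ContinuousLinearMap.lsmul ℝ ℝ) hg hφ x).fderiv, hL]

theorem exists_smooth_nonneg_approx {U : Set E} (hU : IsOpen U) {φ : E → ℝ}
    (hφ : ContDiff ℝ 1 φ) (hc : HasCompactSupport φ) (hφU : tsupport φ ⊆ U) (hφ0 : ∀ x, 0 ≤ φ x) :
    ∃ K, IsCompact K ∧ K ⊆ U ∧ ∃ Φ : ℕ → E → ℝ,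
      (∀ k, ContDiff ℝ ∞ (Φ k)) ∧ (∀ k, tsupport (Φ k) ⊆ K) ∧ (∀ k x, 0 ≤ Φ k x) ∧
      TendstoUniformly Φ φ atTop ∧
      TendstoUniformly (fun k => fderiv ℝ (Φ k)) (fderiv ℝ φ) atTop := by
  borelize E
  let μ : Measure E := Measure.addHaar
  obtain ⟨δ, hδ, hδU⟩ := hc.isCompact.exists_cthickening_subset_open hU hφU
  obtain ⟨b, hbδ, hb0⟩ := exists_contDiffBump_rOut_tendsto_zero (E := E) hδ
  have hloc k : LocallyIntegrable ((b k).normed μ) μ := (b k).continuous_normed.locallyIntegrable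
  refine ⟨Metric.cthickening δ (tsupport φ), hc.isCompact.cthickening, hδU,
    fun k => (b k).normed μ ⋆[ContinuousLinearMap.lsmul ℝ ℝ, μ] φ, fun k => ?_, fun k => ?_,
    fun k x => ?_, tendstoUniformly_normed_convolution hb0 hφ.continuous hc, ?_⟩
  · exact (b k).hasCompactSupport_normed.contDiff_convolution_left _ (b k).contDiff_normed
      hφ.continuous.locallyIntegrable
  · refine closure_minimal ((support_convolution_subset _).trans ?_) Metric.isClosed_cthickening
    rw [(b k).support_normed_eq]
    rintro _ ⟨y, hy, z, hz, rfl⟩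
    refine Metric.mem_cthickening_of_dist_le _ z _ _ (subset_tsupport _ hz) ?_
    simpa using (mem_ball_zero_iff.1 hy).le.trans (hbδ k)
  · exact integral_nonneg fun t => mul_nonneg ((b k).nonneg_normed t) (hφ0 _)
  · simp only [fderiv_convolution_lsmul_right (hloc _) hφ hc]
    exact tendstoUniformly_normed_convolution hb0 (hφ.continuous_fderiv one_ne_zero) (hc.fderiv ℝ)

end Mollification

section LocallyIntegrable

variable {X : Type*} [TopologicalSpace X] [MeasurableSpace X] {μ : Measure X} {U : Set X}
  {f : X → ℝ}

theorem locallyIntegrableOn_mul_of_ae_abs_le {b : X → ℝ} {M : ℝ}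
    (hb : AEStronglyMeasurable b (μ.restrict U)) (hbM : ∀ᵐ x ∂μ.restrict U, |b x| ≤ M)
    (hf : LocallyIntegrableOn f U μ) : LocallyIntegrableOn (fun x => b x * f x) U μ := by
  intro x hx
  obtain ⟨t, ht, hft⟩ := hf x hx
  have hle : μ.restrict (t ∩ U) ≤ μ.restrict U := Measure.restrict_mono_set μ inter_subset_right
  exact ⟨t ∩ U, inter_mem ht self_mem_nhdsWithin, Integrable.bdd_mul
    (hft.mono_set inter_subset_left) (hb.mono_measure hle) (ae_mono hle hbM)⟩

theorem locallyIntegrableOn_finsetSum {ι : Type*} (s : Finset ι) {F : ι → X → ℝ}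
    (hF : ∀ i ∈ s, LocallyIntegrableOn (F i) U μ) :
    LocallyIntegrableOn (fun x => ∑ i ∈ s, F i x) U μ := by
  simp only [← Finset.sum_apply]
  exact Finset.sum_induction F (fun f => LocallyIntegrableOn f U μ)
    (fun _ _ hf hg => hf.add hg) locallyIntegrableOn_zero hF

variable [T2Space X] [BorelSpace X]

theorem integrable_mul_of_tsupport_subset {φ : X → ℝ} (hf : LocallyIntegrableOn f U μ)
    (hφ : Continuous φ) (hc : HasCompactSupport φ) (hφU : tsupport φ ⊆ U) :
    Integrable (fun x => f x * φ x) μ := by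
  have hfφ : IntegrableOn (fun x => f x * φ x) (tsupport φ) μ :=
    (hf.integrableOn_compact_subset hφU hc).mul_continuousOn hφ.continuousOn hc
  refine (integrableOn_iff_integrable_of_support_subset ?_).1 hfφ
  exact (Function.support_mul_subset_right f φ).trans (subset_tsupport φ)

theorem tendsto_setIntegral_mul_of_tendstoUniformly {K : Set X} (hf : LocallyIntegrableOn f U μ)
    (hK : IsCompact K) (hKU : K ⊆ U) {Φ : ℕ → X → ℝ} (hΦ : ∀ k, Continuous (Φ k))
    (hΦK : ∀ k, tsupport (Φ k) ⊆ K) {φ : X → ℝ} (hφ : Continuous φ)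
    (hlim : TendstoUniformly Φ φ atTop) :
    Tendsto (fun k => ∫ x in U, f x * Φ k x ∂μ) atTop (𝓝 (∫ x in U, f x * φ x ∂μ)) := by
  obtain ⟨C, hC⟩ := hK.exists_bound_of_continuousOn hφ.continuousOn
  refine tendsto_integral_filter_of_dominated_convergence (K.indicator fun x => ‖f x‖ * (C + 1))
    (Eventually.of_forall fun k => ?_) ?_ ?_ ?_
  · exact (integrable_mul_of_tsupport_subset hf (hΦ k)
      (hK.of_isClosed_subset (isClosed_tsupport _) (hΦK k))
      ((hΦK k).trans hKU)).restrict.aestronglyMeasurable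
  · filter_upwards [Metric.tendstoUniformly_iff.1 hlim 1 one_pos] with k hk
    refine Eventually.of_forall fun x => ?_
    by_cases hx : x ∈ K
    · have hΦC : ‖Φ k x‖ ≤ C + 1 := by
        have := norm_le_norm_add_norm_sub (φ x) (Φ k x)
        linarith [hC x hx, hk x, dist_eq_norm (φ x) (Φ k x)]
      rw [indicator_of_mem hx, norm_mul]
      gcongr
    · rw [image_eq_zero_of_notMem_tsupport (fun h => hx (hΦK k h))]
      simp [hx]
  · refine Integrable.restrict ((integrable_indicator_iff hK.measurableSet).2 ?_)
    exact (hf.integrableOn_compact_subset hKU hK).norm.mul_const _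
  · exact Eventually.of_forall fun x => (hlim.tendsto_at x).const_mul (f x)

end LocallyIntegrable

section Product

variable {E : Type*} [NormedAddCommGroup E] [NormedSpace ℝ E]

theorem contDiff_mul_of_tsupport_subset {r : WithTop ℕ∞} {U : Set E} (hU : IsOpen U) {f ψ : E → ℝ}
    (hf : ContDiffOn ℝ r f U) (hψ : ContDiff ℝ r ψ) (hψU : tsupport ψ ⊆ U) :
    ContDiff ℝ r (fun x => f x * ψ x) := by
  refine contDiff_iff_contDiffAt.2 fun x => ?_
  by_cases hx : x ∈ U
  · exact (hf.contDiffAt (hU.mem_nhds hx)).mul hψ.contDiffAt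
  · have hψ0 : ψ =ᶠ[𝓝 x] 0 := notMem_tsupport_iff_eventuallyEq.1 fun h => hx (hψU h)
    have hfψ0 : (fun y => f y * ψ y) =ᶠ[𝓝 x] fun _ => 0 := by
      filter_upwards [hψ0] with y hy using by simp [hy]
    exact contDiffAt_const.congr_of_eventuallyEq hfψ0

theorem fderiv_comp_mul_apply {F : ℝ → ℝ} {w ψ : E → ℝ} {x : E}
    (hF : DifferentiableAt ℝ F (w x)) (hw : DifferentiableAt ℝ w x)
    (hψ : DifferentiableAt ℝ ψ x) (v : E) :
    fderiv ℝ (fun y => F (w y) * ψ y) x v =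
      F (w x) * fderiv ℝ ψ x v + deriv F (w x) * ψ x * fderiv ℝ w x v := by
  have hFw : HasFDerivAt (fun y => F (w y)) (deriv F (w x) • fderiv ℝ w x) x :=
    hF.hasDerivAt.comp_hasFDerivAt x hw.hasFDerivAt
  rw [(hFw.fun_mul hψ.hasFDerivAt).fderiv]
  simp only [add_apply, smul_apply, smul_eq_mul]
  ring

theorem fderiv_pow_succ_apply {ζ : E → ℝ} (hζ : ContDiff ℝ 1 ζ) (k : ℕ) (x v : E) :
    fderiv ℝ (fun x => ζ x ^ (k + 1)) x v = (k + 1) * ζ x ^ k * fderiv ℝ ζ x v := by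
  rw [((hζ.differentiable one_ne_zero x).hasFDerivAt.pow (k + 1)).fderiv]
  simp

theorem integral_fderiv_apply_eq_zero [FiniteDimensional ℝ E] [MeasurableSpace E] [BorelSpace E]
    {μ : Measure E} [μ.IsAddHaarMeasure] {f : E → ℝ} (hf : ContDiff ℝ 1 f)
    (hc : HasCompactSupport f) (v : E) : ∫ x, fderiv ℝ f x v ∂μ = 0 := by
  have hint : Integrable (fun x => fderiv ℝ f x v) μ :=
    ((hf.continuous_fderiv one_ne_zero).clm_apply continuous_const).integrable_of_hasCompactSupport
      (hc.fderiv_apply ℝ v)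
  simpa using integral_mul_fderiv_eq_neg_fderiv_mul_of_integrable (μ := μ) (v := v)
    (f := fun _ => (1 : ℝ)) (g := f) (by simp) (by simpa using hint)
    (by simpa using hf.continuous.integrable_of_hasCompactSupport hc)
    (fun _ _ => differentiableAt_const _) fun x _ => hf.differentiable one_ne_zero x

end Product

section Powers

theorem add_rpow_le_two_rpow_mul {x y p : ℝ} (hx : 0 ≤ x) (hy : 0 ≤ y) (hp : 1 ≤ p) :
    (x + y) ^ p ≤ 2 ^ (p - 1) * (x ^ p + y ^ p) := by
  lift x to NNReal using hx
  lift y to NNReal using hy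
  exact_mod_cast NNReal.rpow_add_le_mul_rpow_add_rpow x y hp

theorem rpow_mul_pow_le_one_add {x e p q : ℝ} {k l : ℕ} (hx : 0 ≤ x) (he0 : 0 ≤ e) (he1 : e ≤ 1)
    (hp : 0 ≤ p) (hq : 0 < q) (hpq : p ≤ q) (hkl : k * p ≤ l * q) :
    x ^ p * e ^ l ≤ 1 + x ^ q * e ^ k := by
  set y := x * e ^ (k / q) with hy
  have hy0 : 0 ≤ y := by positivity
  have hxy : x ^ p * e ^ l ≤ y ^ p := by
    rw [hy, mul_rpow hx (by positivity), ← rpow_mul he0, ← rpow_natCast]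
    refine mul_le_mul_of_nonneg_left (rpow_le_rpow_of_exponent_ge' he0 he1 (by positivity) ?_)
      (by positivity)
    rwa [div_mul_eq_mul_div, div_le_iff₀ hq]
  have hyq : y ^ q = x ^ q * e ^ k := by
    rw [hy, mul_rpow hx (by positivity), ← rpow_mul he0, div_mul_cancel₀ _ hq.ne', rpow_natCast]
  rw [← hyq]
  rcases le_total y 1 with h | h
  · linarith [rpow_le_one hy0 h hp, rpow_nonneg hy0 q]
  · linarith [rpow_le_rpow_of_exponent_le h hpq]

theorem oddPow_of_nonneg {q x : ℝ} (hq : q ≠ 0) (hx : 0 ≤ x) : oddPow q x = x ^ q := by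
  rcases hx.eq_or_lt with rfl | hx
  · simp [oddPow, zero_rpow hq]
  · rw [oddPow, abs_of_pos hx, rpow_sub_one hx.ne', div_mul_cancel₀ _ hx.ne']

theorem oddPow_neg (q x : ℝ) : oddPow q (-x) = -oddPow q x := by
  simp [oddPow]

theorem continuous_oddPow {q : ℝ} (hq : 1 ≤ q) : Continuous (oddPow q) :=
  (continuous_abs.rpow_const fun _ => Or.inr (sub_nonneg.2 hq)).mul continuous_id

theorem le_oddPow_sub_oddPow {q x y : ℝ} (hq : 1 ≤ q) (hyx : y ≤ x) :
    2 ^ (1 - q) * (x - y) ^ q ≤ oddPow q x - oddPow q y := by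
  have hq0 : q ≠ 0 := by positivity
  have of_nonneg {s t : ℝ} (ht : 0 ≤ t) (hts : t ≤ s) :
      2 ^ (1 - q) * (s - t) ^ q ≤ oddPow q s - oddPow q t := by
    have hst : 0 ≤ s - t := sub_nonneg.2 hts
    have hsuper := add_rpow_le_rpow_add hst ht hq
    rw [sub_add_cancel] at hsuper
    rw [oddPow_of_nonneg hq0 ht, oddPow_of_nonneg hq0 (ht.trans hts)]
    calc 2 ^ (1 - q) * (s - t) ^ q ≤ 1 * (s - t) ^ q := by
          gcongr; exact rpow_le_one_of_one_le_of_nonpos one_le_two (by linarith)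
      _ ≤ s ^ q - t ^ q := by linarith
  rcases le_total 0 y with hy | hy
  · exact of_nonneg hy hyx
  rcases le_total x 0 with hx | hx
  · have := of_nonneg (neg_nonneg.2 hx) (neg_le_neg hyx)
    rw [oddPow_neg, oddPow_neg] at this
    convert! this using 1 <;> ring_nf
  · have hmean := add_rpow_le_two_rpow_mul hx (neg_nonneg.2 hy) hq
    have hodd : oddPow q y = -(-y) ^ q := by
      rw [← oddPow_of_nonneg hq0 (neg_nonneg.2 hy), oddPow_neg, neg_neg]
    rw [oddPow_of_nonneg hq0 hx, hodd, sub_neg_eq_add, sub_eq_add_neg x]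
    calc 2 ^ (1 - q) * (x + -y) ^ q ≤ 2 ^ (1 - q) * (2 ^ (q - 1) * (x ^ q + (-y) ^ q)) := by gcongr
      _ = x ^ q + (-y) ^ q := by rw [← mul_assoc, ← rpow_add two_pos]; simp

end Powers

section Damping

/-- The factor `F(s) = 1 + (1 + s/m)^{-ν}` by which a nonnegative supersolution `w` enters the test
functions `F(w) ψ`. It stays between `1` and `2`, and its decrease produces the coercive term
absorbing the gradient of the cutoff `ψ`. -/
def damping (ν m s : ℝ) : ℝ := 1 + (1 + s / m) ^ (-ν)

/-- A primitive of `damping ν m`, normalised to be nonnegative on `[0, ∞)`. -/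
def dampingPrimitive (ν m s : ℝ) : ℝ := m * (1 + s / m + (1 + s / m) ^ (1 - ν) / (1 - ν))

/-- A common upper bound on `[0, ∞)` for the primitive `G` of `F = damping ν m` and for the quotient
`F² / (4|F'|)` left over from completing the square. -/
def dampingWeight (ν m s : ℝ) : ℝ := 2 * m / ν * (1 + s / m) ^ (1 + ν)

variable {ν m s : ℝ}

theorem one_add_div_pos (hm : 0 < m) (hs : s ∈ Ioi (-m)) : 0 < 1 + s / m := by
  rw [← div_self hm.ne', ← add_div]
  exact div_pos (by linarith [mem_Ioi.1 hs]) hm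

theorem contDiffOn_damping {r : WithTop ℕ∞} (hm : 0 < m) :
    ContDiffOn ℝ r (damping ν m) (Ioi (-m)) :=
  contDiffOn_const.add <| ContDiffOn.rpow_const_of_ne (by fun_prop)
    fun _ hs => (one_add_div_pos hm hs).ne'

theorem contDiffOn_dampingPrimitive {r : WithTop ℕ∞} (hm : 0 < m) :
    ContDiffOn ℝ r (dampingPrimitive ν m) (Ioi (-m)) := by
  have hbase : ContDiffOn ℝ r (fun s => 1 + s / m) (Ioi (-m)) := by fun_prop
  exact contDiffOn_const.mul <| hbase.add <|
    (hbase.rpow_const_of_ne fun _ hs => (one_add_div_pos hm hs).ne').div_const _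

theorem hasDerivAt_one_add_div_rpow (hm : 0 < m) (hs : s ∈ Ioi (-m)) (p : ℝ) :
    HasDerivAt (fun s => (1 + s / m) ^ p) (p / m * (1 + s / m) ^ (p - 1)) s := by
  have := (((hasDerivAt_id s).div_const m).const_add 1).rpow_const (p := p)
    (Or.inl (one_add_div_pos hm hs).ne')
  convert! this using 1
  simp only [id]
  ring

theorem deriv_damping (hm : 0 < m) (hs : s ∈ Ioi (-m)) :
    deriv (damping ν m) s = -(ν / m * (1 + s / m) ^ (-ν - 1)) := by
  have := ((hasDerivAt_one_add_div_rpow hm hs (-ν)).const_add 1).deriv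
  rw [neg_div, neg_mul] at this
  exact this

theorem deriv_dampingPrimitive (hν : ν ≠ 1) (hm : 0 < m) (hs : s ∈ Ioi (-m)) :
    deriv (dampingPrimitive ν m) s = damping ν m s := by
  have hν' : 1 - ν ≠ 0 := sub_ne_zero.2 hν.symm
  have hlin := ((hasDerivAt_id s).div_const m).const_add 1
  have := ((hlin.add ((hasDerivAt_one_add_div_rpow hm hs (1 - ν)).div_const (1 - ν))).const_mul
    m).deriv
  refine this.trans ?_
  rw [damping, sub_sub_cancel_left]
  field_simp

theorem deriv_damping_neg (hν : 0 < ν) (hm : 0 < m) (hs : s ∈ Ioi (-m)) :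
    deriv (damping ν m) s < 0 := by
  have := one_add_div_pos hm hs
  rw [deriv_damping hm hs, neg_lt_zero]
  positivity

theorem one_le_damping (hm : 0 < m) (hs : s ∈ Ioi (-m)) : 1 ≤ damping ν m s :=
  le_add_of_nonneg_right (rpow_nonneg (one_add_div_pos hm hs).le _)

theorem damping_le_two (hν : 0 ≤ ν) (hm : 0 ≤ m) (hs : 0 ≤ s) : damping ν m s ≤ 2 := by
  have : (1 + s / m) ^ (-ν) ≤ 1 :=
    rpow_le_one_of_one_le_of_nonpos (le_add_of_nonneg_right (by positivity)) (neg_nonpos.2 hν)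
  rw [damping]
  linarith

theorem dampingPrimitive_nonneg (hν : ν ≤ 1) (hm : 0 ≤ m) (hs : 0 ≤ s) :
    0 ≤ dampingPrimitive ν m s := by
  have := sub_nonneg.2 hν
  rw [dampingPrimitive]
  positivity

theorem dampingPrimitive_le_dampingWeight (hν0 : 0 < ν) (hν : ν ≤ 1 / 2) (hm : 0 ≤ m) (hs : 0 ≤ s) :
    dampingPrimitive ν m s ≤ dampingWeight ν m s := by
  set z := 1 + s / m
  have hz1 : 1 ≤ z := le_add_of_nonneg_right (by positivity)
  have hdiv : z ^ (1 - ν) / (1 - ν) ≤ z ^ (1 + ν) / (1 / 2) := by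
    gcongr <;> linarith
  have hz_le : z ≤ z ^ (1 + ν) := self_le_rpow_of_one_le hz1 (by linarith)
  calc dampingPrimitive ν m s ≤ m * (z ^ (1 + ν) + z ^ (1 + ν) / (1 / 2)) := by
        rw [dampingPrimitive]; gcongr
    _ ≤ 2 * m * 2 * z ^ (1 + ν) := by
        have : 0 ≤ m * z ^ (1 + ν) := by positivity
        linarith
    _ ≤ 2 * m * ν⁻¹ * z ^ (1 + ν) := by
        gcongr
        rw [le_inv_comm₀ two_pos hν0]
        linarith
    _ = dampingWeight ν m s := by rw [dampingWeight, div_eq_mul_inv]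

theorem deriv_damping_mul_dampingWeight (hν : ν ≠ 0) (hm : 0 < m) (hs : s ∈ Ioi (-m)) :
    deriv (damping ν m) s * dampingWeight ν m s = -2 := by
  have hz := one_add_div_pos hm hs
  have hcancel : (1 + s / m) ^ (-ν - 1) * (1 + s / m) ^ (1 + ν) = 1 := by
    rw [← rpow_add hz, show -ν - 1 + (1 + ν) = 0 by ring, rpow_zero]
  rw [deriv_damping hm hs, dampingWeight]
  calc -(ν / m * (1 + s / m) ^ (-ν - 1)) * (2 * m / ν * (1 + s / m) ^ (1 + ν))
      = -2 * ((1 + s / m) ^ (-ν - 1) * (1 + s / m) ^ (1 + ν)) := by field_simp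
    _ = -2 := by rw [hcancel, mul_one]

theorem dampingWeight_mul_pow_le {e q : ℝ} {k l : ℕ} (hν0 : 0 < ν) (hν : ν ≤ 1) (hm : 0 < m)
    (hs : 0 ≤ s) (he0 : 0 ≤ e) (he1 : e ≤ 1) (hq : 1 + ν ≤ q) (hkl : k * (1 + ν) ≤ l * q) :
    dampingWeight ν m s * e ^ l ≤ 8 / ν * (m + m ^ (1 - q) * (s ^ q * e ^ k)) := by
  set x := s / m
  have hx : 0 ≤ x := by positivity
  have hscale : m * x ^ q = m ^ (1 - q) * s ^ q := by
    rw [div_rpow hs hm.le, rpow_sub hm, rpow_one]; ring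
  have hbase : (1 + x) ^ (1 + ν) ≤ 2 * (1 + x ^ (1 + ν)) := by
    calc (1 + x) ^ (1 + ν) ≤ 2 ^ (1 + ν - 1) * (1 ^ (1 + ν) + x ^ (1 + ν)) :=
          add_rpow_le_two_rpow_mul zero_le_one hx (by linarith)
      _ ≤ 2 ^ (1 : ℝ) * (1 + x ^ (1 + ν)) := by
          rw [one_rpow]; gcongr <;> linarith
      _ = 2 * (1 + x ^ (1 + ν)) := by rw [rpow_one]
  have hpow : (1 + x ^ (1 + ν)) * e ^ l ≤ 2 * (1 + x ^ q * e ^ k) := by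
    have := rpow_mul_pow_le_one_add hx he0 he1 (by linarith) (by linarith) hq hkl
    have : 0 ≤ x ^ q * e ^ k := by positivity
    linarith [pow_le_one₀ he0 he1 (n := l)]
  calc dampingWeight ν m s * e ^ l ≤ 2 * m / ν * (2 * (1 + x ^ (1 + ν))) * e ^ l := by
        rw [dampingWeight]; gcongr
    _ = 4 * m / ν * ((1 + x ^ (1 + ν)) * e ^ l) := by ring
    _ ≤ 4 * m / ν * (2 * (1 + x ^ q * e ^ k)) := by gcongr
    _ = 8 / ν * (m + m * x ^ q * e ^ k) := by ring
    _ = 8 / ν * (m + m ^ (1 - q) * (s ^ q * e ^ k)) := by rw [hscale, mul_assoc]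

theorem exists_damping_exponents {q : ℝ} (hq : 1 < q) :
    ∃ ν : ℝ, 0 < ν ∧ ν ≤ 1 / 2 ∧ 1 + ν ≤ q ∧ ∃ l : ℕ, (l + 2 : ℕ) * (1 + ν) ≤ l * q := by
  obtain ⟨l, hl⟩ := exists_nat_ge (6 / (q - 1))
  rw [div_le_iff₀ (by linarith)] at hl
  have hν1 : min ((q - 1) / 2) (1 / 2) ≤ (q - 1) / 2 := min_le_left _ _
  have hν2 : min ((q - 1) / 2) (1 / 2) ≤ 1 / 2 := min_le_right _ _
  refine ⟨min ((q - 1) / 2) (1 / 2), lt_min (by linarith) (by norm_num), hν2, by linarith, l, ?_⟩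
  have := mul_le_mul_of_nonneg_left hν1 (Nat.cast_nonneg (α := ℝ) l)
  push_cast
  linarith

end Damping

section QuadraticForm

variable {ι : Type*} [Fintype ι]

theorem mul_dotProduct_mulVec_le_of_sq_le {a : Matrix ι ι ℝ} (ha : a.PosSemidef) {b κ B : ℝ}
    (hκ : 0 < κ) (hb : b ^ 2 ≤ 4 * κ * B) (x y : ι → ℝ) :
    b * (y ⬝ᵥ a *ᵥ x) ≤ κ * (x ⬝ᵥ a *ᵥ x) + B * (y ⬝ᵥ a *ᵥ y) := by
  have hsymm : x ⬝ᵥ a *ᵥ y = y ⬝ᵥ a *ᵥ x := by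
    have hT : aᵀ = a := ha.isHermitian
    rw [Matrix.dotProduct_mulVec, ← Matrix.mulVec_transpose, hT, dotProduct_comm]
  have hy : 0 ≤ y ⬝ᵥ a *ᵥ y := ha.dotProduct_mulVec_nonneg y
  have hsq : 0 ≤ ((2 * κ) • x - b • y) ⬝ᵥ a *ᵥ ((2 * κ) • x - b • y) :=
    ha.dotProduct_mulVec_nonneg _
  simp only [Matrix.mulVec_sub, Matrix.mulVec_smul, dotProduct_sub, sub_dotProduct,
    dotProduct_smul, smul_dotProduct, smul_eq_mul, hsymm] at hsq
  have := mul_le_mul_of_nonneg_right hb hy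
  refine le_of_mul_le_mul_left (a := 4 * κ) ?_ (by positivity)
  linarith

theorem dotProduct_mulVec_le_of_abs_le {a : Matrix ι ι ℝ} {M δ : ℝ} (hM : 0 ≤ M)
    (ha : ∀ i j, |a i j| ≤ M) {y : ι → ℝ} (hy : ∀ i, y i ^ 2 ≤ δ) :
    y ⬝ᵥ a *ᵥ y ≤ Fintype.card ι ^ 2 * (M * δ) := by
  have hterm i j : y i * (a i j * y j) ≤ M * δ := by
    have hyy : |y i * y j| ≤ δ := by
      rw [abs_le]
      constructor <;> nlinarith [hy i, hy j, sq_nonneg (y i - y j), sq_nonneg (y i + y j)]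
    calc y i * (a i j * y j) ≤ |a i j * (y i * y j)| := by
          rw [mul_left_comm]; exact le_abs_self _
      _ ≤ M * δ := by rw [abs_mul]; exact mul_le_mul (ha i j) hyy (abs_nonneg _) hM
  calc y ⬝ᵥ a *ᵥ y = ∑ i, ∑ j, y i * (a i j * y j) := by
        simp only [dotProduct, Matrix.mulVec, Finset.mul_sum]
    _ ≤ ∑ _i : ι, ∑ _j : ι, M * δ :=
        Finset.sum_le_sum fun i _ => Finset.sum_le_sum fun j _ => hterm i j
    _ = Fintype.card ι ^ 2 * (M * δ) := by simp; ring

theorem gradient_terms_le {a : Matrix ι ι ℝ} (ha : a.PosSemidef) {M : ℝ} (hM : 0 ≤ M)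
    (haM : ∀ i j, |a i j| ≤ M) {F G κ B θ δ e : ℝ} (hκ : 0 < κ) (hF : F ^ 2 ≤ 4 * κ * B)
    (hG : 0 ≤ G) (hGB : G ≤ B) (he0 : 0 ≤ e) (he1 : e ≤ 1) (hδ : 0 ≤ δ) (hθ : -δ ≤ θ)
    (x : ι → ℝ) {y : ι → ℝ} (hy : ∀ i, y i ^ 2 ≤ δ) (l : ℕ) :
    F * ((l + 2) * e ^ (l + 1)) * (y ⬝ᵥ a *ᵥ x) - κ * e ^ (l + 2) * (x ⬝ᵥ a *ᵥ x) -
        G * ((l + 2) * e ^ (l + 1) * θ) ≤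
      (l + 2 + (l + 2) ^ 2 * (Fintype.card ι ^ 2 * M)) * δ * (B * e ^ l) := by
  have hB : 0 ≤ B := hG.trans hGB
  have hspace : F * ((l + 2) * e ^ (l + 1)) * (y ⬝ᵥ a *ᵥ x) - κ * e ^ (l + 2) * (x ⬝ᵥ a *ᵥ x) ≤
      (l + 2) ^ 2 * (Fintype.card ι ^ 2 * (M * δ)) * (B * e ^ l) := by
    have hyoung := mul_dotProduct_mulVec_le_of_sq_le ha hκ
      (show (F * (l + 2)) ^ 2 ≤ 4 * κ * (B * (l + 2) ^ 2) by
        rw [mul_pow, ← mul_assoc]; gcongr) (e • x) y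
    simp only [Matrix.mulVec_smul, dotProduct_smul, smul_dotProduct, smul_eq_mul] at hyoung
    have hyy := dotProduct_mulVec_le_of_abs_le hM haM hy
    calc F * ((l + 2) * e ^ (l + 1)) * (y ⬝ᵥ a *ᵥ x) - κ * e ^ (l + 2) * (x ⬝ᵥ a *ᵥ x)
        = e ^ l * (F * (l + 2) * (e * (y ⬝ᵥ a *ᵥ x)) - κ * (e * (e * (x ⬝ᵥ a *ᵥ x)))) := by ring
      _ ≤ e ^ l * (B * (l + 2) ^ 2 * (Fintype.card ι ^ 2 * (M * δ))) := by
          gcongr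
          have : B * (l + 2) ^ 2 * (y ⬝ᵥ a *ᵥ y) ≤
              B * (l + 2) ^ 2 * (Fintype.card ι ^ 2 * (M * δ)) := by gcongr
          linarith
      _ = _ := by ring
  have htime : -(G * ((l + 2) * e ^ (l + 1) * θ)) ≤ (l + 2) * δ * (B * e ^ l) := by
    calc -(G * ((l + 2) * e ^ (l + 1) * θ)) = (l + 2) * -θ * (G * e ^ (l + 1)) := by ring
      _ ≤ (l + 2) * δ * (G * e ^ (l + 1)) := by gcongr; linarith
      _ ≤ (l + 2) * δ * (B * e ^ l) := by
          gcongr ?_ * (?_ * ?_)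
          exact pow_le_pow_of_le_one he0 he1 l.le_succ
  calc _ ≤ (l + 2) ^ 2 * (Fintype.card ι ^ 2 * (M * δ)) * (B * e ^ l) +
        (l + 2) * δ * (B * e ^ l) := by linarith
    _ = _ := by ring

end QuadraticForm

section HalfSpace

variable {n : ℕ}

theorem isOpen_halfSpace (n : ℕ) : IsOpen (halfSpace n) :=
  isOpen_lt continuous_const continuous_fst

theorem measurableSet_halfSpace (n : ℕ) : MeasurableSet (halfSpace n) :=
  (isOpen_halfSpace n).measurableSet

/-- The gradient of `w` in the space variables. -/
def gradX (w : Pt n → ℝ) (p : Pt n) : Fin n → ℝ := fun i => pdX w i p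

/-- The weak inequality `f - div g ≥ 0` in the half-space, with respect to nonnegative test
functions of class `C^r`; the divergence is taken in the space variables. -/
def IsWeaklyNonneg (r : WithTop ℕ∞) (f : Pt n → ℝ) (g : Pt n → Fin n → ℝ) : Prop :=
  ∀ φ : Pt n → ℝ, ContDiff ℝ r φ → HasCompactSupport φ → tsupport φ ⊆ halfSpace n →
    (∀ p, 0 ≤ φ p) → 0 ≤ ∫ p in halfSpace n, (f p * φ p + g p ⬝ᵥ gradX φ p)

theorem continuousOn_pdT {w : Pt n → ℝ} (hw : ContDiffOn ℝ 1 w (halfSpace n)) :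
    ContinuousOn (pdT w) (halfSpace n) :=
  (hw.continuousOn_fderiv_of_isOpen (isOpen_halfSpace n) le_rfl).clm_apply continuousOn_const

theorem continuousOn_gradX {w : Pt n → ℝ} (hw : ContDiffOn ℝ 1 w (halfSpace n)) :
    ContinuousOn (gradX w) (halfSpace n) :=
  continuousOn_pi.2 fun _ =>
    (hw.continuousOn_fderiv_of_isOpen (isOpen_halfSpace n) le_rfl).clm_apply continuousOn_const

variable {f : Pt n → ℝ} {g : Pt n → Fin n → ℝ}

theorem integrable_mul_pdX (hf : LocallyIntegrableOn f (halfSpace n)) {φ : Pt n → ℝ}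
    (hφ : ContDiff ℝ 1 φ) (hc : HasCompactSupport φ) (hφS : tsupport φ ⊆ halfSpace n) (i : Fin n) :
    Integrable (fun p => f p * pdX φ i p) :=
  integrable_mul_of_tsupport_subset hf
    ((hφ.continuous_fderiv one_ne_zero).clm_apply continuous_const) (hc.fderiv_apply ℝ _)
    ((tsupport_fderiv_apply_subset ℝ _).trans hφS)

theorem integrable_weak_pairing (hf : LocallyIntegrableOn f (halfSpace n))
    (hg : ∀ i, LocallyIntegrableOn (fun p => g p i) (halfSpace n)) {φ : Pt n → ℝ}
    (hφ : ContDiff ℝ 1 φ) (hc : HasCompactSupport φ) (hφS : tsupport φ ⊆ halfSpace n) :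
    Integrable (fun p => f p * φ p + g p ⬝ᵥ gradX φ p) :=
  (integrable_mul_of_tsupport_subset hf hφ.continuous hc hφS).add <|
    integrable_finsetSum _ fun i _ => integrable_mul_pdX (hg i) hφ hc hφS i

theorem setIntegral_weak_pairing (hf : LocallyIntegrableOn f (halfSpace n))
    (hg : ∀ i, LocallyIntegrableOn (fun p => g p i) (halfSpace n)) {φ : Pt n → ℝ}
    (hφ : ContDiff ℝ 1 φ) (hc : HasCompactSupport φ) (hφS : tsupport φ ⊆ halfSpace n) :
    ∫ p in halfSpace n, (f p * φ p + g p ⬝ᵥ gradX φ p) =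
      (∫ p in halfSpace n, f p * φ p) + ∑ i, ∫ p in halfSpace n, g p i * pdX φ i p := by
  have hint i := (integrable_mul_pdX (hg i) hφ hc hφS i).restrict (s := halfSpace n)
  rw [← integral_finsetSum _ fun i _ => hint i]
  exact integral_add (integrable_mul_of_tsupport_subset hf hφ.continuous hc hφS).restrict
    (integrable_finsetSum _ fun i _ => hint i)

theorem IsWeaklyNonneg.of_smooth (hf : LocallyIntegrableOn f (halfSpace n))
    (hg : ∀ i, LocallyIntegrableOn (fun p => g p i) (halfSpace n))
    (h : IsWeaklyNonneg ∞ f g) : IsWeaklyNonneg 1 f g := by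
  intro φ hφ hc hφS hφ0
  obtain ⟨K, hK, hKS, Φ, hΦ, hΦK, hΦ0, hlim, hlim'⟩ :=
    exists_smooth_nonneg_approx (isOpen_halfSpace n) hφ hc hφS hφ0
  have hΦ1 k : ContDiff ℝ 1 (Φ k) := (hΦ k).of_le (by simp)
  have hΦc k : HasCompactSupport (Φ k) := hK.of_isClosed_subset (isClosed_tsupport _) (hΦK k)
  have hΦS k := (hΦK k).trans hKS
  refine ge_of_tendsto' (x := atTop) ?_ fun k => h (Φ k) (hΦ k) (hΦc k) (hΦS k) (hΦ0 k)
  simp only [setIntegral_weak_pairing hf hg (hΦ1 _) (hΦc _) (hΦS _)]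
  rw [setIntegral_weak_pairing hf hg hφ hc hφS]
  refine (tendsto_setIntegral_mul_of_tendstoUniformly hf hK hKS (fun k => (hΦ k).continuous) hΦK
    hφ.continuous hlim).add (tendsto_finsetSum _ fun i _ => ?_)
  have heval := ContinuousLinearMap.uniformContinuous
    (ContinuousLinearMap.apply ℝ ℝ ((0, EuclideanSpace.single i 1) : Pt n))
  exact tendsto_setIntegral_mul_of_tendstoUniformly (hg i) hK hKS
    (fun k => ((hΦ1 k).continuous_fderiv one_ne_zero).clm_apply continuous_const)
    (fun k => (tsupport_fderiv_apply_subset ℝ _).trans (hΦK k))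
    ((hφ.continuous_fderiv one_ne_zero).clm_apply continuous_const)
    (heval.comp_tendstoUniformly hlim')

instance (n : ℕ) : (volume : Measure (Pt n)).IsAddHaarMeasure :=
  Measure.prod.instIsAddHaarMeasure volume volume

theorem setIntegral_pdT_eq_zero {φ : Pt n → ℝ} (hφ : ContDiff ℝ 1 φ) (hc : HasCompactSupport φ)
    (hφS : tsupport φ ⊆ halfSpace n) : ∫ p in halfSpace n, pdT φ p = 0 := by
  rw [setIntegral_eq_integral_of_forall_compl_eq_zero fun p hp => ?_]
  · exact integral_fderiv_apply_eq_zero hφ hc _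
  · exact image_eq_zero_of_notMem_tsupport fun h =>
      hp (((tsupport_fderiv_apply_subset ℝ _).trans hφS) h)

theorem weak_pairing_comp_mul {w ψ : Pt n → ℝ} {F G : ℝ → ℝ} {p : Pt n}
    (hw : DifferentiableAt ℝ w p) (hψ : DifferentiableAt ℝ ψ p)
    (hF : DifferentiableAt ℝ F (w p)) (hG : HasDerivAt G (F (w p)) (w p)) (b : ℝ) (x : Fin n → ℝ) :
    (pdT w p - b) * (F (w p) * ψ p) + x ⬝ᵥ gradX (fun p => F (w p) * ψ p) p -
        pdT (fun p => G (w p) * ψ p) p =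
      F (w p) * (x ⬝ᵥ gradX ψ p) + deriv F (w p) * ψ p * (x ⬝ᵥ gradX w p) -
        G (w p) * pdT ψ p - b * (F (w p) * ψ p) := by
  have hspace : gradX (fun p => F (w p) * ψ p) p =
      F (w p) • gradX ψ p + (deriv F (w p) * ψ p) • gradX w p :=
    funext fun _ => fderiv_comp_mul_apply hF hw hψ _
  have htime : pdT (fun p => G (w p) * ψ p) p =
      G (w p) * pdT ψ p + F (w p) * ψ p * pdT w p := by
    rw [← hG.deriv]
    exact fderiv_comp_mul_apply hG.differentiableAt hw hψ _
  rw [hspace, htime, dotProduct_add, dotProduct_smul, dotProduct_smul, smul_eq_mul, smul_eq_mul]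
  ring

theorem IsWeaklyNonneg.nonlinear_test {w h : Pt n → ℝ}
    (H : IsWeaklyNonneg 1 (fun p => pdT w p - h p) g) (hw : ContDiffOn ℝ 1 w (halfSpace n))
    (hh : LocallyIntegrableOn h (halfSpace n))
    (hg : ∀ i, LocallyIntegrableOn (fun p => g p i) (halfSpace n))
    {J : Set ℝ} (hJ : IsOpen J) (hwJ : MapsTo w (halfSpace n) J) {F G : ℝ → ℝ}
    (hF : ContDiffOn ℝ 1 F J) (hF0 : ∀ s ∈ J, 0 ≤ F s) (hG : ContDiffOn ℝ 1 G J)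
    (hGF : ∀ s ∈ J, deriv G s = F s) {ψ : Pt n → ℝ} (hψ : ContDiff ℝ 1 ψ)
    (hc : HasCompactSupport ψ) (hψS : tsupport ψ ⊆ halfSpace n) (hψ0 : ∀ p, 0 ≤ ψ p) :
    let N := fun p => F (w p) * (g p ⬝ᵥ gradX ψ p) + deriv F (w p) * ψ p * (g p ⬝ᵥ gradX w p) -
      G (w p) * pdT ψ p - h p * (F (w p) * ψ p)
    IntegrableOn N (halfSpace n) ∧ 0 ≤ ∫ p in halfSpace n, N p := by
  intro N
  have hS := isOpen_halfSpace n
  let φ : Pt n → ℝ := fun p => F (w p) * ψ p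
  let χ : Pt n → ℝ := fun p => G (w p) * ψ p
  have hφ : ContDiff ℝ 1 φ := contDiff_mul_of_tsupport_subset hS (hF.comp hw hwJ) hψ hψS
  have hχ : ContDiff ℝ 1 χ := contDiff_mul_of_tsupport_subset hS (hG.comp hw hwJ) hψ hψS
  have hφc : HasCompactSupport φ := hc.mul_left
  have hχc : HasCompactSupport χ := hc.mul_left
  have hφS : tsupport φ ⊆ halfSpace n := tsupport_mul_subset_right.trans hψS
  have hχS : tsupport χ ⊆ halfSpace n := tsupport_mul_subset_right.trans hψS
  have hφ0 p : 0 ≤ φ p := by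
    by_cases hp : p ∈ halfSpace n
    · exact mul_nonneg (hF0 _ (hwJ hp)) (hψ0 p)
    · simp [φ, image_eq_zero_of_notMem_tsupport fun h => hp (hψS h)]
  have hN : EqOn (fun p => ((pdT w p - h p) * φ p + g p ⬝ᵥ gradX φ p) - pdT χ p) N
      (halfSpace n) := by
    intro p hp
    have hJp := hJ.mem_nhds (hwJ hp)
    have hGp := ((hG.contDiffAt hJp).differentiableAt one_ne_zero).hasDerivAt
    rw [hGF _ (hwJ hp)] at hGp
    exact weak_pairing_comp_mul ((hw.contDiffAt (hS.mem_nhds hp)).differentiableAt one_ne_zero)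
      (hψ.differentiable one_ne_zero p) ((hF.contDiffAt hJp).differentiableAt one_ne_zero) hGp _ _
  have hpdT : LocallyIntegrableOn (fun p => pdT w p - h p) (halfSpace n) :=
    ((continuousOn_pdT hw).locallyIntegrableOn (measurableSet_halfSpace n)).sub hh
  have hint : IntegrableOn (fun p => (pdT w p - h p) * φ p + g p ⬝ᵥ gradX φ p) (halfSpace n) :=
    (integrable_weak_pairing hpdT hg hφ hφc hφS).restrict
  have hχint : IntegrableOn (pdT χ) (halfSpace n) :=
    (((hχ.continuous_fderiv one_ne_zero).clm_apply
      continuous_const).integrable_of_hasCompactSupport (hχc.fderiv_apply ℝ _)).restrict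
  refine ⟨(hint.sub hχint).congr_fun hN (measurableSet_halfSpace n), ?_⟩
  rw [← setIntegral_congr_fun (measurableSet_halfSpace n) hN, integral_sub hint hχint,
    setIntegral_pdT_eq_zero hχ hχc hχS, sub_zero]
  exact H φ hφ hφc hφS hφ0

end HalfSpace

section CutoffEstimate

/-- The constant in front of the boundary terms produced by testing with the damping of exponent `ν`
and the cutoff power `ζ ^ (l + 2)` in dimension `d`, for coefficients bounded by `M`. -/
def cutoffConst (d : ℕ) (M ν : ℝ) (l : ℕ) : ℝ := 8 / ν * (l + 2 + (l + 2) ^ 2 * (d ^ 2 * M))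

theorem cutoffConst_nonneg {d : ℕ} {M ν : ℝ} {l : ℕ} (hM : 0 ≤ M) (hν : 0 ≤ ν) :
    0 ≤ cutoffConst d M ν l := by
  rw [cutoffConst]; positivity

theorem damped_terms_le {ι : Type*} [Fintype ι] {a : Matrix ι ι ℝ} (ha : a.PosSemidef) {M : ℝ}
    (hM : 0 ≤ M) (haM : ∀ i j, |a i j| ≤ M) {ν m q s e δ θ b : ℝ} {l : ℕ} (hν0 : 0 < ν)
    (hν : ν ≤ 1 / 2) (hνq : 1 + ν ≤ q) (hl : (l + 2 : ℕ) * (1 + ν) ≤ l * q) (hm : 0 < m)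
    (hs : 0 ≤ s) (he0 : 0 ≤ e) (he1 : e ≤ 1) (hδ : 0 ≤ δ) (hθ : -δ ≤ θ) (hb : 0 ≤ b)
    (x : ι → ℝ) {y : ι → ℝ} (hy : ∀ i, y i ^ 2 ≤ δ) :
    damping ν m s * ((l + 2) * e ^ (l + 1) * (y ⬝ᵥ a *ᵥ x)) +
        deriv (damping ν m) s * e ^ (l + 2) * (x ⬝ᵥ a *ᵥ x) -
        dampingPrimitive ν m s * ((l + 2) * e ^ (l + 1) * θ) - b * (damping ν m s * e ^ (l + 2)) ≤
      cutoffConst (Fintype.card ι) M ν l * δ * (m + m ^ (1 - q) * (s ^ q * e ^ (l + 2))) -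
        b * e ^ (l + 2) := by
  have hsm : s ∈ Ioi (-m) := mem_Ioi.2 (by linarith)
  have hF1 : 1 ≤ damping ν m s := one_le_damping hm hsm
  have hF2 : damping ν m s ≤ 2 := damping_le_two hν0.le hm.le hs
  have hFB : damping ν m s ^ 2 ≤ 4 * -deriv (damping ν m) s * dampingWeight ν m s := by
    have := deriv_damping_mul_dampingWeight hν0.ne' hm hsm
    nlinarith
  have hgrad := gradient_terms_le ha hM haM (neg_pos.2 (deriv_damping_neg hν0 hm hsm)) hFB
    (dampingPrimitive_nonneg (by linarith) hm.le hs)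
    (dampingPrimitive_le_dampingWeight hν0 hν hm.le hs) he0 he1 hδ hθ x hy l
  have hweight : (l + 2 + (l + 2) ^ 2 * (Fintype.card ι ^ 2 * M)) * δ *
      (dampingWeight ν m s * e ^ l) ≤
      cutoffConst (Fintype.card ι) M ν l * δ * (m + m ^ (1 - q) * (s ^ q * e ^ (l + 2))) := by
    have := dampingWeight_mul_pow_le hν0 (by linarith) hm hs he0 he1 hνq hl
    refine (mul_le_mul_of_nonneg_left this (by positivity)).trans_eq ?_
    rw [cutoffConst]; ring
  have hreaction : b * e ^ (l + 2) ≤ b * (damping ν m s * e ^ (l + 2)) := by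
    gcongr
    exact le_mul_of_one_le_left (by positivity) hF1
  linarith

variable {n : ℕ}

/-- A measurable field of symmetric, nonnegative and possibly degenerate coefficient matrices in the
half-space, with entries bounded by `M` almost everywhere. -/
structure IsBoundedDegenerateElliptic (a : Pt n → Matrix (Fin n) (Fin n) ℝ) (M : ℝ) : Prop where
  bound_nonneg : 0 ≤ M
  aestronglyMeasurable : ∀ i j,
    AEStronglyMeasurable (fun p => a p i j) (volume.restrict (halfSpace n))
  posSemidef : ∀ᵐ p ∂volume.restrict (halfSpace n), (a p).PosSemidef
  abs_le : ∀ᵐ p ∂volume.restrict (halfSpace n), ∀ i j, |a p i j| ≤ M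

/-- A nonnegative `C¹` function `w` on the half-space with `w_t - Lw ≥ c w^q` in the weak sense,
where `Lw = div (a ∇w)`. -/
structure IsFujitaSupersolution (a : Pt n → Matrix (Fin n) (Fin n) ℝ) (c q : ℝ) (w : Pt n → ℝ) :
    Prop where
  contDiffOn : ContDiffOn ℝ 1 w (halfSpace n)
  nonneg : ∀ p ∈ halfSpace n, 0 ≤ w p
  weak : IsWeaklyNonneg 1 (fun p => pdT w p - c * w p ^ q) fun p => a p *ᵥ gradX w p

/-- A `C¹` cutoff function in the half-space which is `1` on `Φ`, with the parabolic derivative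
bounds `ζ_t ≥ -δ` and `ζ_{x_i}² ≤ δ`. -/
structure IsCutoff (δ : ℝ) (Φ : Set (Pt n)) (ζ : Pt n → ℝ) : Prop where
  contDiff : ContDiff ℝ 1 ζ
  hasCompactSupport : HasCompactSupport ζ
  tsupport_subset : tsupport ζ ⊆ halfSpace n
  nonneg : ∀ p, 0 ≤ ζ p
  le_one : ∀ p, ζ p ≤ 1
  eq_one : ∀ p ∈ Φ, ζ p = 1
  neg_le_pdT : ∀ p, -δ ≤ pdT ζ p
  sq_pdX_le : ∀ i p, pdX ζ i p ^ 2 ≤ δ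

variable {a : Pt n → Matrix (Fin n) (Fin n) ℝ} {M c q δ ν m : ℝ} {w ζ : Pt n → ℝ}
  {Φ : Set (Pt n)} {l : ℕ}

theorem IsBoundedDegenerateElliptic.locallyIntegrableOn_flux (ha : IsBoundedDegenerateElliptic a M)
    (hw : ContDiffOn ℝ 1 w (halfSpace n)) (i : Fin n) :
    LocallyIntegrableOn (fun p => (a p *ᵥ gradX w p) i) (halfSpace n) := by
  exact locallyIntegrableOn_finsetSum Finset.univ fun j _ => locallyIntegrableOn_mul_of_ae_abs_le
    (ha.aestronglyMeasurable i j) (ha.abs_le.mono fun _ h => h i j)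
    ((continuousOn_pi.1 (continuousOn_gradX hw) j).locallyIntegrableOn (measurableSet_halfSpace n))

theorem IsFujitaSupersolution.continuousOn_rpow (hw : IsFujitaSupersolution a c q w) (hq : 0 ≤ q) :
    ContinuousOn (fun p => w p ^ q) (halfSpace n) :=
  hw.contDiffOn.continuousOn.rpow_const fun _ _ => Or.inr hq

theorem IsCutoff.delta_nonneg (hζ : IsCutoff δ Φ ζ) : 0 ≤ δ := by
  have h0 : pdT ζ 0 = 0 := image_eq_zero_of_notMem_tsupport fun h => (lt_irrefl (0 : ℝ))
    (hζ.tsupport_subset (tsupport_fderiv_apply_subset ℝ _ h))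
  linarith [hζ.neg_le_pdT 0]

theorem IsCutoff.fderiv_eq_zero (hζ : IsCutoff δ Φ ζ) {p : Pt n} (hp : p ∉ tsupport ζ \ Φ) :
    fderiv ℝ ζ p = 0 := by
  by_cases hpΦ : p ∈ Φ
  · refine IsLocalMax.fderiv_eq_zero (Eventually.of_forall fun y => ?_)
    rw [hζ.eq_one p hpΦ]
    exact hζ.le_one y
  · exact image_eq_zero_of_notMem_tsupport fun h => hp ⟨tsupport_fderiv_subset ℝ h, hpΦ⟩

theorem IsCutoff.tsupport_pow_subset (hζ : IsCutoff δ Φ ζ) (k : ℕ) :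
    tsupport (fun p => ζ p ^ (k + 1)) ⊆ halfSpace n := by
  simp only [pow_succ]
  exact tsupport_mul_subset_right.trans hζ.tsupport_subset

theorem IsCutoff.hasCompactSupport_pow (hζ : IsCutoff δ Φ ζ) (k : ℕ) :
    HasCompactSupport fun p => ζ p ^ (k + 1) := by
  simp only [pow_succ]
  exact hζ.hasCompactSupport.mul_left

theorem IsCutoff.integrable_mul_pow (hζ : IsCutoff δ Φ ζ) {f : Pt n → ℝ}
    (hf : ContinuousOn f (halfSpace n)) (k : ℕ) : Integrable fun p => f p * ζ p ^ (k + 1) :=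
  integrable_mul_of_tsupport_subset (hf.locallyIntegrableOn (measurableSet_halfSpace n))
    (hζ.contDiff.continuous.pow _) (hζ.hasCompactSupport_pow k) (hζ.tsupport_pow_subset k)

/-- The integrand obtained by testing `w_t - Lw ≥ c w^q` with `damping ν m w * ζ ^ (l + 2)` and
integrating the time derivative by parts. -/
def dampedIntegrand (a : Pt n → Matrix (Fin n) (Fin n) ℝ) (c q ν m : ℝ) (l : ℕ) (w ζ : Pt n → ℝ)
    (p : Pt n) : ℝ :=
  damping ν m (w p) * ((l + 2) * ζ p ^ (l + 1) * (gradX ζ p ⬝ᵥ a p *ᵥ gradX w p)) +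
    deriv (damping ν m) (w p) * ζ p ^ (l + 2) * (gradX w p ⬝ᵥ a p *ᵥ gradX w p) -
    dampingPrimitive ν m (w p) * ((l + 2) * ζ p ^ (l + 1) * pdT ζ p) -
    c * w p ^ q * (damping ν m (w p) * ζ p ^ (l + 2))

theorem integrableOn_dampedIntegrand_and_setIntegral_nonneg (ha : IsBoundedDegenerateElliptic a M)
    (hw : IsFujitaSupersolution a c q w) (hζ : IsCutoff δ Φ ζ) (hq : 0 ≤ q) (hν : ν ≠ 1)
    (hm : 0 < m) :
    IntegrableOn (dampedIntegrand a c q ν m l w ζ) (halfSpace n) ∧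
      0 ≤ ∫ p in halfSpace n, dampedIntegrand a c q ν m l w ζ p := by
  have htest := hw.weak.nonlinear_test hw.contDiffOn
    ((continuousOn_const.mul (hw.continuousOn_rpow hq)).locallyIntegrableOn
      (measurableSet_halfSpace n))
    (ha.locallyIntegrableOn_flux hw.contDiffOn) isOpen_Ioi
    (fun p hp => mem_Ioi.2 ((neg_neg_of_pos hm).trans_le (hw.nonneg p hp)))
    (contDiffOn_damping (ν := ν) hm) (fun s hs => zero_le_one.trans (one_le_damping hm hs))
    (contDiffOn_dampingPrimitive hm) (fun s hs => deriv_dampingPrimitive hν hm hs)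
    (hζ.contDiff.pow (l + 2)) (hζ.hasCompactSupport_pow (l + 1)) (hζ.tsupport_pow_subset (l + 1))
    (fun p => pow_nonneg (hζ.nonneg p) _)
  have hderiv (p v : Pt n) : fderiv ℝ (fun p => ζ p ^ (l + 2)) p v =
      (l + 2) * ζ p ^ (l + 1) * fderiv ℝ ζ p v := by
    rw [fderiv_pow_succ_apply hζ.contDiff]
    push_cast
    ring
  have hgrad p : gradX (fun p => ζ p ^ (l + 2)) p = ((l + 2) * ζ p ^ (l + 1)) • gradX ζ p :=
    funext fun _ => hderiv p _
  refine (congrArg (fun N : Pt n → ℝ => IntegrableOn N (halfSpace n) ∧ 0 ≤ ∫ p in halfSpace n, N p)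
    (funext fun p => ?_)).mpr htest
  rw [dampedIntegrand, hgrad, pdT, pdT, hderiv, dotProduct_smul, smul_eq_mul,
    dotProduct_comm (gradX ζ p), dotProduct_comm (gradX w p)]

theorem ae_dampedIntegrand_le (ha : IsBoundedDegenerateElliptic a M)
    (hw : IsFujitaSupersolution a c q w) (hζ : IsCutoff δ Φ ζ) (hc : 0 ≤ c) (hν0 : 0 < ν)
    (hν : ν ≤ 1 / 2) (hνq : 1 + ν ≤ q) (hl : (l + 2 : ℕ) * (1 + ν) ≤ l * q) (hm : 0 < m) :
    ∀ᵐ p ∂volume.restrict (halfSpace n), dampedIntegrand a c q ν m l w ζ p ≤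
      cutoffConst n M ν l * δ * ((tsupport ζ).indicator (fun _ => m) p +
        m ^ (1 - q) * Φᶜ.indicator (fun p => w p ^ q * ζ p ^ (l + 2)) p) -
      c * (w p ^ q * ζ p ^ (l + 2)) := by
  filter_upwards [ha.posSemidef, ha.abs_le, ae_restrict_mem (measurableSet_halfSpace n)]
    with p hpos hbound hp
  have hwp := hw.nonneg p hp
  have hwq : 0 ≤ w p ^ q := rpow_nonneg hwp q
  have hle {δ' : ℝ} (hδ' : 0 ≤ δ') (ht : -δ' ≤ pdT ζ p) (hx : ∀ i, pdX ζ i p ^ 2 ≤ δ') :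
      dampedIntegrand a c q ν m l w ζ p ≤ cutoffConst n M ν l * δ' *
        (m + m ^ (1 - q) * (w p ^ q * ζ p ^ (l + 2))) - c * (w p ^ q * ζ p ^ (l + 2)) := by
    have := damped_terms_le hpos ha.bound_nonneg hbound hν0 hν hνq hl hm hwp (hζ.nonneg p)
      (hζ.le_one p) hδ' ht (mul_nonneg hc hwq) (gradX w p) hx
    rwa [Fintype.card_fin, mul_assoc c _ (ζ p ^ (l + 2))] at this
  by_cases hpT : p ∈ tsupport ζ \ Φ
  · rw [indicator_of_mem hpT.1, indicator_of_mem (mem_compl hpT.2)]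
    exact hle hζ.delta_nonneg (hζ.neg_le_pdT p) (hζ.sq_pdX_le · p)
  · have hderiv := hζ.fderiv_eq_zero hpT
    refine (hle le_rfl (by simp [pdT, hderiv]) (by simp [pdX, hderiv])).trans ?_
    have hζp := hζ.nonneg p
    have := cutoffConst_nonneg (d := n) (l := l) ha.bound_nonneg hν0.le
    have := hζ.delta_nonneg
    have : 0 ≤ (tsupport ζ).indicator (fun _ => m) p := indicator_nonneg (fun _ _ => hm.le) p
    have : 0 ≤ Φᶜ.indicator (fun p => w p ^ q * ζ p ^ (l + 2)) p :=
      indicator_apply_nonneg fun _ => by positivity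
    rw [mul_zero, zero_mul]
    gcongr
    positivity

theorem IsFujitaSupersolution.setIntegral_rpow_mul_cutoff_le
    (hw : IsFujitaSupersolution a c q w) (ha : IsBoundedDegenerateElliptic a M)
    (hζ : IsCutoff δ Φ ζ) (hΦ : MeasurableSet Φ) (hc : 0 ≤ c) (hν0 : 0 < ν)
    (hν : ν ≤ 1 / 2) (hνq : 1 + ν ≤ q) (hl : (l + 2 : ℕ) * (1 + ν) ≤ l * q) (hm : 0 < m) :
    c * ∫ p in halfSpace n, w p ^ q * ζ p ^ (l + 2) ≤
      cutoffConst n M ν l * δ * (m * volume.real (tsupport ζ) +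
        m ^ (1 - q) * ∫ p in halfSpace n \ Φ, w p ^ q * ζ p ^ (l + 2)) := by
  obtain ⟨hN, hN0⟩ := integrableOn_dampedIntegrand_and_setIntegral_nonneg (l := l) ha hw hζ
    (by linarith) (by linarith : ν ≠ 1) hm
  set μ := volume.restrict (halfSpace n)
  let f := fun p => w p ^ q * ζ p ^ (l + 2)
  have hf : Integrable f μ :=
    (hζ.integrable_mul_pow (hw.continuousOn_rpow (by linarith)) (l + 1)).restrict
  have hsupp : MeasurableSet (tsupport ζ) := (isClosed_tsupport ζ).measurableSet
  have hind : Integrable ((tsupport ζ).indicator fun _ => m) μ :=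
    ((integrableOn_const hζ.hasCompactSupport.measure_lt_top.ne).integrable_indicator
      hsupp).restrict
  have hmass := (hf.indicator hΦ.compl).const_mul (m ^ (1 - q))
  have hsum : Integrable
    (fun p => (tsupport ζ).indicator (fun _ => m) p + m ^ (1 - q) * Φᶜ.indicator f p) μ :=
    hind.add hmass
  have hbound := integral_mono_ae hN ((hsum.const_mul _).sub (hf.const_mul c))
    (ae_dampedIntegrand_le ha hw hζ hc hν0 hν hνq hl hm)
  simp only [Pi.sub_apply] at hbound
  rw [integral_sub (hsum.const_mul _) (hf.const_mul c), integral_const_mul,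
    integral_const_mul, integral_add hind hmass, integral_const_mul, setIntegral_indicator hsupp,
    setIntegral_indicator hΦ.compl, setIntegral_const,
    inter_eq_self_of_subset_right hζ.tsupport_subset, ← sdiff_eq, smul_eq_mul,
    mul_comm _ m] at hbound
  linarith

end CutoffEstimate

section SmoothTransition

theorem deriv_smoothTransition_of_nonpos {x : ℝ} (hx : x ≤ 0) : deriv smoothTransition x = 0 := by
  refine IsLocalMin.deriv_eq_zero (Eventually.of_forall fun y => ?_)
  rw [smoothTransition.zero_of_nonpos hx]
  exact smoothTransition.nonneg y

theorem deriv_smoothTransition_of_one_le {x : ℝ} (hx : 1 ≤ x) : deriv smoothTransition x = 0 := by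
  refine IsLocalMax.deriv_eq_zero (Eventually.of_forall fun y => ?_)
  rw [smoothTransition.one_of_one_le hx]
  exact smoothTransition.le_one y

theorem deriv_smoothTransition_nonneg (x : ℝ) : 0 ≤ deriv smoothTransition x :=
  smoothTransition.monotone.deriv_nonneg

theorem exists_deriv_smoothTransition_le : ∃ D, ∀ x, deriv smoothTransition x ≤ D := by
  obtain ⟨D, hD⟩ := isCompact_Icc.exists_bound_of_continuousOn
    (smoothTransition.contDiff.continuous_deriv le_rfl).continuousOn (s := Icc 0 1)
  refine ⟨max D 0, fun x => ?_⟩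
  by_cases hx : x ∈ Icc 0 1
  · exact (le_abs_self _).trans ((hD x hx).trans (le_max_left _ _))
  · rcases not_and_or.1 hx with hx | hx
    · exact (deriv_smoothTransition_of_nonpos (not_le.1 hx).le).trans_le (le_max_right _ _)
    · exact (deriv_smoothTransition_of_one_le (not_le.1 hx).le).trans_le (le_max_right _ _)

end SmoothTransition

section ParabolicCutoff

variable {n : ℕ} {R : ℝ}

/-- The parabolic cutoff at scale `R`: it vanishes for `t ≤ 1 / R` and for `t + |x|² ≥ 2R²`, and is
`1` on `parabolicCore R`. -/
def parabolicCutoff (R : ℝ) (p : Pt n) : ℝ :=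
  smoothTransition (R * p.1 - 1) * smoothTransition (2 - (p.1 + ‖p.2‖ ^ 2) / R ^ 2)

/-- The set `{t ≥ 2 / R, t + |x|² ≤ R²}`, which exhausts the half-space as `R → ∞`. -/
def parabolicCore (n : ℕ) (R : ℝ) : Set (Pt n) := {p | 2 ≤ R * p.1 ∧ p.1 + ‖p.2‖ ^ 2 ≤ R ^ 2}

theorem isClosed_setOf_le_mul_time_and_le (n : ℕ) (b R d : ℝ) :
    IsClosed {p : Pt n | b ≤ R * p.1 ∧ p.1 + ‖p.2‖ ^ 2 ≤ d} := by
  rw [ofPred_and]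
  exact (isClosed_le (by fun_prop) (by fun_prop)).inter (isClosed_le (by fun_prop) (by fun_prop))

theorem measurableSet_parabolicCore (n : ℕ) (R : ℝ) : MeasurableSet (parabolicCore n R) :=
  (isClosed_setOf_le_mul_time_and_le n 2 R (R ^ 2)).measurableSet

theorem aecover_parabolicCore (n : ℕ) :
    AECover (volume.restrict (halfSpace n)) atTop (parabolicCore n) where
  measurableSet := measurableSet_parabolicCore n
  ae_eventually_mem := by
    filter_upwards [ae_restrict_mem (measurableSet_halfSpace n)] with p hp
    exact ((tendsto_id.atTop_mul_const hp).eventually_ge_atTop 2).and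
      ((tendsto_pow_atTop two_ne_zero).eventually_ge_atTop _)

theorem contDiff_parabolicCutoff (n : ℕ) (R : ℝ) :
    ContDiff ℝ 1 (parabolicCutoff R : Pt n → ℝ) :=
  (smoothTransition.contDiff.comp (by fun_prop)).mul
    (smoothTransition.contDiff.comp
      (contDiff_const.sub ((contDiff_fst.add (contDiff_snd.norm_sq ℝ)).div_const _)))

theorem tsupport_parabolicCutoff_subset (hR : 0 < R) :
    tsupport (parabolicCutoff R : Pt n → ℝ) ⊆
      {p | 1 ≤ R * p.1 ∧ p.1 + ‖p.2‖ ^ 2 ≤ 2 * R ^ 2} := by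
  refine closure_minimal (fun p hp => ?_) (isClosed_setOf_le_mul_time_and_le n 1 R (2 * R ^ 2))
  rw [Function.mem_support, parabolicCutoff, mul_ne_zero_iff, ne_eq, ne_eq,
    smoothTransition.zero_iff_nonpos, smoothTransition.zero_iff_nonpos, not_le, not_le, sub_pos,
    sub_pos, div_lt_iff₀ (by positivity)] at hp
  exact ⟨hp.1.le, hp.2.le⟩

theorem tsupport_parabolicCutoff_subset_halfSpace (hR : 0 < R) :
    tsupport (parabolicCutoff R : Pt n → ℝ) ⊆ halfSpace n := fun _ hp =>
  pos_of_mul_pos_right (zero_lt_one.trans_le (tsupport_parabolicCutoff_subset hR hp).1) hR.le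

theorem tsupport_parabolicCutoff_subset_prod (hR : 0 < R) :
    tsupport (parabolicCutoff R : Pt n → ℝ) ⊆
      Icc 0 (2 * R ^ 2) ×ˢ Metric.closedBall 0 (2 * R) := by
  intro p hp
  have ht : 0 < p.1 := tsupport_parabolicCutoff_subset_halfSpace hR hp
  have hle := (tsupport_parabolicCutoff_subset hR hp).2
  refine ⟨⟨ht.le, ?_⟩, mem_closedBall_zero_iff.2 (abs_le_of_sq_le_sq' ?_ (by positivity)).2⟩
  · nlinarith [sq_nonneg ‖p.2‖]
  · nlinarith [sq_nonneg R]

theorem measureReal_tsupport_parabolicCutoff_le (hR : 0 < R) :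
    volume.real (tsupport (parabolicCutoff R : Pt n → ℝ)) ≤
      2 ^ (n + 1) * volume.real (Metric.ball (0 : Xn n) 1) * R ^ (n + 2) := by
  have hcompact : IsCompact (Icc 0 (2 * R ^ 2) ×ˢ Metric.closedBall (0 : Xn n) (2 * R)) :=
    isCompact_Icc.prod (isCompact_closedBall 0 _)
  calc volume.real (tsupport (parabolicCutoff R : Pt n → ℝ))
      ≤ volume.real (Icc 0 (2 * R ^ 2) ×ˢ Metric.closedBall (0 : Xn n) (2 * R)) :=
        measureReal_mono (tsupport_parabolicCutoff_subset_prod hR) hcompact.measure_lt_top.ne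
    _ = 2 * R ^ 2 * ((2 * R) ^ n * volume.real (Metric.ball (0 : Xn n) 1)) := by
        rw [Measure.volume_eq_prod, measureReal_prod_prod,
          Real.volume_real_Icc_of_le (by positivity),
          Measure.addHaar_real_closedBall _ _ (by positivity), finrank_euclideanSpace_fin,
          sub_zero]
    _ = _ := by ring

theorem fderiv_parabolicCutoff_apply (R : ℝ) (p v : Pt n) :
    fderiv ℝ (parabolicCutoff R) p v =
      smoothTransition (R * p.1 - 1) * (deriv smoothTransition (2 - (p.1 + ‖p.2‖ ^ 2) / R ^ 2) *
        -((v.1 + 2 * inner ℝ p.2 v.2) / R ^ 2)) +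
      deriv smoothTransition (R * p.1 - 1) * smoothTransition (2 - (p.1 + ‖p.2‖ ^ 2) / R ^ 2) *
        (R * v.1) := by
  have hS (x : ℝ) : HasDerivAt smoothTransition (deriv smoothTransition x) x :=
    ((smoothTransition.contDiff (n := 1)).differentiable one_ne_zero x).hasDerivAt
  have htime : HasFDerivAt (fun p : Pt n => R * p.1 - 1)
      (R • ContinuousLinearMap.fst ℝ ℝ (Xn n)) p :=
    (hasFDerivAt_fst.const_mul R).sub_const 1
  have hnorm : HasFDerivAt (fun p : Pt n => ‖p.2‖ ^ 2)
      (2 • (innerSL ℝ p.2).comp (ContinuousLinearMap.snd ℝ ℝ (Xn n))) p := hasFDerivAt_snd.norm_sq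
  have hspace := ((hasFDerivAt_fst.add hnorm).mul_const (R ^ 2)⁻¹).const_sub 2
  have hfderiv := (((hS _).comp_hasFDerivAt p htime).mul ((hS _).comp_hasFDerivAt p hspace)).fderiv
  simp only [← div_eq_mul_inv] at hfderiv
  refine (DFunLike.congr_fun hfderiv v).trans ?_
  simp
  ring

theorem neg_le_pdT_parabolicCutoff {D : ℝ} (hD : ∀ x, deriv smoothTransition x ≤ D) (hR : 0 < R)
    (p : Pt n) : -(D / R ^ 2) ≤ pdT (parabolicCutoff R) p := by
  have hα1 := smoothTransition.le_one (R * p.1 - 1)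
  have hβ0 := smoothTransition.nonneg (2 - (p.1 + ‖p.2‖ ^ 2) / R ^ 2)
  have hα' := deriv_smoothTransition_nonneg (R * p.1 - 1)
  have hβ' := deriv_smoothTransition_nonneg (2 - (p.1 + ‖p.2‖ ^ 2) / R ^ 2)
  have hdecay : smoothTransition (R * p.1 - 1) *
      deriv smoothTransition (2 - (p.1 + ‖p.2‖ ^ 2) / R ^ 2) / R ^ 2 ≤ D / R ^ 2 := by
    gcongr
    exact (mul_le_of_le_one_left hβ' hα1).trans (hD _)
  have hgrowth := mul_nonneg (mul_nonneg hα' hβ0) hR.le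
  rw [pdT, fderiv_parabolicCutoff_apply, inner_zero_right, mul_zero, add_zero, mul_one]
  calc -(D / R ^ 2) ≤ _ := neg_le_neg hdecay
    _ ≤ _ := le_add_of_nonneg_right hgrowth
    _ = _ := by ring

theorem sq_pdX_parabolicCutoff_le {D : ℝ} (hD : ∀ x, deriv smoothTransition x ≤ D) (hR : 0 < R)
    (i : Fin n) (p : Pt n) : pdX (parabolicCutoff R) i p ^ 2 ≤ 8 * D ^ 2 / R ^ 2 := by
  by_cases hp : p ∈ tsupport (parabolicCutoff R)
  swap
  · rw [pdX, image_eq_zero_of_notMem_tsupport fun h => hp (tsupport_fderiv_subset ℝ h),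
      zero_apply, zero_pow two_ne_zero]
    positivity
  have ht : 0 < p.1 := tsupport_parabolicCutoff_subset_halfSpace hR hp
  have hx : p.2 i ^ 2 ≤ 2 * R ^ 2 := by
    have := (tsupport_parabolicCutoff_subset hR hp).2
    have := pow_le_pow_left₀ (norm_nonneg _) (PiLp.norm_apply_le p.2 i) 2
    rw [Real.norm_eq_abs, sq_abs] at this
    linarith
  have hα0 := smoothTransition.nonneg (R * p.1 - 1)
  have hα1 := smoothTransition.le_one (R * p.1 - 1)
  have hβ' := deriv_smoothTransition_nonneg (2 - (p.1 + ‖p.2‖ ^ 2) / R ^ 2)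
  have hαβ : smoothTransition (R * p.1 - 1) *
      deriv smoothTransition (2 - (p.1 + ‖p.2‖ ^ 2) / R ^ 2) ≤ D :=
    (mul_le_of_le_one_left hβ' hα1).trans (hD _)
  have hinner : inner ℝ p.2 (EuclideanSpace.single i 1) = p.2 i := by
    simp [EuclideanSpace.inner_single_right]
  rw [pdX, fderiv_parabolicCutoff_apply, hinner]
  calc _ = (smoothTransition (R * p.1 - 1) *
        deriv smoothTransition (2 - (p.1 + ‖p.2‖ ^ 2) / R ^ 2)) ^ 2 * (4 * p.2 i ^ 2) / R ^ 4 := by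
        ring
    _ ≤ D ^ 2 * (4 * (2 * R ^ 2)) / R ^ 4 := by gcongr
    _ = _ := by field_simp; ring

theorem exists_isCutoff_parabolicCutoff (n : ℕ) :
    ∃ B, ∀ R, 0 < R → IsCutoff (B / R ^ 2) (parabolicCore n R) (parabolicCutoff R) := by
  obtain ⟨D, hD⟩ := exists_deriv_smoothTransition_le
  have hD0 : 0 ≤ D := (deriv_smoothTransition_nonneg 0).trans (hD 0)
  refine ⟨D + 8 * D ^ 2, fun R hR => ?_⟩
  exact {
    contDiff := contDiff_parabolicCutoff n R
    hasCompactSupport := (isCompact_Icc.prod (isCompact_closedBall 0 _)).of_isClosed_subset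
      (isClosed_tsupport _) (tsupport_parabolicCutoff_subset_prod hR)
    tsupport_subset := tsupport_parabolicCutoff_subset_halfSpace hR
    nonneg := fun p => mul_nonneg (smoothTransition.nonneg _) (smoothTransition.nonneg _)
    le_one := fun p => mul_le_one₀ (smoothTransition.le_one _) (smoothTransition.nonneg _)
      (smoothTransition.le_one _)
    eq_one := fun p ⟨ht, hx⟩ => by
      have := (div_le_one (by positivity)).2 hx
      rw [parabolicCutoff, smoothTransition.one_of_one_le (by linarith),
        smoothTransition.one_of_one_le (by linarith), one_mul]
    neg_le_pdT := fun p =>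
      (neg_le_neg (by gcongr; exact le_add_of_nonneg_right (by positivity))).trans
        (neg_le_pdT_parabolicCutoff hD hR p)
    sq_pdX_le := fun i p => (sq_pdX_parabolicCutoff_le hD hR i p).trans
      (by gcongr; exact le_add_of_nonneg_left hD0) }

end ParabolicCutoff

section TailEstimate

variable {α ι : Type*} [MeasurableSpace α] {μ : Measure α} {L : Filter ι} [L.NeBot]
  [L.IsCountablyGenerated] {Φ : ι → Set α} {f : α → ℝ} {g : ι → α → ℝ} {K r : ℝ}

theorem integrable_of_tail_estimate (hΦ : AECover μ L Φ) (hg : ∀ i, Integrable (g i) μ)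
    (hg0 : ∀ i, 0 ≤ᵐ[μ] g i) (hgf : ∀ i, g i ≤ᵐ[μ] f) (hgΦ : ∀ i, EqOn (g i) f (Φ i)) (hr : 0 < r)
    (h : ∀ i s, 0 < s → ∫ x, g i x ∂μ ≤ K * (s + s ^ (-r) * ∫ x in (Φ i)ᶜ, g i x ∂μ)) :
    Integrable f μ := by
  have hlim : Tendsto (fun s : ℝ => K * s ^ (-r)) atTop (𝓝 0) := by
    simpa using (tendsto_rpow_neg_atTop hr).const_mul K
  obtain ⟨s, hKs, hs⟩ :=
    ((hlim.eventually_le_const one_half_pos).and (eventually_gt_atTop 0)).exists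
  have hbound i : ∫ x, g i x ∂μ ≤ 2 * (K * s) := by
    have htail : K * s ^ (-r) * ∫ x in (Φ i)ᶜ, g i x ∂μ ≤ 1 / 2 * ∫ x, g i x ∂μ := by
      refine mul_le_mul hKs (setIntegral_le_integral (hg i) (hg0 i)) ?_ one_half_pos.le
      exact integral_nonneg_of_ae (ae_restrict_of_ae (hg0 i))
    linarith [h i s hs]
  obtain ⟨i₀⟩ := L.nonempty_of_neBot
  refine hΦ.integrable_of_integral_bounded_of_nonneg_ae (2 * (K * s))
    (fun i => (hg i).integrableOn.congr_fun (hgΦ i) (hΦ.measurableSet i))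
    ((hg0 i₀).trans (hgf i₀)) (Eventually.of_forall fun i => ?_)
  rw [← setIntegral_congr_fun (hΦ.measurableSet i) (hgΦ i)]
  exact (setIntegral_le_integral (hg i) (hg0 i)).trans (hbound i)

theorem ae_eq_zero_of_tail_estimate (hΦ : AECover μ L Φ) (hg : ∀ i, Integrable (g i) μ)
    (hg0 : ∀ i, 0 ≤ᵐ[μ] g i) (hgf : ∀ i, g i ≤ᵐ[μ] f) (hgΦ : ∀ i, EqOn (g i) f (Φ i)) (hr : 0 < r)
    (hK : 0 ≤ K)
    (h : ∀ i s, 0 < s → ∫ x, g i x ∂μ ≤ K * (s + s ^ (-r) * ∫ x in (Φ i)ᶜ, g i x ∂μ)) :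
    f =ᵐ[μ] 0 := by
  have hf := integrable_of_tail_estimate hΦ hg hg0 hgf hgΦ hr h
  have hcore := hΦ.integral_tendsto_of_countably_generated hf
  have htail : Tendsto (fun i => ∫ x in (Φ i)ᶜ, f x ∂μ) L (𝓝 0) := by
    simpa only [setIntegral_compl (hΦ.measurableSet _) hf, sub_self] using
      hcore.const_sub (∫ x, f x ∂μ)
  have hle {s : ℝ} (hs : 0 < s) : ∫ x, f x ∂μ ≤ K * (s + s ^ (-r) * 0) := by
    refine le_of_tendsto_of_tendsto' hcore (((htail.const_mul _).const_add s).const_mul K)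
      fun i => ?_
    calc ∫ x in Φ i, f x ∂μ = ∫ x in Φ i, g i x ∂μ :=
          (setIntegral_congr_fun (hΦ.measurableSet i) (hgΦ i)).symm
      _ ≤ ∫ x, g i x ∂μ := setIntegral_le_integral (hg i) (hg0 i)
      _ ≤ K * (s + s ^ (-r) * ∫ x in (Φ i)ᶜ, g i x ∂μ) := h i s hs
      _ ≤ K * (s + s ^ (-r) * ∫ x in (Φ i)ᶜ, f x ∂μ) := by
          have := integral_mono_ae (hg i).restrict hf.restrict
            (ae_restrict_of_ae (s := (Φ i)ᶜ) (hgf i))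
          gcongr
  have hlim : Tendsto (fun s : ℝ => K * (s + s ^ (-r) * 0)) (𝓝[>] 0) (𝓝 0) := by
    simpa using ((tendsto_id (x := 𝓝 (0 : ℝ))).mono_left nhdsWithin_le_nhds).const_mul K
  obtain ⟨i₀⟩ := L.nonempty_of_neBot
  have hf0 : 0 ≤ᵐ[μ] f := (hg0 i₀).trans (hgf i₀)
  refine (integral_eq_zero_iff_of_nonneg_ae hf0 hf).1 (le_antisymm ?_ (integral_nonneg_of_ae hf0))
  exact ge_of_tendsto hlim (eventually_mem_nhdsWithin.mono fun _ => hle)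

end TailEstimate

section Fujita

variable {n : ℕ} {a : Pt n → Matrix (Fin n) (Fin n) ℝ} {M c q : ℝ} {w : Pt n → ℝ}

theorem scaled_bound_le {C B V R s q T : ℝ} (hC : 0 ≤ C) (hB : 0 ≤ B) (hV : 0 ≤ V) (hR : 1 ≤ R)
    (hs : 0 < s) (hq : 1 < q) (hn : n * (q - 1) ≤ 2) (hT : 0 ≤ T) :
    C * (B / R ^ 2) * (s * R ^ (-(2 / (q - 1))) * (V * R ^ (n + 2)) +
      (s * R ^ (-(2 / (q - 1)))) ^ (1 - q) * T) ≤ C * B * (V + 1) * (s + s ^ (1 - q) * T) := by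
  have hR0 : 0 < R := zero_lt_one.trans_le hR
  have hq' : 0 < q - 1 := sub_pos.2 hq
  have hgrowth : R ^ (-(2 / (q - 1))) * R ^ n ≤ 1 := by
    rw [← rpow_natCast, ← rpow_add hR0]
    refine rpow_le_one_of_one_le_of_nonpos hR ?_
    rw [neg_add_nonpos_iff]
    exact (le_div_iff₀ hq').2 hn
  have hscale : (s * R ^ (-(2 / (q - 1)))) ^ (1 - q) = s ^ (1 - q) * R ^ 2 := by
    rw [mul_rpow hs.le (rpow_nonneg hR0.le _), ← rpow_mul hR0.le, ← rpow_natCast R 2]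
    congr 2
    push_cast
    field_simp
    ring
  have hsT : 0 ≤ s ^ (1 - q) * T := by positivity
  calc _ = C * B * (V * s * (R ^ (-(2 / (q - 1))) * R ^ n) + s ^ (1 - q) * T) := by
        rw [hscale, pow_add]; field_simp
    _ ≤ C * B * (V * s * 1 + s ^ (1 - q) * T) := by gcongr
    _ ≤ C * B * ((V + 1) * (s + s ^ (1 - q) * T)) := by
        gcongr
        nlinarith
    _ = _ := by ring

theorem IsFujitaSupersolution.exists_tail_estimate (hw : IsFujitaSupersolution a c q w)
    (ha : IsBoundedDegenerateElliptic a M) (hc : 0 < c) (hq : 1 < q) (hn : n * (q - 1) ≤ 2) :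
    ∃ k : ℕ, ∃ K, 0 ≤ K ∧ ∀ R, 1 ≤ R → ∀ s, 0 < s →
      ∫ p in halfSpace n, w p ^ q * parabolicCutoff R p ^ (k + 1) ≤
        K * (s + s ^ (-(q - 1)) *
          ∫ p in halfSpace n \ parabolicCore n R, w p ^ q * parabolicCutoff R p ^ (k + 1)) := by
  obtain ⟨ν, hν0, hν, hνq, l, hl⟩ := exists_damping_exponents hq
  obtain ⟨B, hB⟩ := exists_isCutoff_parabolicCutoff n
  have hC := cutoffConst_nonneg (d := n) (l := l) ha.bound_nonneg hν0.le
  have hB0 : 0 ≤ B := by simpa using (hB 1 one_pos).delta_nonneg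
  set C := cutoffConst n M ν l
  set V := 2 ^ (n + 1) * volume.real (Metric.ball (0 : Xn n) 1)
  have hV : 0 ≤ V := by positivity
  refine ⟨l + 1, C * B * (V + 1) / c, by positivity, fun R hR s hs => ?_⟩
  have hR0 : 0 < R := zero_lt_one.trans_le hR
  set T := ∫ p in halfSpace n \ parabolicCore n R, w p ^ q * parabolicCutoff R p ^ (l + 1 + 1)
  have hT : 0 ≤ T := setIntegral_nonneg
    ((measurableSet_halfSpace n).diff (measurableSet_parabolicCore n R)) fun p hp =>
      mul_nonneg (rpow_nonneg (hw.nonneg p hp.1) q) (pow_nonneg ((hB R hR0).nonneg p) _)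
  have hm : 0 < s * R ^ (-(2 / (q - 1))) := by positivity
  have hle := hw.setIntegral_rpow_mul_cutoff_le ha (hB R hR0) (measurableSet_parabolicCore n R)
    hc.le hν0 hν hνq hl hm
  rw [neg_sub, div_mul_eq_mul_div, le_div_iff₀' hc]
  refine hle.trans (le_trans ?_ (scaled_bound_le hC hB0 hV hR hs hq hn hT))
  gcongr
  exact measureReal_tsupport_parabolicCutoff_le hR0

theorem IsFujitaSupersolution.eqOn_zero (hw : IsFujitaSupersolution a c q w)
    (ha : IsBoundedDegenerateElliptic a M) (hc : 0 < c) (hq : 1 < q) (hn : n * (q - 1) ≤ 2) :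
    EqOn w 0 (halfSpace n) := by
  obtain ⟨k, K, hK, hest⟩ := hw.exists_tail_estimate ha hc hq hn
  obtain ⟨B, hB⟩ := exists_isCutoff_parabolicCutoff n
  have hq0 : 0 < q := one_pos.trans hq
  have hR (j : ℕ) : (1 : ℝ) ≤ j + 1 := le_add_of_nonneg_left j.cast_nonneg
  have hζ (j : ℕ) := hB (j + 1) (one_pos.trans_le (hR j))
  have hwq : ∀ᵐ p ∂volume.restrict (halfSpace n), 0 ≤ w p ^ q :=
    (ae_restrict_mem (measurableSet_halfSpace n)).mono fun p hp => rpow_nonneg (hw.nonneg p hp) q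
  have hzero : (fun p => w p ^ q) =ᵐ[volume.restrict (halfSpace n)] 0 := by
    refine ae_eq_zero_of_tail_estimate ((aecover_parabolicCore n).comp_tendsto
      (tendsto_atTop_add_const_right atTop 1 tendsto_natCast_atTop_atTop))
      (g := fun (j : ℕ) p => w p ^ q * parabolicCutoff (j + 1) p ^ (k + 1))
      (fun j => ((hζ j).integrable_mul_pow (hw.continuousOn_rpow hq0.le) k).restrict)
      (fun j => hwq.mono fun p hp => mul_nonneg hp (pow_nonneg ((hζ j).nonneg p) _))
      (fun j => hwq.mono fun p hp => mul_le_of_le_one_right hp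
        (pow_le_one₀ ((hζ j).nonneg p) ((hζ j).le_one p)))
      (fun j p hp => by simp only [(hζ j).eq_one p hp, one_pow, mul_one])
      (sub_pos.2 hq) hK fun j s hs => ?_
    rw [Function.comp_apply, Measure.restrict_restrict (measurableSet_parabolicCore n _).compl,
      inter_comm, ← sdiff_eq]
    exact hest _ (hR j) s hs
  intro p hp
  have := Measure.eqOn_open_of_ae_eq hzero (isOpen_halfSpace n) (hw.continuousOn_rpow hq0.le)
    continuousOn_const hp
  exact ((rpow_eq_zero (hw.nonneg p hp) hq0.ne').1 this)

end Fujita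

section Comparison

variable {n : ℕ} {a : Fin n → Fin n → Pt n → ℝ} {M q : ℝ} {u v w φ : Pt n → ℝ}

/-- The matrix field `p ↦ (a_{ij}(p))` with the coefficients `a i j` as entries. -/
def coeffMatrix (a : Fin n → Fin n → Pt n → ℝ) (p : Pt n) : Matrix (Fin n) (Fin n) ℝ :=
  Matrix.of fun i j => a i j p

theorem isBoundedDegenerateElliptic_coeffMatrix (hM : 0 ≤ M) (hmeas : ∀ i j, Measurable (a i j))
    (hsymm : ∀ i j, ∀ᵐ p ∂volume.restrict (halfSpace n), a i j p = a j i p)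
    (hform : ∀ᵐ p ∂volume.restrict (halfSpace n), ∀ ξ : Xn n,
      0 ≤ ∑ i, ∑ j, a i j p * ξ i * ξ j)
    (hbound : ∀ i j, ∀ᵐ p ∂volume.restrict (halfSpace n), |a i j p| ≤ M) :
    IsBoundedDegenerateElliptic (coeffMatrix a) M where
  bound_nonneg := hM
  aestronglyMeasurable i j := (hmeas i j).aestronglyMeasurable
  posSemidef := by
    filter_upwards [ae_all_iff.2 fun i => ae_all_iff.2 (hsymm i), hform] with p hp hξ
    refine .of_dotProduct_mulVec_nonneg (.ext fun i j => hp j i) fun x => ?_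
    refine (hξ (WithLp.toLp 2 x)).trans_eq (Finset.sum_congr rfl fun i _ => ?_)
    simp only [coeffMatrix, Matrix.mulVec, dotProduct, Matrix.of_apply, Finset.mul_sum,
      Pi.star_apply, star_trivial]
    exact Finset.sum_congr rfl fun j _ => by ring
  abs_le := ae_all_iff.2 fun i => ae_all_iff.2 (hbound i)

theorem sum_mul_pdX_mul_pdX_eq_dotProduct (a : Fin n → Fin n → Pt n → ℝ) (φ w : Pt n → ℝ)
    (p : Pt n) :
    ∑ i, ∑ j, a i j p * pdX φ i p * pdX w j p = coeffMatrix a p *ᵥ gradX w p ⬝ᵥ gradX φ p := by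
  simp only [dotProduct, Matrix.mulVec, Finset.sum_mul, coeffMatrix, Matrix.of_apply, gradX,
    mul_right_comm]

theorem IsBoundedDegenerateElliptic.integrable_weak_form
    (ha : IsBoundedDegenerateElliptic (coeffMatrix a) M) (hq : 1 ≤ q)
    (hw : ContDiffOn ℝ 1 w (halfSpace n)) (hφ : ContDiff ℝ 1 φ) (hc : HasCompactSupport φ)
    (hφS : tsupport φ ⊆ halfSpace n) :
    Integrable fun p => pdT w p * φ p + ∑ i, ∑ j, a i j p * pdX φ i p * pdX w j p -
      oddPow q (w p) * φ p := by
  have hS := measurableSet_halfSpace n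
  have hpow := (continuous_oddPow hq).comp_continuousOn hw.continuousOn
  simp only [sum_mul_pdX_mul_pdX_eq_dotProduct]
  exact (integrable_weak_pairing ((continuousOn_pdT hw).locallyIntegrableOn hS)
    (ha.locallyIntegrableOn_flux hw) hφ hc hφS).sub
    (integrable_mul_of_tsupport_subset (hpow.locallyIntegrableOn hS) hφ.continuous hc hφS)

theorem weak_form_sub_le (hq : 1 ≤ q) {p : Pt n} (hu : DifferentiableAt ℝ u p)
    (hv : DifferentiableAt ℝ v p) (hvu : v p ≤ u p) (hφ : 0 ≤ φ p) :
    (pdT u p * φ p + ∑ i, ∑ j, a i j p * pdX φ i p * pdX u j p - oddPow q (u p) * φ p) -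
        (pdT v p * φ p + ∑ i, ∑ j, a i j p * pdX φ i p * pdX v j p - oddPow q (v p) * φ p) ≤
      (pdT (u - v) p - 2 ^ (1 - q) * (u - v) p ^ q) * φ p +
        coeffMatrix a p *ᵥ gradX (u - v) p ⬝ᵥ gradX φ p := by
  have hpow := mul_le_mul_of_nonneg_right (le_oddPow_sub_oddPow hq hvu) hφ
  have htime : pdT (u - v) p = pdT u p - pdT v p := by simp [pdT, fderiv_sub hu hv]
  have hspace : gradX (u - v) p = gradX u p - gradX v p := by
    ext i; simp [gradX, pdX, fderiv_sub hu hv]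
  rw [sum_mul_pdX_mul_pdX_eq_dotProduct, sum_mul_pdX_mul_pdX_eq_dotProduct, htime, hspace,
    Matrix.mulVec_sub, sub_dotProduct, Pi.sub_apply]
  linarith

theorem WeakSolPair.isFujitaSupersolution_sub (h : WeakSolPair a q u v)
    (ha : IsBoundedDegenerateElliptic (coeffMatrix a) M) (hq : 1 ≤ q)
    (hu : ContDiffOn ℝ 1 u (halfSpace n)) (hv : ContDiffOn ℝ 1 v (halfSpace n))
    (hvu : ∀ p ∈ halfSpace n, v p ≤ u p) :
    IsFujitaSupersolution (coeffMatrix a) (2 ^ (1 - q)) q (u - v) := by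
  have hS := isOpen_halfSpace n
  have hw : ContDiffOn ℝ 1 (u - v) (halfSpace n) := hu.sub hv
  have hf : LocallyIntegrableOn (fun p => pdT (u - v) p - 2 ^ (1 - q) * (u - v) p ^ q)
      (halfSpace n) := by
    refine ContinuousOn.locallyIntegrableOn ?_ (measurableSet_halfSpace n)
    exact (continuousOn_pdT hw).sub (continuousOn_const.mul
      (hw.continuousOn.rpow_const fun _ _ => Or.inr (zero_le_one.trans hq)))
  refine ⟨hw, fun p hp => sub_nonneg.2 (hvu p hp),
    .of_smooth hf (ha.locallyIntegrableOn_flux hw) fun φ hφ hc hφS hφ0 => ?_⟩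
  have hφ1 : ContDiff ℝ 1 φ := hφ.of_le (by simp)
  have hiu := (ha.integrable_weak_form hq hu hφ1 hc hφS).restrict (s := halfSpace n)
  have hiv := (ha.integrable_weak_form hq hv hφ1 hc hφS).restrict (s := halfSpace n)
  have hnonneg := sub_nonneg.2 (h φ hφ hc hφS hφ0)
  rw [← integral_sub hiu hiv] at hnonneg
  refine hnonneg.trans (integral_mono_ae (hiu.sub hiv) (integrable_weak_pairing hf
    (ha.locallyIntegrableOn_flux hw) hφ1 hc hφS).restrict ?_)
  filter_upwards [ae_restrict_mem (measurableSet_halfSpace n)] with p hp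
  exact weak_form_sub_le hq ((hu.contDiffAt (hS.mem_nhds hp)).differentiableAt one_ne_zero)
    ((hv.contDiffAt (hS.mem_nhds hp)).differentiableAt one_ne_zero) (hvu p hp) (hφ0 p)

end Comparison

/-- the Liouville comparison principle for globally bounded
coefficients (Corollary 1), with the classical Fujita exponent `1 + 2/n`. -/
theorem liouville_comparison_bounded_coefficients
    (n : ℕ) (hn : 1 ≤ n) (q : ℝ)
    (hq1 : 1 < q) (hq2 : q ≤ 1 + 2 / n)
    (a : Fin n → Fin n → Pt n → ℝ) (A : Pt n → ℝ)
    (ha_meas : ∀ i j, Measurable (a i j))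
    (ha_locbdd : ∀ i j, ∀ K : Set (Pt n), IsCompact K → K ⊆ halfSpace n →
      ∃ M, ∀ p ∈ K, |a i j p| ≤ M)
    (ha_symm : ∀ i j, ∀ᵐ p ∂(volume.restrict (halfSpace n)), a i j p = a j i p)
    (hA_meas : Measurable A)
    (hA_nonneg : ∀ p, 0 ≤ A p)
    (hA_locbdd : ∀ K : Set (Pt n), IsCompact K → K ⊆ halfSpace n →
      ∃ M, ∀ p ∈ K, A p ≤ M)
    (hform : ∀ᵐ p ∂(volume.restrict (halfSpace n)), ∀ ξ : Xn n,
      0 ≤ ∑ i, ∑ j, a i j p * ξ i * ξ j ∧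
      ∑ i, ∑ j, a i j p * ξ i * ξ j ≤ A p * ‖ξ‖ ^ 2)
    -- the coefficients are globally bounded in `S`
    (ha_bdd : ∃ M : ℝ, 0 < M ∧ ∀ i j,
      ∀ᵐ p ∂(volume.restrict (halfSpace n)), |a i j p| ≤ M)
    (u v : Pt n → ℝ)
    (hu : ContDiffOn ℝ 1 u (halfSpace n)) (hv : ContDiffOn ℝ 1 v (halfSpace n))
    (hu_int : LocallyIntegrableOn (fun p => |u p| ^ q) (halfSpace n) volume)
    (hv_int : LocallyIntegrableOn (fun p => |v p| ^ q) (halfSpace n) volume)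
    (hsol : WeakSolPair a q u v)
    (huv : ∀ p ∈ halfSpace n, v p ≤ u p) :
    ∀ p ∈ halfSpace n, u p = v p := by
  obtain ⟨M, hM, hbound⟩ := ha_bdd
  have ha : IsBoundedDegenerateElliptic (coeffMatrix a) M :=
    isBoundedDegenerateElliptic_coeffMatrix hM.le ha_meas ha_symm
      (hform.mono fun _ h ξ => (h ξ).1) hbound
  have hw : IsFujitaSupersolution (coeffMatrix a) (2 ^ (1 - q)) q (u - v) :=
    hsol.isFujitaSupersolution_sub ha hq1.le hu hv huv
  have hn0 : (0 : ℝ) < n := Nat.cast_pos.2 hn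
  have hfujita : n * (q - 1) ≤ 2 := (le_div_iff₀' hn0).1 (sub_le_iff_le_add'.2 hq2)
  exact fun p hp => sub_eq_zero.1 (hw.eqOn_zero ha (by positivity) hq1 hfujita hp)
end
end

section
/- Let n ≥ 1 and 1 < q ≤ 1 + 2/n. If u : (0,∞) × ℝⁿ → ℝ is a non-negative function which is C¹ in t and C² in x and satisfies the pointwise differential inequality ∂u/∂t ≥ Δu + u^q at every point of (0,∞) × ℝⁿ (where Δ is the Laplacian in the x-variables), then u is identically zero on (0,∞) × ℝⁿ. In particular, there is no non-trivial non-negative entire classical solution of u_t = Δu + u^q on (0,∞) × ℝⁿ for 1 < q ≤ 1 + 2/n (Fujita's theorem). -/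
open Real

noncomputable section

/-- Second partial derivative `∂²w/∂x_i²` of `w : ℝⁿ → ℝ` at `x`. -/
noncomputable def secondPartial {n : ℕ} (w : Xn n → ℝ) (i : Fin n) (x : Xn n) : ℝ :=
  fderiv ℝ (fun y => fderiv ℝ w y (EuclideanSpace.single i 1)) x
    (EuclideanSpace.single i 1)

/-- The spatial Laplacian `Δw = Σ_i ∂²w/∂x_i²`. -/
noncomputable def laplacian {n : ℕ} (w : Xn n → ℝ) (x : Xn n) : ℝ :=
  ∑ i, secondPartial w i x

open Set Filter Topology MeasureTheory Function

/-!
Write `q = k + 1` and let `K_t` be the heat kernel. If `u` is non-trivial, then `c K_{t+a} ≤ u` for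
large `t`, for some mass `c > 0` and some shift `a`. Inserting `u` into the flow of `y' = -y^{k+1}`
removes the source term: the result is a supersolution of the heat equation which is at most
`(k t)^{-1/k}` and still dominates `c K_{t+a}`. Hence `t (c K_t(0))^k` stays bounded. As it grows
like `t^{1 - nk/2}`, this is impossible when `n k < 2`, and it bounds the masses when `n k = 2`. In
the latter case the part `(c K_{t+a})^{k+1}` of the source, acting over a time span comparable to
`t + a`, raises the mass `c` to `c + κ c^{k+1}` with `κ > 0` independent of `c` and of the time, by
scale invariance. So the supremum of the masses cannot be finite.

The comparison principle needs lower semicontinuity of `u` jointly in `(t, x)`, forward in time,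
which separate regularity in `t` and `x` does not give at once. A Baire category argument on the
closure of the set of bad times supplies it.
-/

/-! ### Second derivatives and the Laplacian -/

/-- `f` is differentiable near `x`, and its derivative has derivative `f''` at `x`. -/
def HasSecondDerivAt (f : ℝ → ℝ) (f'' x : ℝ) : Prop :=
  (∀ᶠ y in 𝓝 x, DifferentiableAt ℝ f y) ∧ HasDerivAt (deriv f) f'' x

namespace HasSecondDerivAt

variable {f g : ℝ → ℝ} {f'' g'' x : ℝ}

theorem of_hasDerivAt {f' : ℝ → ℝ} (hf : ∀ᶠ y in 𝓝 x, HasDerivAt f (f' y) y)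
    (hf' : HasDerivAt f' f'' x) : HasSecondDerivAt f f'' x :=
  ⟨hf.mono fun _ h => h.differentiableAt,
    hf'.congr_of_eventuallyEq (hf.mono fun _ h => h.deriv)⟩

theorem hasDerivAt (hf : HasSecondDerivAt f f'' x) : HasDerivAt f (deriv f x) x :=
  hf.1.self_of_nhds.hasDerivAt

theorem add (hf : HasSecondDerivAt f f'' x) (hg : HasSecondDerivAt g g'' x) :
    HasSecondDerivAt (fun y => f y + g y) (f'' + g'') x :=
  of_hasDerivAt (by filter_upwards [hf.1, hg.1] with y hfy hgy
                      using hfy.hasDerivAt.add hgy.hasDerivAt) (hf.2.add hg.2)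

theorem const_mul (c : ℝ) (hf : HasSecondDerivAt f f'' x) :
    HasSecondDerivAt (fun y => c * f y) (c * f'') x :=
  of_hasDerivAt (hf.1.mono fun _ h => h.hasDerivAt.const_mul c) (hf.2.const_mul c)

theorem sub_const (hf : HasSecondDerivAt f f'' x) (c : ℝ) :
    HasSecondDerivAt (fun y => f y - c) f'' x :=
  of_hasDerivAt (hf.1.mono fun _ h => h.hasDerivAt.sub_const c) hf.2

theorem sub (hf : HasSecondDerivAt f f'' x) (hg : HasSecondDerivAt g g'' x) :
    HasSecondDerivAt (fun y => f y - g y) (f'' - g'') x := by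
  simpa [sub_eq_add_neg] using hf.add (hg.const_mul (-1))

theorem comp {H : ℝ → ℝ} {H'' : ℝ} (hH : HasSecondDerivAt H H'' (f x))
    (hf : HasSecondDerivAt f f'' x) :
    HasSecondDerivAt (fun y => H (f y)) (H'' * deriv f x ^ 2 + deriv H (f x) * f'') x := by
  refine of_hasDerivAt (f' := fun y => deriv H (f y) * deriv f y) ?_ ?_
  · filter_upwards [hf.1, hf.hasDerivAt.continuousAt.eventually hH.1] with y hfy hHy
      using hHy.hasDerivAt.comp y hfy.hasDerivAt
  · have hcomp : HasDerivAt (fun y => deriv H (f y)) (H'' * deriv f x) x :=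
      hH.2.comp x hf.hasDerivAt
    exact (hcomp.mul hf.2).congr_deriv (by ring)

theorem nonneg_of_isLocalMin (hf : HasSecondDerivAt f f'' x) (hmin : IsLocalMin f x) :
    0 ≤ f'' := by
  by_contra! hneg
  have hmax : IsLocalMax f x :=
    isLocalMax_of_deriv_deriv_neg (hf.2.deriv ▸ hneg) hmin.deriv_eq_zero
      hf.hasDerivAt.continuousAt
  have hconst : f =ᶠ[𝓝 x] fun _ => f x := by
    filter_upwards [hmin, hmax] with y h h' using le_antisymm h' h
  have hderiv : deriv f =ᶠ[𝓝 x] fun _ => 0 := by simpa using hconst.deriv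
  have hzero : f'' = 0 := by simpa [hf.2.deriv] using hderiv.deriv_eq
  exact hneg.ne hzero

end HasSecondDerivAt

/-- `w` has second derivatives at `x` along all coordinate lines, and their sum is `L`. -/
def HasLaplacianAt {n : ℕ} (w : Xn n → ℝ) (x : Xn n) (L : ℝ) : Prop :=
  ∃ D : Fin n → ℝ,
    (∀ i, HasSecondDerivAt (fun r : ℝ => w (x + r • EuclideanSpace.single i 1)) (D i) 0) ∧
      ∑ i, D i = L

namespace HasLaplacianAt

variable {n : ℕ} {v w : Xn n → ℝ} {x : Xn n} {L M : ℝ}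

theorem add (hv : HasLaplacianAt v x L) (hw : HasLaplacianAt w x M) :
    HasLaplacianAt (fun y => v y + w y) x (L + M) := by
  obtain ⟨D, hD, rfl⟩ := hv
  obtain ⟨E, hE, rfl⟩ := hw
  exact ⟨fun i => D i + E i, fun i => (hD i).add (hE i), Finset.sum_add_distrib⟩

theorem const_mul (c : ℝ) (hw : HasLaplacianAt w x L) :
    HasLaplacianAt (fun y => c * w y) x (c * L) := by
  obtain ⟨D, hD, rfl⟩ := hw
  exact ⟨fun i => c * D i, fun i => (hD i).const_mul c, (Finset.mul_sum ..).symm⟩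

theorem sub_const (hw : HasLaplacianAt w x L) (c : ℝ) :
    HasLaplacianAt (fun y => w y - c) x L := by
  obtain ⟨D, hD, rfl⟩ := hw
  exact ⟨D, fun i => (hD i).sub_const c, rfl⟩

theorem exists_comp_le {H : ℝ → ℝ} {H'' : ℝ} (hw : HasLaplacianAt w x L)
    (hH : HasSecondDerivAt H H'' (w x)) (hH'' : H'' ≤ 0) :
    ∃ L', HasLaplacianAt (fun y => H (w y)) x L' ∧ L' ≤ deriv H (w x) * L := by
  obtain ⟨D, hD, rfl⟩ := hw
  refine ⟨_, ⟨_, fun i => HasSecondDerivAt.comp (by simpa using hH) (hD i), rfl⟩, ?_⟩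
  rw [Finset.mul_sum]
  refine Finset.sum_le_sum fun i _ => ?_
  simpa using mul_nonpos_of_nonpos_of_nonneg hH'' (sq_nonneg _)

theorem le_of_isLocalMin (hv : HasLaplacianAt v x L) (hw : HasLaplacianAt w x M)
    (hmin : IsLocalMin (fun y => v y - w y) x) : M ≤ L := by
  obtain ⟨D, hD, rfl⟩ := hv
  obtain ⟨E, hE, rfl⟩ := hw
  refine Finset.sum_le_sum fun i _ => sub_nonneg.1 <|
    ((hD i).sub (hE i)).nonneg_of_isLocalMin ?_
  have hline : Tendsto (fun r : ℝ => x + r • (EuclideanSpace.single i 1 : Xn n)) (𝓝 0) (𝓝 x) :=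
    Continuous.tendsto' (by fun_prop) _ _ (by simp)
  simpa [IsLocalMin, IsMinFilter] using hline.eventually hmin

theorem of_contDiff (hw : ContDiff ℝ 2 w) (x : Xn n) :
    HasLaplacianAt w x (laplacian w x) := by
  refine ⟨fun i => secondPartial w i x, fun i => ?_, rfl⟩
  set e : Xn n := EuclideanSpace.single i 1
  have hline (r : ℝ) : HasDerivAt (fun r : ℝ => x + r • e) e r := by
    simpa using ((hasDerivAt_id r).smul_const e).const_add x
  have hfderiv : Differentiable ℝ (fun y => fderiv ℝ w y e) :=
    ((hw.fderiv_right (m := 1) (by norm_num)).differentiable (by norm_num)).clm_apply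
      (differentiable_const _)
  refine .of_hasDerivAt (f' := fun r => fderiv ℝ w (x + r • e) e) (.of_forall fun r => ?_) ?_
  · exact (hw.differentiable (by norm_num) _).hasFDerivAt.comp_hasDerivAt r (hline r)
  · have hx : HasFDerivAt (fun y => fderiv ℝ w y e)
        (fderiv ℝ (fun y => fderiv ℝ w y e) x) (x + (0 : ℝ) • e) := by
      simpa using (hfderiv x).hasFDerivAt
    exact hx.comp_hasDerivAt 0 (hline 0)

end HasLaplacianAt

/-! ### Comparison on compact sets -/

/-- Lower semicontinuity of `u` at `(t, x)` in both variables jointly, tested against times `≥ t`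
only. -/
def FutureLSCAt {n : ℕ} (u : ℝ → Xn n → ℝ) (t : ℝ) (x : Xn n) : Prop :=
  LowerSemicontinuousWithinAt (uncurry u) (Ici t ×ˢ univ) (t, x)

/-- A non-negative function on `(0, ∞) × ℝⁿ` with `∂u/∂t ≥ Δu + f`, differentiable in time, and in
space `C¹` and twice differentiable along coordinate lines. No joint regularity in `(t, x)` is
required. -/
structure IsSupersolution {n : ℕ} (f u : ℝ → Xn n → ℝ) : Prop where
  nonneg : ∀ t, 0 < t → ∀ x, 0 ≤ u t x
  differentiableAt : ∀ t, 0 < t → ∀ x, DifferentiableAt ℝ (fun s => u s x) t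
  contDiff : ∀ t, 0 < t → ContDiff ℝ 1 (u t)
  exists_laplacian : ∀ t, 0 < t → ∀ x, ∃ L, HasLaplacianAt (u t) x L ∧
    L + f t x ≤ deriv (fun s => u s x) t

/-- `∂w/∂t ≤ Δw + f` at the single point `(t, x)`. -/
def IsSubsolutionAt {n : ℕ} (f w : ℝ → Xn n → ℝ) (t : ℝ) (x : Xn n) : Prop :=
  ∃ w' L, HasDerivAt (fun s => w s x) w' t ∧ HasLaplacianAt (w t) x L ∧ w' ≤ L + f t x

theorem IsSubsolutionAt.sub_const {n : ℕ} {f w : ℝ → Xn n → ℝ} {t : ℝ} {x : Xn n}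
    (hw : IsSubsolutionAt f w t x) (c : ℝ) : IsSubsolutionAt f (fun s y => w s y - c) t x := by
  obtain ⟨w', L, hw', hL, hle⟩ := hw
  exact ⟨w', L, hw'.sub_const c, hL.sub_const c, hle⟩

theorem eventually_lt_left_of_hasDerivAt_pos {g : ℝ → ℝ} {g' a : ℝ} (hg : HasDerivAt g g' a)
    (hpos : 0 < g') : ∀ᶠ t in 𝓝[<] a, g t < g a := by
  have hslope := (hasDerivWithinAt_iff_tendsto_slope' self_notMem_Iio).1
    (hg.hasDerivWithinAt (s := Iio a))
  filter_upwards [hslope.eventually_const_lt hpos, self_mem_nhdsWithin] with t hpos hta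
  rw [slope_comm] at hpos
  exact (slope_pos_iff_of_le (le_of_lt hta)).1 hpos

theorem eventually_forall_lt_of_futureLSCAt {n : ℕ} {u v : ℝ → Xn n → ℝ} {K : Set (Xn n)}
    {a T : ℝ} (hK : IsCompact K) (haT : a ≤ T) (hu : ∀ x ∈ K, FutureLSCAt u a x)
    (hv : ContinuousOn (uncurry v) (Icc a T ×ˢ K)) (hlt : ∀ x ∈ K, v a x < u a x) :
    ∀ᶠ t in 𝓝[Icc a T] a, ∀ x ∈ K, v t x < u t x := by
  suffices ∀ᶠ t in 𝓝 a, ∀ x ∈ K, t ∈ Icc a T → x ∈ K → v t x < u t x by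
    filter_upwards [nhdsWithin_le_nhds this, self_mem_nhdsWithin] with t ht htI x hx
      using ht x hx htI hx
  refine hK.eventually_forall_of_forall_eventually fun x hx => ?_
  obtain ⟨m, hvm, hmu⟩ := exists_between (hlt x hx)
  have hv' := eventually_nhdsWithin_iff.1
    ((hv (a, x) ⟨left_mem_Icc.2 haT, hx⟩).eventually_lt_const hvm)
  filter_upwards [hv', eventually_nhdsWithin_iff.1 (hu x hx m hmu)] with z hzv hzu hzt hzx
    using (hzv ⟨hzt, hzx⟩).trans (hzu ⟨hzt.1, mem_univ _⟩)

theorem exists_isLeast_contact_time {n : ℕ} {u v : ℝ → Xn n → ℝ} {K : Set (Xn n)} {s T : ℝ}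
    (hK : IsCompact K) (hu : ∀ t ∈ Icc s T, ∀ x ∈ K, FutureLSCAt u t x)
    (hv : ContinuousOn (uncurry v) (Icc s T ×ˢ K))
    (hne : ∃ t ∈ Icc s T, ∃ x ∈ K, u t x ≤ v t x) :
    ∃ a, IsLeast {t | t ∈ Icc s T ∧ ∃ x ∈ K, u t x ≤ v t x} a := by
  set A := {t | t ∈ Icc s T ∧ ∃ x ∈ K, u t x ≤ v t x}
  have hAs : ∀ t ∈ A, s ≤ t := fun t ht => ht.1.1
  have hglb : IsGLB A (sInf A) := isGLB_csInf hne ⟨s, hAs⟩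
  obtain ⟨t₀, ht₀⟩ := hne
  have ha : sInf A ∈ Icc s T := ⟨hglb.2 hAs, (hglb.1 ht₀).trans ht₀.1.2⟩
  refine ⟨sInf A, ⟨ha, ?_⟩, hglb.1⟩
  by_contra! hlt
  have hev := eventually_nhdsWithin_iff.1 <| eventually_forall_lt_of_futureLSCAt hK ha.2
    (hu _ ha) (hv.mono (prod_mono (Icc_subset_Icc_left ha.1) subset_rfl)) hlt
  obtain ⟨t, ⟨htA, x, hx, hle⟩, hat, ht⟩ := ((hglb.frequently_mem ⟨t₀, ht₀⟩).and_eventually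
    (Eventually.and (self_mem_nhdsWithin (s := Ici (sInf A))) (nhdsWithin_le_nhds hev))).exists
  exact (ht ⟨hat, htA.2⟩ x hx).not_ge hle

namespace IsSupersolution

variable {n : ℕ} {f u w : ℝ → Xn n → ℝ}

theorem of_contDiff (hu : ∀ t, 0 < t → ∀ x, 0 ≤ u t x)
    (hut : ∀ x, ContDiffOn ℝ 1 (fun t => u t x) (Ioi 0))
    (hux : ∀ t, 0 < t → ContDiff ℝ 2 (u t))
    (hle : ∀ t, 0 < t → ∀ x, laplacian (u t) x + f t x ≤ deriv (fun s => u s x) t) :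
    IsSupersolution f u where
  nonneg := hu
  differentiableAt _ ht x :=
    ((hut x).differentiableOn one_ne_zero).differentiableAt (Ioi_mem_nhds ht)
  contDiff t ht := (hux t ht).of_le one_le_two
  exists_laplacian t ht x := ⟨_, .of_contDiff (hux t ht) x, hle t ht x⟩

theorem mono {g : ℝ → Xn n → ℝ} (hu : IsSupersolution f u)
    (hgf : ∀ t, 0 < t → ∀ x, g t x ≤ f t x) : IsSupersolution g u where
  __ := hu
  exists_laplacian t ht x := by
    obtain ⟨L, hL, hle⟩ := hu.exists_laplacian t ht x
    exact ⟨L, hL, (by linarith [hgf t ht x])⟩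

theorem continuous (hu : IsSupersolution f u) {t : ℝ} (ht : 0 < t) : Continuous (u t) :=
  (hu.contDiff t ht).continuous

theorem eventually_lt_left_of_isLocalMin (hu : IsSupersolution f u) {t c : ℝ} {x : Xn n}
    (ht : 0 < t) (hc : 0 < c) (hw : IsSubsolutionAt f w t x)
    (hmin : IsLocalMin (fun y => u t y - w t y) x) :
    ∀ᶠ s in 𝓝[<] t, u s x - w s x + c * s < u t x - w t x + c * t := by
  obtain ⟨w', M, hw', hM, hw_le⟩ := hw
  obtain ⟨L, hL, hu_le⟩ := hu.exists_laplacian t ht x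
  have hML : M ≤ L := hL.le_of_isLocalMin hM hmin
  refine eventually_lt_left_of_hasDerivAt_pos
    (((hu.differentiableAt t ht x).hasDerivAt.sub hw').add ((hasDerivAt_id t).const_mul c)) ?_
  linarith

theorem le_of_isCompact (hu : IsSupersolution f u) {K : Set (Xn n)} (hK : IsCompact K)
    {s T : ℝ} (hs : 0 < s) (hlsc : ∀ t ∈ Icc s T, ∀ x ∈ K, FutureLSCAt u t x)
    (hwc : ContinuousOn (uncurry w) (Icc s T ×ˢ K)) (hws : ∀ x ∈ K, w s x ≤ u s x)
    (hfr : ∀ t ∈ Icc s T, ∀ x ∈ frontier K, w t x ≤ u t x)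
    (hw : ∀ t ∈ Ioc s T, ∀ x ∈ interior K, IsSubsolutionAt f w t x) :
    ∀ t ∈ Icc s T, ∀ x ∈ K, w t x ≤ u t x := by
  intro T' hT' x' hx'
  by_contra! hlt
  have hpos {t : ℝ} (ht : t ∈ Icc s T) : 0 < t := hs.trans_le ht.1
  obtain ⟨c, hc, hcT⟩ : ∃ c > 0, u T' x' = w T' x' - c * T' :=
    ⟨(w T' x' - u T' x') / T', div_pos (sub_pos.2 hlt) (hpos hT'), by
      rw [div_mul_cancel₀ _ (hpos hT').ne', sub_sub_cancel]⟩
  obtain ⟨a, ⟨ha, y, hy, hya⟩, hleast⟩ := exists_isLeast_contact_time hK hlsc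
    (v := fun t x => w t x - c * t) (hwc.sub (by fun_prop)) ⟨T', hT', x', hx', hcT.le⟩
  obtain ⟨x, hxK, hmin⟩ := hK.exists_isMinOn (f := fun x => u a x - w a x) ⟨x', hx'⟩
    ((hu.continuous (hpos ha)).continuousOn.sub
      (hwc.comp (f := fun x => (a, x)) (by fun_prop) fun x hx => ⟨ha, hx⟩))
  have hxa : u a x - w a x + c * a ≤ 0 := by
    have hxy : u a x - w a x ≤ u a y - w a y := hmin hy
    linarith
  have hca : 0 < c * a := mul_pos hc (hpos ha)
  have hxint : x ∈ interior K := by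
    by_contra hxint
    linarith [hfr a ha x ⟨subset_closure hxK, hxint⟩]
  have hsa : s < a := ha.1.lt_of_ne fun h => by linarith [h ▸ hws x hxK]
  obtain ⟨t, ⟨hlt, hta⟩, hst⟩ := ((hu.eventually_lt_left_of_isLocalMin (hpos ha) hc
    (hw a ⟨hsa, ha.2⟩ x hxint) (hmin.isLocalMin (mem_interior_iff_mem_nhds.1 hxint))).and
    (self_mem_nhdsWithin (s := Iio a)) |>.and (nhdsWithin_le_nhds (lt_mem_nhds hsa))).exists
  exact hta.not_ge (hleast ⟨⟨hst.le, hta.le.trans ha.2⟩, x, hxK, by linarith⟩)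

end IsSupersolution

/-! ### The heat kernel -/

/-- The heat kernel `(4πt)^(-n/2) exp (-‖x‖² / 4t)` on `ℝⁿ`, meaningful for `t > 0`. -/
def heatKernel {n : ℕ} (t : ℝ) (x : Xn n) : ℝ :=
  (4 * π * t) ^ (-(n : ℝ) / 2) * exp (-‖x‖ ^ 2 / (4 * t))

/-- The common value of `∂ₜ` and `Δ` of the heat kernel at `(t, x)`. -/
def heatKernelDeriv {n : ℕ} (t : ℝ) (x : Xn n) : ℝ :=
  heatKernel t x * (‖x‖ ^ 2 / (4 * t ^ 2) - n / (2 * t))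

section HeatKernel

variable {n : ℕ} {s t : ℝ}

theorem heatKernel_pos (ht : 0 < t) (x : Xn n) : 0 < heatKernel t x := by
  unfold heatKernel; positivity

theorem heatKernel_zero_right (t : ℝ) :
    heatKernel t (0 : Xn n) = (4 * π * t) ^ (-(n : ℝ) / 2) := by
  simp [heatKernel]

theorem heatKernel_eq (t : ℝ) (x : Xn n) :
    heatKernel t x = heatKernel t (0 : Xn n) * exp (-‖x‖ ^ 2 / (4 * t)) := by
  rw [heatKernel_zero_right, heatKernel]

theorem heatKernel_le_zero_right (ht : 0 < t) (x : Xn n) :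
    heatKernel t x ≤ heatKernel t (0 : Xn n) := by
  rw [heatKernel_eq t x]
  refine mul_le_of_le_one_right (heatKernel_pos ht _).le (exp_le_one_iff.2 ?_)
  exact div_nonpos_of_nonpos_of_nonneg (by simp) (by positivity)

theorem heatKernel_zero_right_anti (hs : 0 < s) (hst : s ≤ t) :
    heatKernel t (0 : Xn n) ≤ heatKernel s (0 : Xn n) := by
  simp only [heatKernel_zero_right]
  exact rpow_le_rpow_of_nonpos (by positivity) (by gcongr)
    (div_nonpos_of_nonpos_of_nonneg (by simp) (by norm_num))

theorem heatKernel_mul_rpow_le {q : ℝ} (hs : 0 < s) (ht : 0 < t) (hqst : q * s ≤ t) (x : Xn n) :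
    heatKernel t (0 : Xn n) ^ q * heatKernel s x ≤
      heatKernel s (0 : Xn n) * heatKernel t x ^ q := by
  have hexp : exp (-‖x‖ ^ 2 / (4 * s)) ≤ exp (-‖x‖ ^ 2 / (4 * t)) ^ q := by
    rw [← exp_mul, exp_le_exp, neg_div, neg_div, neg_mul, neg_le_neg_iff, div_mul_eq_mul_div,
      div_le_div_iff₀ (by positivity) (by positivity)]
    nlinarith [mul_le_mul_of_nonneg_left hqst (sq_nonneg ‖x‖)]
  have h0 := heatKernel_pos (n := n) hs 0
  have h1 := heatKernel_pos (n := n) ht 0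
  rw [heatKernel_eq s x, heatKernel_eq t x, mul_rpow h1.le (exp_pos _).le, mul_left_comm]
  gcongr

theorem heatKernel_mul_le (hs : 0 < s) (hst : s ≤ t) (x : Xn n) :
    heatKernel t (0 : Xn n) * heatKernel s x ≤ heatKernel s (0 : Xn n) * heatKernel t x := by
  simpa using heatKernel_mul_rpow_le (q := 1) hs (hs.trans_le hst) (by simpa using hst) x

theorem continuous_heatKernel (t : ℝ) : Continuous (heatKernel t : Xn n → ℝ) := by
  unfold heatKernel; fun_prop

theorem continuousOn_heatKernel :
    ContinuousOn (uncurry heatKernel : ℝ × Xn n → ℝ) (Ioi 0 ×ˢ univ) := by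
  have h0 : ∀ p ∈ (Ioi 0 ×ˢ univ : Set (ℝ × Xn n)), p.1 ≠ 0 := fun p hp => ne_of_gt hp.1
  refine ContinuousOn.mul (.rpow_const (by fun_prop) fun p hp => Or.inl ?_)
    (.rexp (.div (by fun_prop) (by fun_prop) fun p hp => ?_))
  · simp [h0 p hp, pi_ne_zero]
  · simp [h0 p hp]

theorem continuousOn_heatKernelDeriv :
    ContinuousOn (uncurry heatKernelDeriv : ℝ × Xn n → ℝ) (Ioi 0 ×ˢ univ) := by
  have h0 : ∀ p ∈ (Ioi 0 ×ˢ univ : Set (ℝ × Xn n)), p.1 ≠ 0 := fun p hp => ne_of_gt hp.1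
  refine continuousOn_heatKernel.mul (.sub ?_ ?_) <;>
    exact .div (by fun_prop) (by fun_prop) fun p hp => by simp [h0 p hp]

theorem hasDerivAt_heatKernel (ht : 0 < t) (x : Xn n) :
    HasDerivAt (fun t => heatKernel t x) (heatKernelDeriv t x) t := by
  have hpow : HasDerivAt (fun t : ℝ => (4 * π * t) ^ (-(n : ℝ) / 2))
      (4 * π * (-(n : ℝ) / 2) * (4 * π * t) ^ (-(n : ℝ) / 2 - 1)) t := by
    simpa using ((hasDerivAt_id t).const_mul (4 * π)).rpow_const (p := -(n : ℝ) / 2)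
      (Or.inl (by simp [ht.ne', pi_ne_zero]))
  have hquot : HasDerivAt (fun t : ℝ => -‖x‖ ^ 2 / (4 * t)) (‖x‖ ^ 2 / (4 * t ^ 2)) t := by
    refine ((hasDerivAt_const t (-‖x‖ ^ 2)).fun_div ((hasDerivAt_id t).const_mul (4 : ℝ))
      (by simp [ht.ne'])).congr_deriv ?_
    simp only [id_eq]
    field_simp
    ring
  refine (hpow.mul hquot.exp).congr_deriv ?_
  rw [heatKernelDeriv, heatKernel, rpow_sub_one (by positivity)]
  field_simp
  ring

theorem norm_add_smul_single_sq (x : Xn n) (i : Fin n) (r : ℝ) :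
    ‖x + r • EuclideanSpace.single i 1‖ ^ 2 = ‖x‖ ^ 2 + 2 * r * x i + r ^ 2 := by
  rw [norm_add_sq_real, inner_smul_right, norm_smul, mul_pow, EuclideanSpace.inner_single_right]
  simp [mul_assoc]

theorem hasDerivAt_heatKernel_line (ht : t ≠ 0) (x : Xn n) (i : Fin n) (r : ℝ) :
    HasDerivAt (fun r : ℝ => heatKernel t (x + r • EuclideanSpace.single i 1))
      (heatKernel t (x + r • EuclideanSpace.single i 1) * (-(x i + r) / (2 * t))) r := by
  have hnorm : HasDerivAt (fun r : ℝ => -‖x + r • (EuclideanSpace.single i 1 : Xn n)‖ ^ 2 / (4 * t))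
      (-(x i + r) / (2 * t)) r := by
    simp only [norm_add_smul_single_sq]
    refine ((((((hasDerivAt_id r).const_mul 2).mul_const (x i)).const_add (‖x‖ ^ 2)).fun_add
      ((hasDerivAt_id r).fun_pow 2)).fun_neg.div_const (4 * t)).congr_deriv ?_
    simp only [id_eq]
    field_simp
    ring
  refine (hnorm.exp.const_mul ((4 * π * t) ^ (-(n : ℝ) / 2))).congr_deriv ?_
  rw [heatKernel, mul_assoc (_ ^ _)]

theorem hasDerivAt_deriv_heatKernel_line (ht : t ≠ 0) (x : Xn n) (i : Fin n) (r : ℝ) :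
    HasDerivAt
      (fun r : ℝ => heatKernel t (x + r • EuclideanSpace.single i 1) * (-(x i + r) / (2 * t)))
      (heatKernel t (x + r • EuclideanSpace.single i 1) *
        ((x i + r) ^ 2 / (4 * t ^ 2) - 1 / (2 * t))) r := by
  have hlin : HasDerivAt (fun r : ℝ => -(x i + r) / (2 * t)) (-1 / (2 * t)) r :=
    (((hasDerivAt_id r).const_add (x i)).fun_neg).div_const (2 * t)
  refine ((hasDerivAt_heatKernel_line ht x i r).mul hlin).congr_deriv ?_
  field_simp
  ring

theorem sum_heatKernel_second_deriv (ht : t ≠ 0) (x : Xn n) :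
    ∑ i, heatKernel t x * (x i ^ 2 / (4 * t ^ 2) - 1 / (2 * t)) = heatKernelDeriv t x := by
  rw [← Finset.mul_sum, Finset.sum_sub_distrib, ← Finset.sum_div, heatKernelDeriv,
    EuclideanSpace.norm_sq_eq]
  simp only [norm_eq_abs, sq_abs, Finset.sum_const, Finset.card_univ, Fintype.card_fin,
    nsmul_eq_mul]
  field_simp

theorem hasLaplacianAt_heatKernel (ht : t ≠ 0) (x : Xn n) :
    HasLaplacianAt (heatKernel t) x (heatKernelDeriv t x) :=
  ⟨fun i => heatKernel t x * (x i ^ 2 / (4 * t ^ 2) - 1 / (2 * t)),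
    fun i => .of_hasDerivAt (.of_forall fun r => hasDerivAt_heatKernel_line ht x i r)
      (by simpa using hasDerivAt_deriv_heatKernel_line ht x i 0),
    sum_heatKernel_second_deriv ht x⟩

theorem heatKernel_one_eq (x : Xn n) :
    heatKernel 1 x = (4 * π) ^ (-(n : ℝ) / 2) * exp (-(1 / 4) * ‖x‖ ^ 2) := by
  rw [heatKernel]; ring_nf

theorem integral_heatKernel_one : ∫ x : Xn n, heatKernel 1 x = 1 := by
  simp only [heatKernel_one_eq]
  rw [integral_const_mul, GaussianFourier.integral_rexp_neg_mul_sq_norm (by norm_num),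
    finrank_euclideanSpace_fin, neg_div, rpow_neg (by positivity), div_div_eq_mul_div, div_one,
    mul_comm π, inv_mul_cancel₀ (by positivity)]

theorem integrable_heatKernel_one : Integrable (heatKernel 1 : Xn n → ℝ) :=
  .of_integral_ne_zero (by simp [integral_heatKernel_one])

theorem integrable_heatKernel_one_mul_norm :
    Integrable (fun x : Xn n => heatKernel 1 x * ‖x‖) := by
  have hint : Integrable (fun x : Xn n => exp (-(1 / 8) * ‖x‖ ^ 2)) :=
    .of_integral_ne_zero (by
      rw [GaussianFourier.integral_rexp_neg_mul_sq_norm (by norm_num)]; positivity)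
  refine (hint.const_mul ((4 * π) ^ (-(n : ℝ) / 2) * exp 2)).mono'
    ((continuous_heatKernel 1).mul continuous_norm).aestronglyMeasurable (.of_forall fun x => ?_)
  have hnorm : ‖x‖ ≤ exp (2 + 1 / 8 * ‖x‖ ^ 2) := by
    refine le_trans ?_ (add_one_le_exp _)
    nlinarith [sq_nonneg (‖x‖ - 4)]
  rw [norm_of_nonneg (mul_nonneg (heatKernel_pos one_pos x).le (norm_nonneg x)),
    heatKernel_one_eq, mul_assoc, mul_assoc]
  refine mul_le_mul_of_nonneg_left ?_ (by positivity)
  calc exp (-(1 / 4) * ‖x‖ ^ 2) * ‖x‖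
      ≤ exp (-(1 / 4) * ‖x‖ ^ 2) * exp (2 + 1 / 8 * ‖x‖ ^ 2) := by gcongr
    _ = exp 2 * exp (-(1 / 8) * ‖x‖ ^ 2) := by rw [← exp_add, ← exp_add]; ring_nf

theorem heatKernel_one_eq_smul (ht : 0 < t) (x : Xn n) :
    heatKernel 1 x = √t ^ n * heatKernel t (√t • x) := by
  have hpow : √t ^ n * t ^ (-(n : ℝ) / 2) = 1 := by
    rw [sqrt_eq_rpow, ← rpow_natCast, ← rpow_mul ht.le, ← rpow_add ht]
    ring_nf
    exact rpow_zero t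
  have hnorm : -‖√t • x‖ ^ 2 / (4 * t) = -(1 / 4) * ‖x‖ ^ 2 := by
    rw [norm_smul, norm_of_nonneg (sqrt_nonneg t), mul_pow, sq_sqrt ht.le]
    field_simp
  rw [heatKernel_one_eq, heatKernel, hnorm, mul_rpow (by positivity) ht.le]
  linear_combination
    -((4 * π) ^ (-(n : ℝ) / 2) * exp (-(1 / 4) * ‖x‖ ^ 2)) * hpow

theorem eventually_heatKernel_le (hs : 0 < s) {η : ℝ} (hη : 0 < η) (T : ℝ) :
    ∀ᶠ x : Xn n in Bornology.cobounded _, ∀ t ∈ Icc s T, heatKernel t x ≤ η := by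
  rcases lt_or_ge T s with hTs | hsT
  · simp [Icc_eq_empty_of_lt hTs]
  have hT : 0 < 4 * T := by linarith
  have hlim : Tendsto (fun x : Xn n => heatKernel s (0 : Xn n) * exp (-(‖x‖ ^ 2 / (4 * T))))
      (Bornology.cobounded _) (𝓝 0) := by
    simpa using (tendsto_exp_neg_atTop_nhds_zero.comp
      (((tendsto_pow_atTop two_ne_zero).comp tendsto_norm_cobounded_atTop).atTop_div_const
        hT)).const_mul (heatKernel s (0 : Xn n))
  filter_upwards [hlim.eventually_lt_const hη] with x hx t ht
  have ht0 : 0 < t := hs.trans_le ht.1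
  refine le_trans ?_ hx.le
  rw [heatKernel_eq t x, neg_div]
  have := heatKernel_pos hs (0 : Xn n)
  gcongr
  · exact heatKernel_zero_right_anti hs ht.1
  · exact ht.2

end HeatKernel

/-! ### The heat flow -/

theorem hasDerivAt_integral_mul_of_hasCompactSupport {X : Type*} [TopologicalSpace X]
    [MeasurableSpace X] [OpensMeasurableSpace X] {μ : Measure X} [IsFiniteMeasureOnCompacts μ]
    {F F' : ℝ → X → ℝ} {g : X → ℝ} {r₀ : ℝ} {U : Set ℝ} (hU : U ∈ 𝓝 r₀) (hg : Continuous g)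
    (hgs : HasCompactSupport g) (hF : ContinuousOn (uncurry F) (U ×ˢ univ))
    (hF' : ContinuousOn (uncurry F') (U ×ˢ univ))
    (hderiv : ∀ r ∈ U, ∀ y, HasDerivAt (fun r => F r y) (F' r y) r) :
    HasDerivAt (fun r => ∫ y, F r y * g y ∂μ) (∫ y, F' r₀ y * g y ∂μ) r₀ := by
  obtain ⟨V, hV, hVU, hVc⟩ := local_compact_nhds hU
  obtain ⟨C, hC⟩ := (hVc.prod hgs).exists_bound_of_continuousOn
    (hF'.mono (prod_mono hVU (subset_univ _)))
  have hcont {H : ℝ → X → ℝ} (hH : ContinuousOn (uncurry H) (U ×ˢ univ)) {r : ℝ} (hr : r ∈ U) :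
      Continuous fun y => H r y * g y :=
    (hH.comp_continuous (f := fun y => (r, y)) (by fun_prop) fun _ => ⟨hr, mem_univ _⟩).mul hg
  have hr₀ : r₀ ∈ U := mem_of_mem_nhds hU
  refine (hasDerivAt_integral_of_dominated_loc_of_deriv_le (F := fun r y => F r y * g y)
    (F' := fun r y => F' r y * g y) (bound := fun y => C * |g y|) hV ?_ ?_ ?_ ?_ ?_ ?_).2
  · filter_upwards [hU] with r hr
    exact (hcont hF hr).aestronglyMeasurable
  · exact (hcont hF hr₀).integrable_of_hasCompactSupport hgs.mul_left
  · exact (hcont hF' hr₀).aestronglyMeasurable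
  · refine .of_forall fun y r hr => ?_
    by_cases hy : y ∈ tsupport g
    · rw [norm_mul, norm_eq_abs (g y)]
      exact mul_le_mul_of_nonneg_right (hC (r, y) ⟨hr, hy⟩) (abs_nonneg _)
    · simp [image_eq_zero_of_notMem_tsupport hy]
  · exact (hg.abs.integrable_of_hasCompactSupport hgs.abs).const_mul C
  · exact .of_forall fun y r hr => (hderiv r (hVU hr) y).mul_const _

/-- First absolute moment of the heat kernel at time `1`. -/
def heatMoment (n : ℕ) : ℝ := ∫ x : Xn n, heatKernel 1 x * ‖x‖

theorem heatMoment_nonneg (n : ℕ) : 0 ≤ heatMoment n :=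
  integral_nonneg fun x => mul_nonneg (heatKernel_pos one_pos x).le (norm_nonneg x)

/-- The heat semigroup `e^{tΔ} g`, in the rescaled form that makes sense down to `t = 0`. -/
def heatFlow {n : ℕ} (g : Xn n → ℝ) (t : ℝ) (x : Xn n) : ℝ :=
  ∫ z, heatKernel 1 z * g (x - √t • z)

section HeatFlow

variable {n : ℕ} {g : Xn n → ℝ} {t : ℝ}

theorem heatFlow_zero (g : Xn n → ℝ) (x : Xn n) : heatFlow g 0 x = g x := by
  simp [heatFlow, integral_mul_const, integral_heatKernel_one]

theorem heatFlow_eq_integral (g : Xn n → ℝ) (ht : 0 < t) (x : Xn n) :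
    heatFlow g t x = ∫ y, heatKernel t (x - y) * g y := by
  have hscale := Measure.integral_comp_smul_of_nonneg (volume : Measure (Xn n))
    (fun y => heatKernel t y * g (x - y)) (√t) (hR := sqrt_nonneg t)
  calc heatFlow g t x
      = √t ^ n * ∫ z, heatKernel t (√t • z) * g (x - √t • z) := by
        rw [heatFlow, ← integral_const_mul]
        exact integral_congr_ae (.of_forall fun z => by
          simp only [heatKernel_one_eq_smul ht z, mul_assoc])
    _ = ∫ y, heatKernel t y * g (x - y) := by
        rw [hscale, finrank_euclideanSpace_fin, smul_eq_mul,
          mul_inv_cancel_left₀ (pow_ne_zero _ (sqrt_pos.2 ht).ne')]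
    _ = ∫ y, heatKernel t (x - y) * g y := by
        rw [← integral_sub_left_eq_self (fun y => heatKernel t y * g (x - y)) volume x]
        simp

theorem heatFlow_neg (g : Xn n → ℝ) (t : ℝ) (x : Xn n) :
    heatFlow (fun y => -g y) t x = -heatFlow g t x := by
  simp [heatFlow, integral_neg]

theorem hasDerivAt_heatFlow (hg : Continuous g) (hgs : HasCompactSupport g) (ht : 0 < t)
    (x : Xn n) :
    HasDerivAt (fun t => heatFlow g t x) (∫ y, heatKernelDeriv t (x - y) * g y) t := by
  have hcont {K : ℝ → Xn n → ℝ} (hK : ContinuousOn (uncurry K) (Ioi 0 ×ˢ univ)) :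
      ContinuousOn (uncurry fun t y => K t (x - y)) (Ioi 0 ×ˢ univ) :=
    hK.comp (f := fun p : ℝ × Xn n => (p.1, x - p.2)) (by fun_prop) fun p hp => ⟨hp.1, mem_univ _⟩
  have hflow : (fun t => heatFlow g t x) =ᶠ[𝓝 t] fun t => ∫ y, heatKernel t (x - y) * g y :=
    (lt_mem_nhds ht).mono fun r hr => heatFlow_eq_integral g hr x
  have hderiv := hasDerivAt_integral_mul_of_hasCompactSupport (μ := volume) (Ioi_mem_nhds ht)
    hg hgs (hcont continuousOn_heatKernel) (hcont continuousOn_heatKernelDeriv)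
    fun r hr y => hasDerivAt_heatKernel hr (x - y)
  exact hderiv.congr_of_eventuallyEq hflow

theorem hasSecondDerivAt_heatFlow_line (hg : Continuous g) (hgs : HasCompactSupport g)
    (ht : 0 < t) (x : Xn n) (i : Fin n) :
    HasSecondDerivAt (fun r : ℝ => heatFlow g t (x + r • EuclideanSpace.single i 1))
      (∫ y, heatKernel t (x - y) * ((x - y) i ^ 2 / (4 * t ^ 2) - 1 / (2 * t)) * g y) 0 := by
  let F₀ (r : ℝ) (y : Xn n) := heatKernel t ((x - y) + r • EuclideanSpace.single i 1)
  let F₁ (r : ℝ) (y : Xn n) := F₀ r y * (-((x - y) i + r) / (2 * t))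
  let F₂ (r : ℝ) (y : Xn n) := F₀ r y * (((x - y) i + r) ^ 2 / (4 * t ^ 2) - 1 / (2 * t))
  have hF₀ : Continuous (uncurry F₀) := (continuous_heatKernel t).comp (by fun_prop)
  have hF₁ : Continuous (uncurry F₁) := hF₀.mul (by fun_prop)
  have hF₂ : Continuous (uncurry F₂) := hF₀.mul (by fun_prop)
  have hflow (r : ℝ) : heatFlow g t (x + r • EuclideanSpace.single i 1) = ∫ y, F₀ r y * g y := by
    simp only [heatFlow_eq_integral g ht, add_sub_right_comm, F₀]
  simp only [hflow]
  refine .of_hasDerivAt (f' := fun r => ∫ y, F₁ r y * g y) (.of_forall fun r => ?_) ?_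
  · exact hasDerivAt_integral_mul_of_hasCompactSupport (F := F₀) (F' := F₁) univ_mem hg hgs
      hF₀.continuousOn hF₁.continuousOn fun r _ y => hasDerivAt_heatKernel_line ht.ne' (x - y) i r
  · simpa [F₀, F₂] using hasDerivAt_integral_mul_of_hasCompactSupport (F := F₁) (F' := F₂)
      (μ := volume) (r₀ := 0) univ_mem hg hgs hF₁.continuousOn hF₂.continuousOn
      fun r _ y => hasDerivAt_deriv_heatKernel_line ht.ne' (x - y) i r

theorem hasLaplacianAt_heatFlow (hg : Continuous g) (hgs : HasCompactSupport g) (ht : 0 < t)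
    (x : Xn n) :
    HasLaplacianAt (heatFlow g t) x (∫ y, heatKernelDeriv t (x - y) * g y) := by
  refine ⟨_, hasSecondDerivAt_heatFlow_line hg hgs ht x, ?_⟩
  rw [← integral_finsetSum]
  · simp only [← Finset.sum_mul, sum_heatKernel_second_deriv ht.ne']
  · intro i _
    have hK : Continuous fun y : Xn n => heatKernel t (x - y) :=
      (continuous_heatKernel t).comp (by fun_prop)
    exact ((hK.mul (by fun_prop)).mul hg).integrable_of_hasCompactSupport hgs.mul_left

theorem isSubsolutionAt_heatFlow (hg : Continuous g) (hgs : HasCompactSupport g) {s : ℝ}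
    (hst : s < t) (x : Xn n) : IsSubsolutionAt 0 (fun t => heatFlow g (t - s)) t x :=
  ⟨_, _, (hasDerivAt_heatFlow hg hgs (sub_pos.2 hst) x).comp_sub_const t s,
    hasLaplacianAt_heatFlow hg hgs (sub_pos.2 hst) x, by simp⟩

theorem integrable_heatKernel_one_mul (hg : Continuous g) (hgs : HasCompactSupport g) (t : ℝ)
    (x : Xn n) : Integrable fun z => heatKernel 1 z * g (x - √t • z) := by
  obtain ⟨M, hM⟩ := hgs.exists_bound_of_continuous hg
  exact integrable_heatKernel_one.mul_bdd
    (hg.comp (by fun_prop)).aestronglyMeasurable (.of_forall fun z => hM _)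

theorem continuous_heatFlow (hg : Continuous g) (hgs : HasCompactSupport g) :
    Continuous (uncurry (heatFlow g)) := by
  obtain ⟨M, hM⟩ := hgs.exists_bound_of_continuous hg
  refine continuous_of_dominated (bound := fun z => heatKernel 1 z * M)
    (fun p => (integrable_heatKernel_one_mul hg hgs p.1 p.2).aestronglyMeasurable)
    (fun p => .of_forall fun z => ?_) (integrable_heatKernel_one.mul_const M)
    (.of_forall fun z => ?_)
  · rw [norm_mul, norm_of_nonneg (heatKernel_pos one_pos z).le]
    exact mul_le_mul_of_nonneg_left (hM _) (heatKernel_pos one_pos z).le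
  · exact continuous_const.mul (hg.comp (by fun_prop))

theorem heatFlow_mono {h : Xn n → ℝ} (hg : Continuous g) (hgs : HasCompactSupport g)
    (hh : Continuous h) (hhs : HasCompactSupport h) (hgh : ∀ y, g y ≤ h y) (t : ℝ) (x : Xn n) :
    heatFlow g t x ≤ heatFlow h t x :=
  integral_mono (integrable_heatKernel_one_mul hg hgs t x)
    (integrable_heatKernel_one_mul hh hhs t x)
    fun _ => mul_le_mul_of_nonneg_left (hgh _) (heatKernel_pos one_pos _).le

theorem tendsto_heatFlow_of_dominated {ι : Type*} {l : Filter ι} [l.IsCountablyGenerated]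
    {G : ι → Xn n → ℝ} {τ : ι → ℝ} {b : Xn n → ℝ} (ht : 0 < t) (hτ : Tendsto τ l (𝓝 t))
    (hG : ∀ᶠ i in l, AEStronglyMeasurable (G i)) (hb : Integrable b)
    (hGb : ∀ᶠ i in l, ∀ y, ‖G i y‖ ≤ b y) (hlim : ∀ y, Tendsto (G · y) l (𝓝 (g y))) (x : Xn n) :
    Tendsto (fun i => heatFlow (G i) (τ i) x) l (𝓝 (heatFlow g t x)) := by
  have hτ' : ∀ᶠ i in l, t / 2 < τ i := hτ.eventually_const_lt (half_lt_self ht)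
  rw [heatFlow_eq_integral g ht]
  have hflow : ∀ᶠ i in l, ∫ y, heatKernel (τ i) (x - y) * G i y = heatFlow (G i) (τ i) x :=
    hτ'.mono fun i hi => (heatFlow_eq_integral _ ((half_pos ht).trans hi) x).symm
  refine Tendsto.congr' hflow (tendsto_integral_filter_of_dominated_convergence
    (fun y => heatKernel (t / 2) (0 : Xn n) * b y) ?_ ?_ (hb.const_mul _) ?_)
  · filter_upwards [hG] with i hi
    exact ((continuous_heatKernel _).comp (by fun_prop)).aestronglyMeasurable.mul hi
  · filter_upwards [hτ', hGb] with i hi hGi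
    have hi0 : 0 < τ i := (half_pos ht).trans hi
    refine .of_forall fun y => ?_
    rw [norm_mul, norm_of_nonneg (heatKernel_pos hi0 _).le]
    exact mul_le_mul ((heatKernel_le_zero_right hi0 _).trans
      (heatKernel_zero_right_anti (half_pos ht) hi.le)) (hGi y) (norm_nonneg _)
      (heatKernel_pos (half_pos ht) _).le
  · exact .of_forall fun y => ((hasDerivAt_heatKernel ht _).continuousAt.tendsto.comp hτ).mul
      (hlim y)

theorem heatFlow_le (hg : Continuous g) (hgs : HasCompactSupport g) (t : ℝ) {x : Xn n} {C A : ℝ}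
    (hle : ∀ y, g y ≤ C + A * ‖y - x‖) : heatFlow g t x ≤ C + A * √t * heatMoment n := by
  have hC := (integrable_heatKernel_one (n := n)).mul_const C
  have hA := (integrable_heatKernel_one_mul_norm (n := n)).mul_const (A * √t)
  calc heatFlow g t x
      ≤ ∫ z : Xn n, (heatKernel 1 z * C + heatKernel 1 z * ‖z‖ * (A * √t)) := by
        refine integral_mono (integrable_heatKernel_one_mul hg hgs t x) (hC.add hA) fun z => ?_
        have hz : g (x - √t • z) ≤ C + A * (√t * ‖z‖) := by
          simpa [norm_smul, abs_of_nonneg (sqrt_nonneg t)] using hle (x - √t • z)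
        linarith [mul_le_mul_of_nonneg_left hz (heatKernel_pos one_pos z).le]
    _ = C + A * √t * heatMoment n := by
        rw [integral_add hC hA, integral_mul_const, integral_mul_const, integral_heatKernel_one,
          heatMoment]
        ring

theorem le_heatFlow (hg : Continuous g) (hgs : HasCompactSupport g) (t : ℝ) {x : Xn n} {C A : ℝ}
    (hle : ∀ y, C - A * ‖y - x‖ ≤ g y) : C - A * √t * heatMoment n ≤ heatFlow g t x := by
  have hneg := heatFlow_le (g := fun y => -g y) (C := -C) (A := A) hg.neg hgs.neg t
    fun y => by linarith [hle y]
  rw [heatFlow_neg] at hneg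
  linarith

theorem heatFlow_le_of_far (hg : Continuous g) (hgs : HasCompactSupport g) (t : ℝ) {x : Xn n}
    {N δ : ℝ} (hN : 0 ≤ N) (hδ : 0 < δ) (hgN : ∀ y, g y ≤ N) (hfar : ∀ y, ‖y - x‖ < δ → g y ≤ 0) :
    heatFlow g t x ≤ N / δ * √t * heatMoment n := by
  refine (heatFlow_le (C := 0) (A := N / δ) hg hgs t fun y => ?_).trans_eq (zero_add _)
  rw [zero_add]
  rcases lt_or_ge ‖y - x‖ δ with hy | hy
  · exact (hfar y hy).trans (by positivity)
  · calc g y ≤ N / δ * δ := by rw [div_mul_cancel₀ _ hδ.ne']; exact hgN y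
      _ ≤ N / δ * ‖y - x‖ := by gcongr

end HeatFlow

/-! ### Lower semicontinuity of supersolutions -/

/-- The cone with apex `(x₀, h)` and slope `A`, truncated at height `0`; a Lipschitz test datum. -/
def cone {n : ℕ} (x₀ : Xn n) (h A : ℝ) (y : Xn n) : ℝ :=
  max 0 (h - A * ‖y - x₀‖)

section Cone

variable {n : ℕ} {x₀ : Xn n} {h A : ℝ}

theorem continuous_cone : Continuous (cone x₀ h A) := by
  unfold cone; fun_prop

theorem cone_nonneg (y : Xn n) : 0 ≤ cone x₀ h A y :=
  le_max_left _ _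

theorem cone_le (hh : 0 ≤ h) (hA : 0 ≤ A) (y : Xn n) : cone x₀ h A y ≤ h :=
  max_le hh (sub_le_self _ (by positivity))

theorem cone_eq_zero {y : Xn n} (hy : h ≤ A * ‖y - x₀‖) : cone x₀ h A y = 0 :=
  max_eq_left (by linarith)

theorem hasCompactSupport_cone (hA : 0 < A) : HasCompactSupport (cone x₀ h A) := by
  refine .intro (isCompact_closedBall x₀ (h / A)) fun y hy => cone_eq_zero ?_
  rw [Metric.mem_closedBall, dist_eq_norm, not_le, div_lt_iff₀' hA] at hy
  exact hy.le

theorem cone_le_of_lipschitzOnWith {f : Xn n → ℝ} {N : NNReal} {r : ℝ} (hf : ∀ y, 0 ≤ f y)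
    (hr : 0 < r) (hfN : LipschitzOnWith N f (Metric.closedBall x₀ r)) (hNA : N ≤ A)
    (hA : f x₀ ≤ A * r) (y : Xn n) : cone x₀ (f x₀) A y ≤ f y := by
  have hA0 : 0 ≤ A := N.coe_nonneg.trans hNA
  rcases le_total ‖y - x₀‖ r with hy | hy
  · refine max_le (hf y) ?_
    have hlip := hfN.le_add_mul (Metric.mem_closedBall_self hr.le)
      (mem_closedBall_iff_norm.2 hy)
    rw [dist_comm, dist_eq_norm] at hlip
    linarith [mul_le_mul_of_nonneg_right hNA (norm_nonneg (y - x₀))]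
  · rw [cone_eq_zero (hA.trans (by gcongr))]
    exact hf y

end Cone

/-- `f` is bounded above by `N` and `N`-Lipschitz on `K`. -/
def IsBoundedLipschitzOn {X : Type*} [PseudoEMetricSpace X] (N : NNReal) (K : Set X)
    (f : X → ℝ) : Prop :=
  LipschitzOnWith N f K ∧ ∀ x ∈ K, f x ≤ N

theorem IsBoundedLipschitzOn.mono {X : Type*} [PseudoEMetricSpace X] {N : NNReal} {K U : Set X}
    {f : X → ℝ} (hf : IsBoundedLipschitzOn N K f) (hUK : U ⊆ K) : IsBoundedLipschitzOn N U f :=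
  ⟨hf.1.mono hUK, fun x hx => hf.2 x (hUK hx)⟩

theorem exists_isBoundedLipschitzOn {E : Type*} [NormedAddCommGroup E] [NormedSpace ℝ E]
    {f : E → ℝ} {K : Set E} (hf : ContDiff ℝ 1 f) (hK : IsCompact K) :
    ∃ N : ℕ, IsBoundedLipschitzOn N K f := by
  obtain ⟨L, hL⟩ :=
    hf.locallyLipschitz.locallyLipschitzOn.exists_lipschitzOnWith_of_compact hK
  obtain ⟨C, hC⟩ := hK.bddAbove_image hf.continuous.continuousOn
  obtain ⟨N, hN⟩ := exists_nat_ge (max (L : ℝ) C)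
  refine ⟨N, hL.weaken ?_, fun x hx => ?_⟩
  · exact_mod_cast (le_max_left _ _).trans hN
  · exact_mod_cast (hC (mem_image_of_mem f hx)).trans ((le_max_right _ _).trans hN)

theorem isClosed_setOfPred_isBoundedLipschitzOn {S X : Type*} [TopologicalSpace S]
    [PseudoMetricSpace X] {v : S → X → ℝ} (hv : ∀ x, Continuous (v · x)) (N : NNReal) (K : Set X) :
    IsClosed {t | IsBoundedLipschitzOn N K (v t)} := by
  have hle : IsClosed {t | ∀ x ∈ K, v t x ≤ N} := by
    simp only [ofPred_forall]
    exact isClosed_biInter fun x _ => isClosed_le (hv x) continuous_const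
  have hlip : IsClosed {t | LipschitzOnWith N (v t) K} :=
    (isClosed_setOfPred_lipschitzOnWith N K).preimage (continuous_pi hv)
  exact hlip.inter hle

theorem exists_eventually_isBoundedLipschitzOn {E : Type*} [NormedAddCommGroup E]
    [NormedSpace ℝ E] {u : ℝ → E → ℝ} {S : Set ℝ} {K : Set E} (hS : IsClosed S)
    (hne : S.Nonempty) (hK : IsCompact K) (hut : ∀ x, ContinuousOn (u · x) S)
    (hux : ∀ t ∈ S, ContDiff ℝ 1 (u t)) :
    ∃ t₀ ∈ S, ∃ N : NNReal, ∀ᶠ t in 𝓝[S] t₀, IsBoundedLipschitzOn N K (u t) := by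
  have := hne.to_subtype
  have := hS.completeSpace_coe
  obtain ⟨N, ⟨t₀, ht₀⟩, hint⟩ := nonempty_interior_of_iUnion_of_closed
    (f := fun N : ℕ => {t : S | IsBoundedLipschitzOn N K (u t)})
    (fun N => isClosed_setOfPred_isBoundedLipschitzOn (fun x => (hut x).domRestrict) _ _)
    (eq_univ_iff_forall.2 fun t =>
      mem_iUnion.2 (exists_isBoundedLipschitzOn (hux t t.2) hK))
  exact ⟨t₀, ht₀, N,
    (eventually_nhds_subtype_iff S ⟨t₀, ht₀⟩ _).1 (mem_interior_iff_mem_nhds.1 hint)⟩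

theorem exists_last_mem {S : Set ℝ} {t T : ℝ} (hS : IsClosed S) (ht : t ∈ S) (htT : t ≤ T) :
    ∃ s ∈ S, s ∈ Icc t T ∧ ∀ a ∈ Ioc s T, a ∉ S := by
  obtain ⟨s, ⟨hsS, hs⟩, hmax⟩ := (isCompact_Icc.inter_left hS).exists_isGreatest
    ⟨t, ht, left_mem_Icc.2 htT⟩
  exact ⟨s, hsS, hs, fun a ha haS => ha.1.not_ge (hmax ⟨haS, hs.1.trans ha.1.le, ha.2⟩)⟩

namespace IsSupersolution

variable {n : ℕ} {u : ℝ → Xn n → ℝ} {g : Xn n → ℝ} {K : Set (Xn n)} {s T η : ℝ}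

theorem heatFlow_sub_le (hu : IsSupersolution 0 u) (hK : IsCompact K) (hs : 0 < s) (hsT : s ≤ T)
    (hlsc : ∀ t ∈ Icc s T, ∀ x ∈ K, FutureLSCAt u t x) (hg : Continuous g)
    (hgs : HasCompactSupport g) (hgu : ∀ x, g x ≤ u s x) (hη : 0 ≤ η)
    (hfr : ∀ t ∈ Icc 0 (T - s), ∀ x ∈ frontier K, heatFlow g t x ≤ η) {x : Xn n} (hx : x ∈ K) :
    heatFlow g (T - s) x - η ≤ u T x := by
  refine hu.le_of_isCompact (w := fun t x => heatFlow g (t - s) x - η) hK hs hlsc ?_ ?_ ?_ ?_ T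
    (right_mem_Icc.2 hsT) x hx
  · exact (((continuous_heatFlow hg hgs).comp (f := fun p : ℝ × Xn n => (p.1 - s, p.2))
      (by fun_prop)).sub continuous_const).continuousOn
  · intro y _
    rw [sub_self, heatFlow_zero]
    linarith [hgu y]
  · intro t ht y hy
    have htη := hfr (t - s) ⟨sub_nonneg.2 ht.1, sub_le_sub_right ht.2 s⟩ y hy
    linarith [hu.nonneg t (hs.trans_le ht.1) y]
  · exact fun t ht y _ => (isSubsolutionAt_heatFlow hg hgs ht.1 y).sub_const η

theorem heatFlow_sub_le_of_lsc_Ioc (hu : IsSupersolution 0 u) (hK : IsCompact K) (hs : 0 < s)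
    (hsT : s < T) (hlsc : ∀ t ∈ Ioc s T, ∀ x ∈ K, FutureLSCAt u t x) (hg : Continuous g)
    (hgs : HasCompactSupport g) (hg0 : ∀ x, 0 ≤ g x) (hgu : ∀ x, g x ≤ u s x) (hη : 0 ≤ η)
    (hfr : ∀ t ∈ Icc 0 (T - s), ∀ x ∈ frontier K, heatFlow g t x ≤ η) {x : Xn n} (hx : x ∈ K) :
    heatFlow g (T - s) x - η ≤ u T x := by
  let G (t : ℝ) (y : Xn n) : ℝ := min (u t y) (g y)
  have hGc {t : ℝ} (ht : s < t) : Continuous (G t) := (hu.continuous (hs.trans ht)).min hg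
  have hG0 {t : ℝ} (ht : s < t) (y : Xn n) : 0 ≤ G t y :=
    le_min (hu.nonneg t (hs.trans ht) y) (hg0 y)
  have hGs {t : ℝ} (ht : s < t) : HasCompactSupport (G t) :=
    hgs.mono fun y hy hgy => hy ((min_le_right _ _).trans_eq hgy |>.antisymm (hG0 ht y))
  have hlt : ∀ᶠ t in 𝓝[>] s, s < t := self_mem_nhdsWithin
  have hlim : Tendsto (fun t => heatFlow (G t) (T - t) x - η) (𝓝[>] s)
      (𝓝 (heatFlow g (T - s) x - η)) := by
    refine (tendsto_heatFlow_of_dominated (b := g) (sub_pos.2 hsT) ?_ ?_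
      (hg.integrable_of_hasCompactSupport hgs) ?_ (fun y => ?_) x).sub_const η
    · exact ((continuous_const.sub continuous_id).tendsto s).mono_left nhdsWithin_le_nhds
    · filter_upwards [hlt] with t ht using (hGc ht).aestronglyMeasurable
    · filter_upwards [hlt] with t ht y
      rw [norm_of_nonneg (hG0 ht y)]
      exact min_le_right _ _
    · have hus : Tendsto (u · y) (𝓝[>] s) (𝓝 (u s y)) :=
        (hu.differentiableAt s hs y).continuousAt.tendsto.mono_left nhdsWithin_le_nhds
      simpa [G, hgu y] using hus.min (tendsto_const_nhds (x := g y))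
  refine le_of_tendsto hlim ?_
  filter_upwards [Ioo_mem_nhdsGT hsT] with t ht
  refine hu.heatFlow_sub_le hK (hs.trans ht.1) ht.2.le
    (fun r hr => hlsc r ⟨ht.1.trans_le hr.1, hr.2⟩) (hGc ht.1) (hGs ht.1)
    (fun y => min_le_left _ _) hη (fun r hr y hy => ?_) hx
  exact (heatFlow_mono (hGc ht.1) (hGs ht.1) hg hgs (fun z => min_le_right _ _) r y).trans
    (hfr r ⟨hr.1, hr.2.trans (by linarith [ht.1])⟩ y hy)

/-- Compares `u` with the heat flow of a cone with apex `(x, u s x)` lying below `u s`. -/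
theorem exists_sub_le_of_isBoundedLipschitzOn (hu : IsSupersolution 0 u) (N : NNReal) {r ε : ℝ}
    (hr : 0 < r) (hε : 0 < ε) :
    ∃ δ > 0, ∀ s T x, 0 < s → s < T → T ≤ s + δ →
      (∀ t ∈ Ioc s T, ∀ y ∈ Metric.closedBall x (2 * r), FutureLSCAt u t y) →
      IsBoundedLipschitzOn N (Metric.closedBall x r) (u s) → u s x - ε ≤ u T x := by
  have hm := heatMoment_nonneg n
  obtain ⟨A, hA, hNA, hNrA⟩ : ∃ A : ℝ, 0 < A ∧ N ≤ A ∧ N / r ≤ A :=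
    ⟨N + N / r + 1, by positivity, by linarith [show (0 : ℝ) ≤ N / r by positivity],
      by linarith [N.coe_nonneg]⟩
  have hsmall : ∀ᶠ t in 𝓝[≥] (0 : ℝ), A * √t * heatMoment n < ε / 2 :=
    nhdsWithin_le_nhds <| (Continuous.tendsto' (by fun_prop) 0 0 (by simp) :
      Tendsto (fun t => A * √t * heatMoment n) (𝓝 0) (𝓝 0)).eventually_lt_const (half_pos hε)
  obtain ⟨δ, hδ, hδε⟩ := (mem_nhdsGE_iff_exists_Icc_subset).1 hsmall
  refine ⟨δ, hδ, fun s T x hs hsT hTδ hlsc hN => ?_⟩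
  have huN : u s x ≤ N := hN.2 x (Metric.mem_closedBall_self hr.le)
  have hux : 0 ≤ u s x := hu.nonneg s hs x
  have huA : u s x ≤ A * r := huN.trans ((div_le_iff₀ hr).1 hNrA)
  have hgc : Continuous (cone x (u s x) A) := continuous_cone
  have hgs : HasCompactSupport (cone x (u s x) A) := hasCompactSupport_cone hA
  have hfr : ∀ t ∈ Icc 0 (T - s), ∀ y ∈ frontier (Metric.closedBall x (2 * r)),
      heatFlow (cone x (u s x) A) t y ≤ ε / 2 := by
    intro t ht y hy
    have hyx : ‖y - x‖ = 2 * r :=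
      mem_sphere_iff_norm.1 (Metric.frontier_closedBall_subset_sphere hy)
    refine le_trans (heatFlow_le_of_far hgc hgs t N.coe_nonneg hr
      (fun z => (cone_le hux hA.le z).trans huN) fun z hz => (cone_eq_zero (huA.trans ?_)).le)
      (le_trans ?_ (hδε (show t ∈ Icc 0 δ from ⟨ht.1, by linarith [ht.2]⟩)).le)
    · gcongr
      linarith [norm_sub_le_norm_sub_add_norm_sub y z x, norm_sub_rev y z]
    · gcongr
  have hflow := hu.heatFlow_sub_le_of_lsc_Ioc (isCompact_closedBall x (2 * r)) hs hsT hlsc hgc hgs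
    cone_nonneg (cone_le_of_lipschitzOnWith (hu.nonneg s hs) hr hN.1 hNA huA) (half_pos hε).le hfr
    (Metric.mem_closedBall_self (by positivity))
  have hcone := le_heatFlow hgc hgs (T - s) (x := x) (C := u s x) (A := A)
    fun y => le_max_right _ _
  have hTs : A * √(T - s) * heatMoment n < ε / 2 :=
    hδε ⟨sub_nonneg.2 hsT.le, by linarith⟩
  linarith

theorem futureLSCAt_of_isBoundedLipschitzOn (hu : IsSupersolution 0 u) {S : Set ℝ}
    {U : Set (Xn n)} {N : NNReal} {t : ℝ} (hS : IsClosed S) (hU : IsOpen U) (ht : 0 < t)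
    (htS : t ∈ S) (hN : ∀ᶠ s in 𝓝[S] t, IsBoundedLipschitzOn N U (u s))
    (hlsc : ∀ s > t, s ∉ S → ∀ x ∈ U, FutureLSCAt u s x) {x : Xn n} (hx : x ∈ U) :
    FutureLSCAt u t x := by
  intro m (hm : m < u t x)
  obtain ⟨ε, hε, hεm⟩ : ∃ ε > 0, m + 3 * ε < u t x :=
    ⟨(u t x - m) / 4, div_pos (sub_pos.2 hm) four_pos, by linarith⟩
  obtain ⟨r, hr, hrU⟩ := Metric.isOpen_iff.1 hU x hx
  obtain ⟨δ, hδ, hdrop⟩ :=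
    hu.exists_sub_le_of_isBoundedLipschitzOn N (r := r / 4) (by positivity) hε
  have hux : ∀ᶠ s in 𝓝 t, u t x - ε < u s x :=
    (hu.differentiableAt t ht x).continuousAt.eventually_const_lt (by linarith)
  obtain ⟨δ', hδ', hnear⟩ := Metric.eventually_nhds_iff.1
    ((eventually_nhdsWithin_iff.1 hN).and hux)
  have hyN : ∀ᶠ y in 𝓝 x, N * ‖y - x‖ < ε :=
    (Continuous.tendsto' (by fun_prop) x 0 (by simp)).eventually_lt_const hε
  filter_upwards [self_mem_nhdsWithin, nhdsWithin_le_nhds (prod_mem_nhds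
    (gt_mem_nhds (show t < t + min δ δ' from lt_add_of_pos_right t (lt_min hδ hδ')))
    (hyN.and (Metric.ball_mem_nhds x (show 0 < r / 4 by positivity))))] with ⟨T, y⟩
    ⟨(hTt : t ≤ T), _⟩ ⟨(hTδ : T < t + min δ δ'), (hyN : N * ‖y - x‖ < ε), hyr⟩
  have hyU : Metric.closedBall y (2 * (r / 4)) ⊆ U := fun z hz =>
    hrU (by have := dist_triangle z y x; rw [Metric.mem_ball, Metric.mem_closedBall] at *; linarith)
  obtain ⟨s, hsS, hs, hgap⟩ := exists_last_mem hS htS hTt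
  obtain ⟨hsN, hus⟩ := hnear (y := s) (by
    rw [Real.dist_eq, abs_of_nonneg (sub_nonneg.2 hs.1)]
    linarith [hs.2, min_le_right δ δ', hTδ])
  have husy : u s x - ε < u s y := by
    have hlip := (hsN hsS).1.le_add_mul hx (hyU (Metric.mem_closedBall_self (by positivity)))
    rw [dist_comm, dist_eq_norm] at hlip
    linarith [hyN]
  rcases hs.2.eq_or_lt with rfl | hsT
  · exact show m < u s y by linarith
  have hTy := hdrop s T y (ht.trans_le hs.1) hsT (by linarith [hs.1, min_le_left δ δ', hTδ])
    (fun a ha z hz => hlsc a (hs.1.trans_lt ha.1) (hgap a ha) z (hyU hz))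
    ((hsN hsS).mono ((Metric.closedBall_subset_closedBall (by linarith)).trans hyU))
  exact show m < u T y by linarith

/-- The times with a failure of lower semicontinuity near `x` would form a set whose closure has,
by Baire, a time near which `u` is uniformly Lipschitz on it; no failure is possible there. -/
theorem futureLSCAt (hu : IsSupersolution 0 u) {t : ℝ} (ht : 0 < t) (x : Xn n) :
    FutureLSCAt u t x := by
  by_contra hx
  let B : Set ℝ := {s | t ≤ s ∧ ∃ y ∈ Metric.ball x 1, ¬FutureLSCAt u s y}
  have hBt : closure B ⊆ Ici t := closure_minimal (fun s hs => hs.1) isClosed_Ici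
  have hpos : ∀ s ∈ closure B, 0 < s := fun s hs => ht.trans_le (hBt hs)
  obtain ⟨t₀, ht₀, N, hN⟩ := exists_eventually_isBoundedLipschitzOn (u := u)
    (S := closure B) (K := Metric.closedBall x 1) isClosed_closure
    ⟨t, subset_closure ⟨le_rfl, x, Metric.mem_ball_self one_pos, hx⟩⟩ (isCompact_closedBall x 1)
    (fun y s hs => (hu.differentiableAt s (hpos s hs) y).continuousAt.continuousWithinAt)
    (fun s hs => hu.contDiff s (hpos s hs))
  obtain ⟨s, ⟨hts, y, hy, hsy⟩, hsN⟩ := ((mem_closure_iff_frequently.1 ht₀).and_eventually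
    (eventually_nhdsWithin_iff.1 (eventually_eventually_nhdsWithin.2 hN))).exists
  have hsB : s ∈ closure B := subset_closure ⟨hts, y, hy, hsy⟩
  refine hsy (hu.futureLSCAt_of_isBoundedLipschitzOn isClosed_closure Metric.isOpen_ball
    (hpos s hsB) hsB ((hsN hsB).mono fun r hr => hr.mono Metric.ball_subset_closedBall)
    (fun r hr hrB z hz => ?_) hy)
  by_contra hrz
  exact hrB (subset_closure ⟨hts.trans hr.le, z, hz, hrz⟩)

end IsSupersolution

/-! ### Comparison on the whole space -/

theorem eventually_heatFlow_le {n : ℕ} {g : Xn n → ℝ} (hg : Continuous g)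
    (hgs : HasCompactSupport g) {η : ℝ} (hη : 0 < η) (T : ℝ) :
    ∀ᶠ x in Bornology.cobounded _, ∀ t ∈ Icc 0 T, heatFlow g t x ≤ η := by
  obtain ⟨N, hN⟩ := hgs.exists_bound_of_continuous hg
  have hN0 : 0 ≤ N := (norm_nonneg _).trans (hN 0)
  obtain ⟨r, hr⟩ := hgs.isBounded.subset_closedBall 0
  set C := N * √T * heatMoment n
  have hC : 0 ≤ C := mul_nonneg (by positivity) (heatMoment_nonneg n)
  have hδ : 0 < C / η + 1 := by positivity
  filter_upwards [tendsto_norm_cobounded_atTop.eventually_ge_atTop (r + (C / η + 1))]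
    with x hx t ht
  have hfar : ∀ y, ‖y - x‖ < C / η + 1 → g y ≤ 0 := fun y hy => by
    refine (image_eq_zero_of_notMem_tsupport fun hyr => ?_).le
    have hyr : ‖y‖ ≤ r := by simpa using hr hyr
    linarith [norm_sub_norm_le x y, norm_sub_rev x y]
  have hm := heatMoment_nonneg n
  calc heatFlow g t x ≤ N / (C / η + 1) * √t * heatMoment n :=
        heatFlow_le_of_far hg hgs t hN0 hδ (fun y => (le_abs_self _).trans (hN y)) hfar
    _ ≤ N / (C / η + 1) * √T * heatMoment n := by gcongr; exact ht.2
    _ = C / (C / η + 1) := by ring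
    _ ≤ η := (div_le_iff₀ hδ).2 (by rw [mul_add, mul_div_cancel₀ _ hη.ne']; linarith)

theorem isSubsolutionAt_heatKernel_add {n : ℕ} {f : ℝ → Xn n → ℝ} {t a b l : ℝ} {x : Xn n}
    (hta : 0 < t + a) (htb : 0 < t + b) (c d s : ℝ) (hfl : l * heatKernel (t + b) x ≤ f t x) :
    IsSubsolutionAt f
      (fun t x => c * heatKernel (t + a) x + (d + l * (t - s)) * heatKernel (t + b) x) t x := by
  refine ⟨_, _, (((hasDerivAt_heatKernel hta x).comp_add_const t a).const_mul c).add
    (((((hasDerivAt_id t).sub_const s).const_mul l).const_add d).mul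
      ((hasDerivAt_heatKernel htb x).comp_add_const t b)),
    ((hasLaplacianAt_heatKernel hta.ne' x).const_mul c).add
      ((hasLaplacianAt_heatKernel htb.ne' x).const_mul (d + l * (t - s))), ?_⟩
  simp only [id_eq, mul_one]
  linarith

namespace IsSupersolution

variable {n : ℕ} {f u w : ℝ → Xn n → ℝ} {s T : ℝ}

theorem le_of_forall_eventually_le (hu : IsSupersolution f u)
    (hf : ∀ t, 0 < t → ∀ x, 0 ≤ f t x) (hs : 0 < s)
    (hwc : ContinuousOn (uncurry w) (Icc s T ×ˢ univ)) (hws : ∀ x, w s x ≤ u s x)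
    (hinf : ∀ η > 0, ∀ᶠ x in Bornology.cobounded _, ∀ t ∈ Icc s T, w t x ≤ η)
    (hw : ∀ t ∈ Ioc s T, ∀ x, IsSubsolutionAt f w t x) {t : ℝ} (ht : t ∈ Icc s T) (x : Xn n) :
    w t x ≤ u t x := by
  refine le_of_forall_pos_le_add fun η hη => ?_
  obtain ⟨r, -, hr⟩ := (hasBasis_cobounded_norm.eventually_iff).1 (hinf η hη)
  have hfr : ∀ t ∈ Icc s T, ∀ y ∈ frontier (Metric.closedBall 0 (max r ‖x‖)),
      w t y - η ≤ u t y := fun t ht y hy => by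
    have hyr : max r ‖x‖ = ‖y‖ := by
      simpa using (Metric.frontier_closedBall_subset_sphere hy).symm
    linarith [hr ((le_max_left r ‖x‖).trans hyr.le) t ht, hu.nonneg t (hs.trans_le ht.1) y]
  have hle := hu.le_of_isCompact (w := fun t y => w t y - η) (isCompact_closedBall 0 (max r ‖x‖)) hs
    (fun t ht y _ => (hu.mono hf).futureLSCAt (hs.trans_le ht.1) y)
    ((hwc.mono (prod_mono subset_rfl (subset_univ _))).sub continuousOn_const)
    (fun y _ => (sub_le_self _ hη.le).trans (hws y)) hfr
    (fun t ht y _ => (hw t ht y).sub_const η) t ht x (by simp)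
  linarith

theorem heatFlow_le (hu : IsSupersolution 0 u) {g : Xn n → ℝ} (hs : 0 < s) (hg : Continuous g)
    (hgs : HasCompactSupport g) (hgu : ∀ x, g x ≤ u s x) (hsT : s ≤ T) (x : Xn n) :
    heatFlow g (T - s) x ≤ u T x := by
  refine hu.le_of_forall_eventually_le (w := fun t => heatFlow g (t - s)) (fun _ _ _ => le_rfl) hs
    ?_ (by simpa [heatFlow_zero] using hgu) (fun η hη => ?_)
    (fun t ht => isSubsolutionAt_heatFlow hg hgs ht.1) (right_mem_Icc.2 hsT) x
  · exact ((continuous_heatFlow hg hgs).comp (f := fun p : ℝ × Xn n => (p.1 - s, p.2))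
      (by fun_prop)).continuousOn
  · filter_upwards [eventually_heatFlow_le hg hgs hη (T - s)] with y hy t ht
      using hy _ ⟨sub_nonneg.2 ht.1, sub_le_sub_right ht.2 s⟩

theorem heatKernel_add_le (hu : IsSupersolution f u) (hf : ∀ t, 0 < t → ∀ x, 0 ≤ f t x)
    (hs : 0 < s) {a b c d l : ℝ} (ha : 0 < s + a) (hb : 0 < s + b) (hc : 0 ≤ c) (hd : 0 ≤ d)
    (hl : 0 ≤ l) (hus : ∀ x, c * heatKernel (s + a) x + d * heatKernel (s + b) x ≤ u s x)
    (hfl : ∀ t ∈ Ioc s T, ∀ x, l * heatKernel (t + b) x ≤ f t x) (hsT : s ≤ T) (x : Xn n) :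
    c * heatKernel (T + a) x + (d + l * (T - s)) * heatKernel (T + b) x ≤ u T x := by
  refine hu.le_of_forall_eventually_le hf hs
    (w := fun t x => c * heatKernel (t + a) x + (d + l * (t - s)) * heatKernel (t + b) x)
    ?_ (by simpa using hus) (fun η hη => ?_) (fun t ht x => ?_) (right_mem_Icc.2 hsT) x
  · have hshift : ∀ r, 0 < s + r → ContinuousOn (fun p : ℝ × Xn n => heatKernel (p.1 + r) p.2)
        (Icc s T ×ˢ univ) := fun r hr => continuousOn_heatKernel.comp
      (f := fun p : ℝ × Xn n => (p.1 + r, p.2)) (by fun_prop)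
      fun p hp => ⟨(by linarith [hp.1.1] : 0 < p.1 + r), mem_univ _⟩
    exact ((hshift a ha).const_mul c).add (ContinuousOn.mul (by fun_prop) (hshift b hb))
  · have hC : 0 < c + (d + l * (T - s)) + 1 := by
      have := sub_nonneg.2 hsT
      positivity
    have hη' := div_pos hη hC
    filter_upwards [eventually_heatKernel_le ha hη' (T + a),
      eventually_heatKernel_le hb hη' (T + b)] with y hya hyb t ht
    have hts : 0 ≤ t - s := sub_nonneg.2 ht.1
    have hyb0 : 0 < heatKernel (t + b) y := heatKernel_pos (by linarith [ht.1]) y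
    have hya := hya (t + a) ⟨by linarith [ht.1], by linarith [ht.2]⟩
    have hyb := hyb (t + b) ⟨by linarith [ht.1], by linarith [ht.2]⟩
    calc c * heatKernel (t + a) y + (d + l * (t - s)) * heatKernel (t + b) y
        ≤ c * (η / (c + (d + l * (T - s)) + 1)) +
            (d + l * (T - s)) * (η / (c + (d + l * (T - s)) + 1)) := by
          have := sub_nonneg.2 hsT
          gcongr
          exact ht.2
      _ ≤ (c + (d + l * (T - s)) + 1) * (η / (c + (d + l * (T - s)) + 1)) := by linarith
      _ = η := mul_div_cancel₀ _ hC.ne'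
  · exact isSubsolutionAt_heatKernel_add (by linarith [ht.1]) (by linarith [ht.1]) c d s
      (hfl t ht x)

end IsSupersolution

/-! ### Heat kernels below a supersolution -/

theorem heatKernel_mul_heatKernel_half_le {n : ℕ} {t : ℝ} (ht : 0 < t) (x y : Xn n) :
    heatKernel t (0 : Xn n) * (heatKernel (t / 2) x * heatKernel (t / 2) y) ≤
      heatKernel (t / 2) (0 : Xn n) ^ 2 * heatKernel t (x - y) := by
  have hexp : exp (-‖x‖ ^ 2 / (4 * (t / 2))) * exp (-‖y‖ ^ 2 / (4 * (t / 2))) ≤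
      exp (-‖x - y‖ ^ 2 / (4 * t)) := by
    rw [← exp_add, exp_le_exp, ← add_div, div_le_div_iff₀ (by positivity) (by positivity)]
    have hsq : ‖x - y‖ ^ 2 ≤ 2 * ‖x‖ ^ 2 + 2 * ‖y‖ ^ 2 := by
      nlinarith [parallelogram_law_with_norm ℝ x y, sq_nonneg ‖x + y‖]
    nlinarith
  have h0 := heatKernel_pos (n := n) ht 0
  rw [heatKernel_eq (t / 2) x, heatKernel_eq (t / 2) y, heatKernel_eq t (x - y)]
  calc _ = heatKernel (t / 2) (0 : Xn n) ^ 2 * (heatKernel t (0 : Xn n) *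
        (exp (-‖x‖ ^ 2 / (4 * (t / 2))) * exp (-‖y‖ ^ 2 / (4 * (t / 2))))) := by ring
    _ ≤ _ := by gcongr

theorem exists_mul_heatKernel_le_heatFlow {n : ℕ} {g : Xn n → ℝ} (hg : Continuous g)
    (hgs : HasCompactSupport g) (hg0 : ∀ x, 0 ≤ g x) (hne : g ≠ 0) {t : ℝ} (ht : 0 < t) :
    ∃ c > 0, ∀ x, c * heatKernel (t / 2) x ≤ heatFlow g t x := by
  have hK0 := heatKernel_pos (n := n) ht 0
  have hK0' := heatKernel_pos (n := n) (half_pos ht) 0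
  have hcont : Continuous fun y => heatKernel (t / 2) y * g y := (continuous_heatKernel _).mul hg
  have hpos : 0 < ∫ y, heatKernel (t / 2) y * g y := by
    obtain ⟨x₀, hx₀⟩ := Function.ne_iff.1 hne
    exact hcont.integral_pos_of_hasCompactSupport_nonneg_nonzero hgs.mul_left
      (fun y => mul_nonneg (heatKernel_pos (half_pos ht) y).le (hg0 y))
      (mul_ne_zero (heatKernel_pos (half_pos ht) _).ne' hx₀)
  refine ⟨heatKernel t (0 : Xn n) / heatKernel (t / 2) (0 : Xn n) ^ 2 *
    ∫ y, heatKernel (t / 2) y * g y, mul_pos (div_pos hK0 (pow_pos hK0' 2)) hpos,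
    fun x => ?_⟩
  rw [heatFlow_eq_integral g ht, mul_right_comm, ← integral_const_mul]
  have hcont' : Continuous fun y => heatKernel t (x - y) * g y :=
    ((continuous_heatKernel t).comp (continuous_const.sub continuous_id)).mul hg
  have hint : Integrable fun y => heatKernel (t / 2) y * g y :=
    hcont.integrable_of_hasCompactSupport hgs.mul_left
  have hint' : Integrable fun y => heatKernel t (x - y) * g y :=
    hcont'.integrable_of_hasCompactSupport hgs.mul_left
  refine integral_mono (hint.const_mul _) hint' fun y => ?_
  have hK : heatKernel t (0 : Xn n) / heatKernel (t / 2) (0 : Xn n) ^ 2 * heatKernel (t / 2) x *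
      heatKernel (t / 2) y ≤ heatKernel t (x - y) := by
    rw [div_mul_eq_mul_div, div_mul_eq_mul_div, div_le_iff₀ (by positivity), mul_assoc,
      mul_comm (heatKernel t (x - y))]
    exact heatKernel_mul_heatKernel_half_le ht x y
  simpa only [mul_assoc] using mul_le_mul_of_nonneg_right hK (hg0 y)

/-- The masses `c > 0` of the heat kernels `c * K_{t + a}` that `u` dominates at all large times
`t`, for some time shift `a`. -/
def heatMasses {n : ℕ} (u : ℝ → Xn n → ℝ) : Set ℝ :=
  {c | 0 < c ∧ ∃ a, ∀ᶠ t in atTop, ∀ x, c * heatKernel (t + a) x ≤ u t x}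

namespace IsSupersolution

variable {n : ℕ} {u : ℝ → Xn n → ℝ}

theorem mem_heatMasses (hu : IsSupersolution 0 u) {c a s : ℝ} (hc : 0 < c) (hs : 0 < s)
    (ha : 0 < s + a) (hus : ∀ x, c * heatKernel (s + a) x ≤ u s x) : c ∈ heatMasses u := by
  refine ⟨hc, a, ?_⟩
  filter_upwards [eventually_ge_atTop s] with t hst x
  simpa using hu.heatKernel_add_le (fun _ _ _ => le_rfl) hs ha ha hc.le le_rfl le_rfl
    (by simpa using hus) (by simp) hst x

theorem heatMasses_nonempty (hu : IsSupersolution 0 u) {t : ℝ} (ht : 0 < t) {x : Xn n}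
    (hx : 0 < u t x) : (heatMasses u).Nonempty := by
  have hg : Continuous fun y => min (u t y) (cone x 1 1 y) := (hu.continuous ht).min continuous_cone
  have hgs : HasCompactSupport fun y => min (u t y) (cone x 1 1 y) :=
    (hasCompactSupport_cone one_pos).mono' <| by
      refine (Function.support_subset_iff'.2 fun y hy => ?_).trans (subset_tsupport _)
      rw [Function.notMem_support.1 hy, min_eq_right (hu.nonneg t ht y)]
  obtain ⟨c, hc, hcg⟩ := exists_mul_heatKernel_le_heatFlow hg hgs
    (fun y => le_min (hu.nonneg t ht y) (cone_nonneg y))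
    (Function.ne_iff.2 ⟨x, (lt_min hx (by simp [cone])).ne'⟩) one_pos
  have hflow := hu.heatFlow_le ht hg hgs (fun y => min_le_left _ _) (T := t + 1) (by linarith)
  refine ⟨c, hu.mem_heatMasses (s := t + 1) (a := 1 / 2 - (t + 1)) hc (by linarith) (by norm_num)
    fun y => ?_⟩
  simpa using (hcg y).trans (by simpa using hflow y)

end IsSupersolution

/-! ### Undoing the reaction -/

/-- The solution at time `t` of the equation `y' = -y ^ (k + 1)` with `y 0 = w > 0`. It undoes the
growth produced by the source `u ^ (k + 1)`. -/
def powerFlow (k t w : ℝ) : ℝ := (w ^ (-k) + k * t) ^ (-1 / k)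

section PowerFlow

variable {k t w : ℝ}

theorem powerFlow_base_pos (hk : 0 < k) (ht : 0 ≤ t) (hw : 0 < w) : 0 < w ^ (-k) + k * t := by
  have := rpow_pos_of_pos hw (-k)
  positivity

theorem powerFlow_nonneg (hk : 0 < k) (ht : 0 ≤ t) (hw : 0 < w) : 0 ≤ powerFlow k t w :=
  rpow_nonneg (powerFlow_base_pos hk ht hw).le _

theorem powerFlow_mono {v : ℝ} (hk : 0 < k) (ht : 0 ≤ t) (hv : 0 < v) (hvw : v ≤ w) :
    powerFlow k t v ≤ powerFlow k t w := by
  refine rpow_le_rpow_of_nonpos (powerFlow_base_pos hk ht (hv.trans_le hvw)) ?_ ?_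
  · gcongr ?_ + _
    exact rpow_le_rpow_of_nonpos hv hvw (neg_nonpos.2 hk.le)
  · exact div_nonpos_of_nonpos_of_nonneg (by norm_num) hk.le

theorem mul_powerFlow_rpow_le_one (hk : 0 < k) (ht : 0 ≤ t) (hw : 0 < w) :
    k * t * powerFlow k t w ^ k ≤ 1 := by
  have hp := powerFlow_base_pos hk ht hw
  rw [powerFlow, ← rpow_mul hp.le, div_mul_cancel₀ _ hk.ne', rpow_neg_one, ← div_eq_mul_inv,
    div_le_one hp]
  linarith [rpow_pos_of_pos hw (-k)]

theorem mul_le_powerFlow {M : ℝ} (hk : 0 < k) (ht : 0 ≤ t) (hw : 0 < w) (hwM : w ≤ M) :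
    (1 + k * t * M ^ k) ^ (-1 / k) * w ≤ powerFlow k t w := by
  have hbase : w ^ (-k) + k * t = (1 + k * t * w ^ k) * w ^ (-k) := by
    rw [add_mul, one_mul, mul_assoc, ← rpow_add hw]
    simp
  have := rpow_pos_of_pos hw k
  rw [powerFlow, hbase, mul_rpow (by positivity) (rpow_nonneg hw.le _), ← rpow_mul hw.le,
    neg_mul_comm, neg_div, neg_neg, mul_one_div_cancel hk.ne', rpow_one]
  gcongr ?_ * _
  exact rpow_le_rpow_of_nonpos (by positivity) (by gcongr) (neg_nonpos.2 (by positivity))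

theorem hasDerivAt_powerFlow_comp {v : ℝ → ℝ} {v' : ℝ} (hk : 0 < k) (ht : 0 ≤ t)
    (hv : HasDerivAt v v' t) (hvt : 0 < v t) :
    HasDerivAt (fun s => powerFlow k s (v s))
      ((v t ^ (-k) + k * t) ^ (-1 / k - 1) * (v t ^ (-k - 1) * v' - 1)) t := by
  refine (((hv.rpow_const (p := -k) (Or.inl hvt.ne')).add
    ((hasDerivAt_id t).const_mul k)).rpow_const (p := -1 / k)
    (Or.inl (powerFlow_base_pos hk ht hvt).ne')).congr_deriv ?_
  simp only [Pi.add_apply, id_eq]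
  field_simp
  ring

theorem hasDerivAt_powerFlow (hk : 0 < k) (ht : 0 ≤ t) (hw : 0 < w) :
    HasDerivAt (powerFlow k t) ((w ^ (-k) + k * t) ^ (-1 / k - 1) * w ^ (-k - 1)) w := by
  refine (((hasDerivAt_rpow_const (p := -k) (Or.inl hw.ne')).add_const (k * t)).rpow_const
    (p := -1 / k) (Or.inl (powerFlow_base_pos hk ht hw).ne')).congr_deriv ?_
  field_simp

theorem hasSecondDerivAt_powerFlow (hk : 0 < k) (ht : 0 ≤ t) (hw : 0 < w) :
    HasSecondDerivAt (powerFlow k t)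
      (-((k + 1) * (k * t) * (w ^ (-k) + k * t) ^ (-1 / k - 2) * w ^ (-k - 2))) w := by
  refine .of_hasDerivAt ((lt_mem_nhds hw).mono fun y hy => hasDerivAt_powerFlow hk ht hy) ?_
  have hp := powerFlow_base_pos hk ht hw
  refine ((((hasDerivAt_rpow_const (p := -k) (Or.inl hw.ne')).add_const (k * t)).rpow_const
    (p := -1 / k - 1) (Or.inl hp.ne')).mul
    (hasDerivAt_rpow_const (p := -k - 1) (Or.inl hw.ne'))).congr_deriv ?_
  have hpow : w ^ (-k - 1) * w ^ (-k - 1) = w ^ (-k) * w ^ (-k - 2) := by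
    rw [← rpow_add hw, ← rpow_add hw]
    ring_nf
  have hpow' : (w ^ (-k) + k * t) ^ (-1 / k - 1) =
      (w ^ (-k) + k * t) ^ (-1 / k - 2) * (w ^ (-k) + k * t) := by
    rw [← rpow_add_one hp.ne']
    ring_nf
  simp only [sub_sub, one_add_one_eq_two]
  rw [hpow']
  field_simp
  linear_combination (1 + k) * hpow

end PowerFlow

namespace IsSupersolution

variable {n : ℕ} {k : ℝ} {f u : ℝ → Xn n → ℝ}

theorem comp_add_const (hu : IsSupersolution f u) {s : ℝ} (hs : 0 ≤ s) :
    IsSupersolution (fun t => f (t + s)) (fun t => u (t + s)) where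
  nonneg t ht := hu.nonneg (t + s) (by linarith)
  differentiableAt t ht x :=
    ((hu.differentiableAt (t + s) (by linarith) x).hasDerivAt.comp_add_const t s).differentiableAt
  contDiff t ht := hu.contDiff (t + s) (by linarith)
  exists_laplacian t ht x := by
    simpa only [deriv_comp_add_const (fun t => u t x)] using
      hu.exists_laplacian (t + s) (by linarith) x

theorem powerFlow_comp (hu : IsSupersolution (fun t x => u t x ^ (k + 1)) u) (hk : 0 < k)
    (hpos : ∀ t, 0 < t → ∀ x, 0 < u t x) :
    IsSupersolution 0 (fun t x => powerFlow k t (u t x)) where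
  nonneg t ht x := powerFlow_nonneg hk ht.le (hpos t ht x)
  differentiableAt t ht x := (hasDerivAt_powerFlow_comp hk ht.le
    (hu.differentiableAt t ht x).hasDerivAt (hpos t ht x)).differentiableAt
  contDiff t ht := by
    refine (((hu.contDiff t ht).rpow_const_of_ne fun x => (hpos t ht x).ne').add
      contDiff_const).rpow_const_of_ne fun x => (powerFlow_base_pos hk ht.le (hpos t ht x)).ne'
  exists_laplacian t ht x := by
    have hux := hpos t ht x
    have := powerFlow_base_pos hk ht.le hux
    obtain ⟨L, hL, hle⟩ := hu.exists_laplacian t ht x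
    obtain ⟨L', hL', hle'⟩ := hL.exists_comp_le (hasSecondDerivAt_powerFlow hk ht.le hux)
      (neg_nonpos.2 (by positivity))
    refine ⟨L', hL', ?_⟩
    rw [(hasDerivAt_powerFlow hk ht.le hux).deriv, mul_assoc] at hle'
    rw [(hasDerivAt_powerFlow_comp hk ht.le (hu.differentiableAt t ht x).hasDerivAt hux).deriv]
    have hcancel : u t x ^ (-k - 1) * u t x ^ (k + 1) = 1 := by
      rw [← rpow_add hux]
      simp
    calc L' + 0 ≤ (u t x ^ (-k) + k * t) ^ (-1 / k - 1) * (u t x ^ (-k - 1) * L) := by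
          rwa [add_zero]
      _ = (u t x ^ (-k) + k * t) ^ (-1 / k - 1) *
            (u t x ^ (-k - 1) * (L + u t x ^ (k + 1)) - 1) := by rw [mul_add, hcancel]; ring
      _ ≤ _ := by gcongr

theorem mul_heatKernel_le_powerFlow (hu : IsSupersolution (fun t x => u t x ^ (k + 1)) u)
    (hk : 0 < k) {c a T : ℝ} (hc : 0 < c) (ha : 0 < a) (hT : 0 < T)
    (hle : ∀ t, 0 < t → ∀ x, c * heatKernel (t + a) x ≤ u t x) (x : Xn n) :
    c * heatKernel (T + a) x ≤ powerFlow k T (u T x) := by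
  have hpos : ∀ t, 0 < t → ∀ x : Xn n, 0 < c * heatKernel (t + a) x := fun t ht x =>
    mul_pos hc (heatKernel_pos (by linarith) x)
  have hz := hu.powerFlow_comp hk fun t ht x => (hpos t ht x).trans_le (hle t ht x)
  set M := c * heatKernel a (0 : Xn n)
  have hM : 0 < M := mul_pos hc (heatKernel_pos ha 0)
  have hstart : ∀ ε > 0, ∀ x : Xn n,
      (1 + k * ε * M ^ k) ^ (-1 / k) * c * heatKernel (ε + a) x ≤ powerFlow k ε (u ε x) := by
    intro ε hε x
    have hxM : c * heatKernel (ε + a) x ≤ M := mul_le_mul_of_nonneg_left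
      ((heatKernel_le_zero_right (by linarith) x).trans
        (heatKernel_zero_right_anti ha (by linarith))) hc.le
    rw [mul_assoc]
    exact (mul_le_powerFlow hk hε.le (hpos ε hε x) hxM).trans
      (powerFlow_mono hk hε.le (hpos ε hε x) (hle ε hε x))
  have hlim : Tendsto (fun ε : ℝ => (1 + k * ε * M ^ k) ^ (-1 / k) * c * heatKernel (T + a) x)
      (𝓝[>] 0) (𝓝 (c * heatKernel (T + a) x)) := by
    have hcont : ContinuousAt (fun ε : ℝ => (1 + k * ε * M ^ k) ^ (-1 / k) * c *
        heatKernel (T + a) x) 0 :=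
      ((ContinuousAt.rpow_const (by fun_prop) (by simp)).mul_const c).mul_const _
    simpa using hcont.tendsto.mono_left nhdsWithin_le_nhds
  refine le_of_tendsto hlim (mem_of_superset (Ioo_mem_nhdsGT hT) fun ε ⟨hε, hεT⟩ => ?_)
  simpa using hz.heatKernel_add_le (fun _ _ _ => le_rfl) hε (add_pos hε ha) (add_pos hε ha)
    (by positivity) le_rfl le_rfl (by simpa using hstart ε hε) (by simp) hεT.le x

theorem mul_mul_heatKernel_rpow_le_one (hu : IsSupersolution (fun t x => u t x ^ (k + 1)) u)
    (hk : 0 < k) {c a T : ℝ} (hc : 0 < c) (ha : 0 < a) (hT : 0 < T)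
    (hle : ∀ t, 0 < t → ∀ x, c * heatKernel (t + a) x ≤ u t x) (x : Xn n) :
    k * T * (c * heatKernel (T + a) x) ^ k ≤ 1 := by
  have hpos : 0 < c * heatKernel (T + a) x := mul_pos hc (heatKernel_pos (by linarith) x)
  calc k * T * (c * heatKernel (T + a) x) ^ k ≤ k * T * powerFlow k T (u T x) ^ k := by
        gcongr
        exact hu.mul_heatKernel_le_powerFlow hk hc ha hT hle x
    _ ≤ 1 := mul_powerFlow_rpow_le_one hk hT.le (hpos.trans_le (hle T hT x))

end IsSupersolution

/-! ### Bounds on the mass -/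

section LargeTime

variable {n : ℕ}

theorem mul_heatKernel_zero_right_rpow {c k t : ℝ} (hc : 0 ≤ c) (ht : 0 < t) :
    t * (c * heatKernel t (0 : Xn n)) ^ k =
      c ^ k * (4 * π) ^ (-(n : ℝ) / 2 * k) * t ^ (1 - n * k / 2) := by
  rw [heatKernel_zero_right, mul_rpow hc (by positivity), ← rpow_mul (by positivity),
    mul_rpow (by positivity) ht.le, sub_eq_add_neg, rpow_add ht, rpow_one]
  ring_nf

theorem heatKernel_mul_zero_right {r t : ℝ} (hr : 0 ≤ r) (ht : 0 ≤ t) :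
    heatKernel (r * t) (0 : Xn n) = r ^ (-(n : ℝ) / 2) * heatKernel t (0 : Xn n) := by
  rw [heatKernel_zero_right, heatKernel_zero_right, mul_left_comm,
    mul_rpow hr (by positivity)]

theorem heatKernel_rpow_div_mul {k r β θ A : ℝ} (hnk : n * k = 2) (hr : 0 ≤ r) (hβ : 0 ≤ β)
    (hA : 0 < A) :
    heatKernel (r * A) (0 : Xn n) ^ (k + 1) / heatKernel (β * A) (0 : Xn n) * (θ * A) =
      (r ^ (-(n : ℝ) / 2)) ^ (k + 1) / β ^ (-(n : ℝ) / 2) * θ * (4 * π) ^ (-(n : ℝ) / 2 * k) := by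
  have hK := heatKernel_pos (n := n) hA 0
  have hmass : A * heatKernel A (0 : Xn n) ^ k = (4 * π) ^ (-(n : ℝ) / 2 * k) := by
    simpa [hnk] using mul_heatKernel_zero_right_rpow (n := n) (k := k) zero_le_one hA
  rw [heatKernel_mul_zero_right hr hA.le, heatKernel_mul_zero_right hβ hA.le,
    mul_rpow (by positivity) hK.le, rpow_add_one hK.ne', ← hmass]
  field_simp

theorem heatKernel_rpow_mul_le {q s₀ s t T : ℝ} (hq : 0 ≤ q) (hs₀ : 0 < s₀) (hs : s₀ ≤ s)
    (ht : 0 < t) (htT : t ≤ T) (hqst : q * s ≤ t) (x : Xn n) :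
    heatKernel T (0 : Xn n) ^ q * heatKernel s x ≤
      heatKernel s₀ (0 : Xn n) * heatKernel t x ^ q := by
  have hT0 := heatKernel_pos (n := n) (ht.trans_le htT) 0
  have hs0 := heatKernel_pos (hs₀.trans_le hs) x
  have ht0 := heatKernel_pos ht x
  calc heatKernel T (0 : Xn n) ^ q * heatKernel s x
      ≤ heatKernel t (0 : Xn n) ^ q * heatKernel s x := by
        gcongr
        exact heatKernel_zero_right_anti ht htT
    _ ≤ heatKernel s (0 : Xn n) * heatKernel t x ^ q :=
        heatKernel_mul_rpow_le (hs₀.trans_le hs) ht hqst x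
    _ ≤ heatKernel s₀ (0 : Xn n) * heatKernel t x ^ q := by
        gcongr
        exact heatKernel_zero_right_anti hs₀ hs

theorem tendsto_heatKernel_zero_right_div (a b : ℝ) :
    Tendsto (fun t => heatKernel (t + a) (0 : Xn n) / heatKernel (t + b) (0 : Xn n)) atTop
      (𝓝 1) := by
  have hquot : Tendsto (fun t : ℝ => 1 + (a - b) / (t + b)) atTop (𝓝 1) := by
    simpa using tendsto_const_nhds.add
      (tendsto_const_nhds.div_atTop (tendsto_atTop_add_const_right _ b tendsto_id))
  refine ((one_rpow (-(n : ℝ) / 2)) ▸ hquot.rpow_const (Or.inl one_ne_zero)).congr' ?_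
  filter_upwards [eventually_gt_atTop (-a), eventually_gt_atTop (-b)] with t hta htb
  have hta : 0 < t + a := by linarith
  have htb : 0 < t + b := by linarith
  rw [heatKernel_zero_right, heatKernel_zero_right, ← div_rpow (by positivity) (by positivity),
    mul_div_mul_left _ _ (by positivity)]
  congr 1
  field_simp
  ring

theorem exists_heatKernel_le_of_mem_heatMasses {u : ℝ → Xn n → ℝ} {c : ℝ}
    (hc : c ∈ heatMasses u) :
    ∃ a s, 0 < s ∧ 0 < s + a ∧ ∀ t ≥ s, ∀ x, c * heatKernel (t + a) x ≤ u t x := by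
  obtain ⟨-, a, ha⟩ := hc
  obtain ⟨s, hs⟩ := eventually_atTop.1
    (ha.and ((eventually_gt_atTop 0).and (eventually_gt_atTop (-a))))
  exact ⟨a, s, (hs s le_rfl).2.1, by linarith [(hs s le_rfl).2.2], fun t ht => (hs t ht).1⟩

end LargeTime

namespace IsSupersolution

variable {n : ℕ} {k : ℝ} {u : ℝ → Xn n → ℝ}

theorem eventually_mul_heatKernel_rpow_le (hu : IsSupersolution (fun t x => u t x ^ (k + 1)) u)
    (hk : 0 < k) {c : ℝ} (hc : c ∈ heatMasses u) :
    ∀ᶠ t in atTop, t * (c * heatKernel t (0 : Xn n)) ^ k ≤ 2 / k := by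
  obtain ⟨a, s, hs, hsa, hle⟩ := exists_heatKernel_le_of_mem_heatMasses hc
  filter_upwards [eventually_gt_atTop (2 * (s + a))] with t ht
  have hbound := (hu.comp_add_const hs.le).mul_mul_heatKernel_rpow_le_one hk hc.1 hsa
    (T := t - (s + a)) (by linarith)
    (fun r hr x => add_assoc r s a ▸ hle (r + s) (by linarith) x) 0
  rw [sub_add_cancel] at hbound
  have hpow : 0 ≤ (c * heatKernel t (0 : Xn n)) ^ k :=
    rpow_nonneg (mul_nonneg hc.1.le (heatKernel_pos (by linarith) _).le) _
  rw [le_div_iff₀ hk]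
  nlinarith [mul_nonneg hk.le hpow]

theorem heatMasses_eq_empty_of_lt (hu : IsSupersolution (fun t x => u t x ^ (k + 1)) u)
    (hk : 0 < k) (hnk : n * k < 2) : heatMasses u = ∅ := by
  refine eq_empty_of_forall_notMem fun c hc => ?_
  have hcoef : 0 < c ^ k * (4 * π) ^ (-(n : ℝ) / 2 * k) :=
    mul_pos (rpow_pos_of_pos hc.1 k) (by positivity)
  have hlim := (tendsto_rpow_atTop (y := 1 - n * k / 2) (by linarith)).const_mul_atTop hcoef
  obtain ⟨t, ⟨hle, hgt⟩, ht⟩ := (((hu.eventually_mul_heatKernel_rpow_le hk hc).and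
    (hlim.eventually_gt_atTop (2 / k))).and (eventually_gt_atTop 0)).exists
  rw [mul_heatKernel_zero_right_rpow hc.1.le ht] at hle
  exact hle.not_gt hgt

theorem bddAbove_heatMasses (hu : IsSupersolution (fun t x => u t x ^ (k + 1)) u)
    (hk : 0 < k) (hnk : n * k = 2) : BddAbove (heatMasses u) := by
  refine ⟨(2 / k / (4 * π) ^ (-(n : ℝ) / 2 * k)) ^ k⁻¹, fun c hc => ?_⟩
  obtain ⟨t, hle, ht⟩ := ((hu.eventually_mul_heatKernel_rpow_le hk hc).and
    (eventually_gt_atTop 0)).exists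
  rw [mul_heatKernel_zero_right_rpow hc.1.le ht, hnk, div_self two_ne_zero, sub_self, rpow_zero,
    mul_one] at hle
  rwa [le_rpow_inv_iff_of_pos hc.1.le (by positivity) hk, le_div_iff₀ (by positivity)]

/-! ### Growth of the mass at the critical exponent -/

theorem mem_heatMasses_of_lt_add (hu : IsSupersolution 0 u) {a b c c' d s : ℝ} (hs : 0 < s)
    (hsb : 0 < s + b) (hba : b ≤ a) (hc : 0 ≤ c) (hd : 0 ≤ d) (hc' : 0 < c') (hlt : c' < c + d)
    (hus : ∀ x, c * heatKernel (s + a) x + d * heatKernel (s + b) x ≤ u s x) :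
    c' ∈ heatMasses u := by
  refine ⟨hc', b, ?_⟩
  have hlim : Tendsto (fun t => c * (heatKernel (t + a) (0 : Xn n) / heatKernel (t + b) (0 : Xn n))
      + d) atTop (𝓝 (c + d)) := by
    simpa using ((tendsto_heatKernel_zero_right_div a b).const_mul c).add_const d
  filter_upwards [hlim.eventually_const_lt hlt, eventually_ge_atTop s] with t ht hst x
  have htb : 0 < t + b := by linarith
  have hK := heatKernel_pos htb (0 : Xn n)
  have hKx := heatKernel_pos htb x
  have hratio : heatKernel (t + a) (0 : Xn n) / heatKernel (t + b) (0 : Xn n) *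
      heatKernel (t + b) x ≤ heatKernel (t + a) x := by
    rw [div_mul_eq_mul_div, div_le_iff₀ hK, mul_comm (heatKernel (t + a) x)]
    exact heatKernel_mul_le htb (by linarith) x
  calc c' * heatKernel (t + b) x
      ≤ (c * (heatKernel (t + a) (0 : Xn n) / heatKernel (t + b) (0 : Xn n)) + d) *
          heatKernel (t + b) x := by gcongr
    _ = c * (heatKernel (t + a) (0 : Xn n) / heatKernel (t + b) (0 : Xn n) *
          heatKernel (t + b) x) + d * heatKernel (t + b) x := by ring
    _ ≤ c * heatKernel (t + a) x + d * heatKernel (t + b) x := by gcongr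
    _ ≤ u t x := by
      simpa using hu.heatKernel_add_le (fun _ _ _ => le_rfl) hs (by linarith) hsb hc hd le_rfl
        hus (by simp) hst x

theorem heatKernel_add_rpow_le {q : ℝ} (hu : IsSupersolution (fun t x => u t x ^ q) u)
    (hq : 0 ≤ q) {a b c s T : ℝ} (hs : 0 < s) (hsT : s ≤ T) (hsa : 0 < s + a) (hsb : 0 < s + b)
    (hc : 0 < c) (hqab : ∀ t ∈ Ioc s T, q * (t + b) ≤ t + a)
    (hle : ∀ t ≥ s, ∀ x, c * heatKernel (t + a) x ≤ u t x) (x : Xn n) :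
    c * heatKernel (T + a) x + c ^ q * (heatKernel (T + a) (0 : Xn n) ^ q /
      heatKernel (s + b) (0 : Xn n)) * (T - s) * heatKernel (T + b) x ≤ u T x := by
  have hKs := heatKernel_pos hsb (0 : Xn n)
  have hKT := heatKernel_pos (by linarith : 0 < T + a) (0 : Xn n)
  have hsource : ∀ t ∈ Ioc s T, ∀ x, c ^ q * (heatKernel (T + a) (0 : Xn n) ^ q /
      heatKernel (s + b) (0 : Xn n)) * heatKernel (t + b) x ≤ u t x ^ q := fun t ht x => by
    have hta : 0 < t + a := by linarith [ht.1]
    have hK := heatKernel_pos hta x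
    have hkernel := heatKernel_rpow_mul_le hq hsb (s := t + b) (by linarith [ht.1]) hta
      (T := T + a) (by linarith [ht.2]) (hqab t ht) x
    calc _ = c ^ q * (heatKernel (T + a) (0 : Xn n) ^ q * heatKernel (t + b) x /
          heatKernel (s + b) (0 : Xn n)) := by ring
      _ ≤ c ^ q * heatKernel (t + a) x ^ q := by
        gcongr
        rwa [div_le_iff₀' hKs]
      _ = (c * heatKernel (t + a) x) ^ q := (mul_rpow hc.le hK.le).symm
      _ ≤ u t x ^ q := by
        gcongr
        exact hle t ht.1.le x
  simpa using hu.heatKernel_add_le (fun t ht x => rpow_nonneg (hu.nonneg t ht x) q) hs hsa hsb hc.le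
    le_rfl (by positivity) (by simpa using hle s le_rfl) hsource hsT x

theorem exists_add_mul_rpow_mem_heatMasses
    (hu : IsSupersolution (fun t x => u t x ^ (k + 1)) u) (hk : 0 < k) (hnk : n * k = 2) :
    ∃ κ > 0, ∀ c ∈ heatMasses u, c + κ * c ^ (k + 1) ∈ heatMasses u := by
  -- The added kernel has time `β * A` when it starts, at `s`. With this `β` and `θ`, its time stays
  -- below `(t + a) / (k + 1)` until `s + θ * A`, so `(c * K_{t + a}) ^ (k + 1)` can feed it.
  obtain ⟨β, hβ, hkβ⟩ : ∃ β > 0, (k + 1) * β = 1 / 2 :=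
    ⟨1 / (2 * (k + 1)), by positivity, by field_simp⟩
  obtain ⟨θ, hθ, hkθ⟩ : ∃ θ > 0, k * θ = 1 / 2 := ⟨1 / (2 * k), by positivity, by field_simp⟩
  set κ : ℝ := ((1 + θ) ^ (-(n : ℝ) / 2)) ^ (k + 1) / β ^ (-(n : ℝ) / 2) * θ *
    (4 * π) ^ (-(n : ℝ) / 2 * k) with hκ
  have hκ0 : 0 < κ := by positivity
  refine ⟨κ / 2, half_pos hκ0, fun c hc => ?_⟩
  obtain ⟨a, s, hs, hsa, hle⟩ := exists_heatKernel_le_of_mem_heatMasses hc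
  set A := s + a with hA
  have hβA : β * A < A := by nlinarith [mul_pos hβ hsa, mul_pos hk (mul_pos hβ hsa)]
  have hβA0 : 0 < β * A := mul_pos hβ hsa
  have hθA : 0 < θ * A := mul_pos hθ hsa
  have hqab : ∀ t ∈ Ioc s (s + θ * A), (k + 1) * (t + (β * A - s)) ≤ t + a := fun t ht => by
    have hkt : k * (t - s) ≤ A / 2 := by nlinarith [mul_le_mul_of_nonneg_left ht.2 hk.le]
    nlinarith
  have hcκ : 0 < κ * c ^ (k + 1) := mul_pos hκ0 (rpow_pos_of_pos hc.1 _)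
  have hadd := hu.heatKernel_add_rpow_le (by linarith) hs (by linarith) hsa
    (by simpa using hβA0) hc.1 hqab hle
  have hTa : s + θ * A + a = (1 + θ) * A := by rw [hA]; ring
  rw [add_sub_cancel, add_sub_cancel_left, mul_assoc (c ^ (k + 1)), hTa,
    heatKernel_rpow_div_mul hnk (by positivity) hβ.le hsa, ← hκ, ← hTa] at hadd
  refine (hu.mono fun t ht x => rpow_nonneg (hu.nonneg t ht x) _).mem_heatMasses_of_lt_add
    (s := s + θ * A) (a := a) (b := β * A - s) (by linarith) (by linarith) (by linarith) hc.1.le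
    (mul_comm κ _ ▸ hcκ.le) (by linarith [hc.1]) (by linarith) hadd

end IsSupersolution

theorem fujita_theorem_general {n : ℕ} {q : ℝ} {u : ℝ → Xn n → ℝ}
    (hu : IsSupersolution (fun t x => u t x ^ q) u) (hq : 1 < q) (hnq : n * (q - 1) ≤ 2) {t : ℝ}
    (ht : 0 < t) (x : Xn n) : u t x = 0 := by
  obtain ⟨k, rfl⟩ : ∃ k, q = k + 1 := ⟨q - 1, by ring⟩
  have hnk : n * k ≤ 2 := by simpa using hnq
  have hk : 0 < k := by linarith
  by_contra hx
  obtain ⟨c, hc⟩ := (hu.mono fun t ht x => rpow_nonneg (hu.nonneg t ht x) _).heatMasses_nonempty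
    ht ((hu.nonneg t ht x).lt_of_ne' hx)
  rcases hnk.lt_or_eq with hnk | hnk
  · exact (hu.heatMasses_eq_empty_of_lt hk hnk).le hc
  have hbdd := hu.bddAbove_heatMasses hk hnk
  obtain ⟨κ, hκ, hgrow⟩ := hu.exists_add_mul_rpow_mem_heatMasses hk hnk
  have hclosed : IsClosed {c : ℝ | c + κ * c ^ (k + 1) ≤ sSup (heatMasses u)} :=
    isClosed_le (continuous_id.add (continuous_const.mul
      (continuous_id.rpow_const fun _ => Or.inr (by linarith)))) continuous_const
  have hsup : sSup (heatMasses u) + κ * sSup (heatMasses u) ^ (k + 1) ≤ sSup (heatMasses u) :=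
    closure_minimal (fun c hc => le_csSup hbdd (hgrow c hc)) hclosed
      (csSup_mem_closure ⟨c, hc⟩ hbdd)
  have hpos : 0 < sSup (heatMasses u) := hc.1.trans_le (le_csSup hbdd hc)
  linarith [mul_pos hκ (rpow_pos_of_pos hpos (k + 1))]

/-- Fujita's theorem.  For `1 < q ≤ 1 + 2/n` there is no
non-trivial non-negative entire classical solution of `u_t ≥ Δu + u^q`
on `(0,∞) × ℝⁿ`. -/
theorem fujita_theorem
    (n : ℕ) (hn : 1 ≤ n) (q : ℝ) (hq1 : 1 < q) (hq2 : q ≤ 1 + 2 / n)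
    (u : ℝ → Xn n → ℝ)
    (hu_nonneg : ∀ t, 0 < t → ∀ x, 0 ≤ u t x)
    -- `u` is C¹ in `t`
    (hu_t : ∀ x, ContDiffOn ℝ 1 (fun t => u t x) (Set.Ioi (0 : ℝ)))
    -- `u` is C² in `x`
    (hu_x : ∀ t, 0 < t → ContDiff ℝ 2 (fun x => u t x))
    -- the pointwise differential inequality `∂u/∂t ≥ Δu + u^q`
    (hineq : ∀ t, 0 < t → ∀ x : Xn n,
      deriv (fun s => u s x) t ≥ laplacian (u t) x + u t x ^ q) :
    ∀ t, 0 < t → ∀ x, u t x = 0 := by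
  have hnq : n * (q - 1) ≤ 2 := by
    rw [mul_comm, ← le_div_iff₀ (by positivity)]
    linarith
  exact fun t ht x => fujita_theorem_general
    (.of_contDiff hu_nonneg hu_t hu_x hineq) hq1 hnq ht x
end
end
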